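/- Let X be a simply connected, locally simply connected metric space, D a countable dense subset of X, and x ∈ X. Then the homomorphism σ_* : π₁(E(X,D), x) → π₁(H, *) induced by the metric quotient map σ : E(X,D) → H collapsing X to a point is injective. Consequently π₁(E(X,D), x) is isomorphic to a subgroup of the Hawaiian earring group. -/

import Mathlib

open Classical

noncomputable section

namespace EarringPaper

variable {X : Type*} [MetricSpace X]

/-- The earring space `E(X,D)`: the base copy `X × {o}` together with a copy of the
circle attached at each point `d n` of the countable set `D = range d`. -/
structure ESp (X : Type*) [MetricSpace X] (d : ℕ+ → X) where
  pt : X × Circle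
  mem : pt.2 = 1 ∨ ∃ n : ℕ+, pt.1 = d n

/-- The scaling weight `1/n` at `x = d n` (and `0` off `D`). -/
def wt (d : ℕ+ → X) (x : X) : ℝ :=
  if h : ∃ n : ℕ+, x = d n then 1 / (h.choose : ℝ) else 0

/-- The earring metric `ρ` on `E(X,D)`. -/
def rho (d : ℕ+ → X) (p q : X × Circle) : ℝ :=
  if p.1 = q.1 ∧ ∃ n : ℕ+, p.1 = d n then wt d p.1 * dist p.2 q.2
  else dist p.1 q.1 + wt d p.1 * dist p.2 1 + wt d q.1 * dist q.2 1

/-- `E(X,D)` carries the topology of the metric `ρ` (generated by the `ρ`-balls). -/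
instance (d : ℕ+ → X) : TopologicalSpace (ESp X d) :=
  TopologicalSpace.generateFrom
    {s | ∃ (p : ESp X d) (r : ℝ), s = {q : ESp X d | rho d p.pt q.pt < r}}

/-- The points of the base copy `X × {o}` of `X` inside `E(X,D)`. -/
def InX {d : ℕ+ → X} (p : ESp X d) : Prop := p.pt.2 = 1

/-- The inclusion `X → E(X,D)`, `x ↦ (x,o)`. -/
def emb (d : ℕ+ → X) (x : X) : ESp X d := ⟨(x, 1), Or.inl rfl⟩

/-- `f` traverses, on `[u,v]`, the fixed winding of the circle attached at `d n`. -/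
def IsWinding (d : ℕ+ → X) (f : ℝ → ESp X d) (u v : ℝ) (n : ℕ+) : Prop :=
  ∃ φ : ℝ → ℝ, ContinuousOn φ (Set.Icc u v) ∧ MonotoneOn φ (Set.Icc u v) ∧
    φ u = 0 ∧ φ v = 1 ∧
    ∀ t ∈ Set.Icc u v, (f t).pt = (d n, Circle.exp (2 * Real.pi * φ t))

/-- `f` traverses, on `[u,v]`, the reverse of the fixed winding of the circle at `d n`. -/
def IsRevWinding (d : ℕ+ → X) (f : ℝ → ESp X d) (u v : ℝ) (n : ℕ+) : Prop :=
  ∃ φ : ℝ → ℝ, ContinuousOn φ (Set.Icc u v) ∧ MonotoneOn φ (Set.Icc u v) ∧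
    φ u = 0 ∧ φ v = 1 ∧
    ∀ t ∈ Set.Icc u v, (f t).pt = (d n, Circle.exp (-(2 * Real.pi) * φ t))

/-- A proper path in `E(X,D)` (with domain `[a,b]`): its endpoints lie in `X`, and each
maximal excursion out of `X` returning to the same point is a single winding or reverse
winding of one of the attached circles. -/
def IsProper (d : ℕ+ → X) (f : ℝ → ESp X d) (a b : ℝ) : Prop :=
  ContinuousOn f (Set.Icc a b) ∧ InX (f a) ∧ InX (f b) ∧
  ∀ u v, a ≤ u → u < v → v ≤ b → InX (f u) → InX (f v) →
    (∀ t ∈ Set.Ioo u v, ¬InX (f t)) → f u = f v →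
    ∃ n : ℕ+, IsWinding d f u v n ∨ IsRevWinding d f u v n

/-- Homotopy of paths `[a,b] → E(X,D)` relative to the endpoints. -/
def HtpyRel (d : ℕ+ → X) (f g : ℝ → ESp X d) (a b : ℝ) : Prop :=
  ∃ H : ℝ × ℝ → ESp X d,
    ContinuousOn H (Set.Icc a b ×ˢ Set.Icc (0 : ℝ) 1) ∧
    (∀ s ∈ Set.Icc a b, H (s, 0) = f s ∧ H (s, 1) = g s) ∧
    (∀ t ∈ Set.Icc (0 : ℝ) 1, H (a, t) = f a ∧ H (b, t) = f b)

/-- `Y` is locally simply connected: every point has a neighborhood basis of simply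
connected neighborhoods. -/
def LocSimplyConnected (Y : Type*) [TopologicalSpace Y] : Prop :=
  ∀ y : Y, ∀ U ∈ nhds y, ∃ V ∈ nhds y, V ⊆ U ∧ SimplyConnectedSpace V

end EarringPaper

noncomputable section

namespace EarringPaper

open Classical

variable {X : Type*} [MetricSpace X]

/-- The Hawaiian earring `H = ⋃_{n ≥ 1} C_n ⊆ ℝ²`, `C_n` the circle of radius `1/n`
centered at `(-1/n, 0)`. -/
def HEset : Set (ℝ × ℝ) :=
  {p | ∃ n : ℕ+, (p.1 + 1 / (n : ℝ)) ^ 2 + p.2 ^ 2 = (1 / (n : ℝ)) ^ 2}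

/-- The wild point (origin) of the Hawaiian earring. -/
def h0 : HEset := ⟨(0, 0), 1, by norm_num⟩

/-- The metric quotient map `σ : E(X,D) → H` collapsing the base copy of `X` to the wild
point: the circle attached at `d n` is carried onto the `n`-th circle `C_n` of `H`. -/
def sigmaMap (d : ℕ+ → X) (hd : Function.Injective d) (p : ESp X d) : HEset :=
  if h : ∃ n : ℕ+, p.pt.1 = d n then
    ⟨((((p.pt.2 : ℂ).re - 1)) / (h.choose : ℝ), (p.pt.2 : ℂ).im / (h.choose : ℝ)),
      h.choose, by
        have hpos : (0 : ℝ) < ((h.choose : ℕ+) : ℝ) := by exact_mod_cast h.choose.2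
        have hnorm : ((p.pt.2 : ℂ).re) ^ 2 + ((p.pt.2 : ℂ).im) ^ 2 = 1 := by
          have := Circle.normSq_coe p.pt.2
          rw [Complex.normSq_apply] at this
          nlinarith [this]
        field_simp
        nlinarith [hnorm]⟩
  else h0

/-! ### The topology of the earring space -/

theorem wt_nonneg (d : ℕ+ → X) (y : X) : 0 ≤ wt d y := by
  unfold wt
  split_ifs <;> positivity

theorem wt_of_notMem {d : ℕ+ → X} {y : X} (h : ¬∃ n, y = d n) : wt d y = 0 := dif_neg h

theorem choose_index {d : ℕ+ → X} (hd : Function.Injective d) {n : ℕ+}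
    (h : ∃ m : ℕ+, d n = d m) : h.choose = n :=
  (hd h.choose_spec).symm

theorem wt_apply {d : ℕ+ → X} (hd : Function.Injective d) (n : ℕ+) : wt d (d n) = 1 / (n : ℝ) := by
  have h : ∃ m : ℕ+, d n = d m := ⟨n, rfl⟩
  rw [wt, dif_pos h, choose_index hd h]

theorem ESp.snd_eq_one {d : ℕ+ → X} (p : ESp X d) (h : ¬∃ n, p.pt.1 = d n) : p.pt.2 = 1 :=
  p.mem.resolve_right h

theorem ESp.ext_pt {d : ℕ+ → X} {p q : ESp X d} (h : p.pt = q.pt) : p = q := by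
  cases p; cases q; simp_all

theorem rho_of_fst_eq {d : ℕ+ → X} (p q : ESp X d) (h : p.pt.1 = q.pt.1) :
    rho d p.pt q.pt = wt d p.pt.1 * dist p.pt.2 q.pt.2 := by
  by_cases hD : ∃ n, p.pt.1 = d n
  · rw [rho, if_pos ⟨h, hD⟩]
  · rw [rho, if_neg (fun H => hD H.2), h, wt_of_notMem (h ▸ hD)]
    simp

theorem rho_of_fst_ne {d : ℕ+ → X} (p q : ESp X d) (h : p.pt.1 ≠ q.pt.1) :
    rho d p.pt q.pt = dist p.pt.1 q.pt.1 + wt d p.pt.1 * dist p.pt.2 1 +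
      wt d q.pt.1 * dist q.pt.2 1 :=
  if_neg fun H => h H.1

theorem rho_self {d : ℕ+ → X} (p : ESp X d) : rho d p.pt p.pt = 0 := by
  rw [rho_of_fst_eq p p rfl, dist_self, mul_zero]

theorem rho_triangle {d : ℕ+ → X} (p q r : ESp X d) :
    rho d p.pt r.pt ≤ rho d p.pt q.pt + rho d q.pt r.pt := by
  have t1 := dist_triangle p.pt.1 q.pt.1 r.pt.1
  have t2 := mul_le_mul_of_nonneg_left (dist_triangle p.pt.2 q.pt.2 r.pt.2) (wt_nonneg d p.pt.1)
  have t3 := mul_le_mul_of_nonneg_left (dist_triangle p.pt.2 q.pt.2 1) (wt_nonneg d p.pt.1)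
  have t4 := mul_le_mul_of_nonneg_left (dist_triangle_left r.pt.2 1 q.pt.2) (wt_nonneg d r.pt.1)
  have t5 := mul_le_mul_of_nonneg_left (dist_triangle_right p.pt.2 r.pt.2 1)
    (wt_nonneg d p.pt.1)
  have n1 := mul_nonneg (wt_nonneg d q.pt.1) (dist_nonneg (x := q.pt.2) (y := 1))
  have n2 := dist_nonneg (x := p.pt.1) (y := q.pt.1)
  have n3 := dist_nonneg (x := q.pt.1) (y := r.pt.1)
  by_cases h1 : p.pt.1 = q.pt.1 <;> by_cases h2 : q.pt.1 = r.pt.1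
  · rw [rho_of_fst_eq p r (h1.trans h2), rho_of_fst_eq p q h1, rho_of_fst_eq q r h2, ← h1]
    linarith
  · rw [rho_of_fst_ne p r (h1 ▸ h2), rho_of_fst_eq p q h1, rho_of_fst_ne q r h2, ← h1]
    linarith
  · rw [rho_of_fst_ne p r (h2 ▸ h1), rho_of_fst_ne p q h1, rho_of_fst_eq q r h2, ← h2]
    rw [← h2] at t4
    linarith
  · rw [rho_of_fst_ne p q h1, rho_of_fst_ne q r h2]
    by_cases h3 : p.pt.1 = r.pt.1
    · rw [rho_of_fst_eq p r h3]
      rw [← h3] at n3 ⊢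
      linarith
    · rw [rho_of_fst_ne p r h3]
      linarith

theorem eventually_rho_lt {d : ℕ+ → X} (p : ESp X d) {r : ℝ} (hr : 0 < r) :
    ∀ᶠ q in nhds p, rho d p.pt q.pt < r := by
  have ho : IsOpen {q : ESp X d | rho d p.pt q.pt < r} :=
    TopologicalSpace.isOpen_generateFrom_of_mem ⟨p, r, rfl⟩
  exact ho.mem_nhds (by simpa [rho_self] using hr)

theorem continuous_of_dist_le_rho {d : ℕ+ → X} {Y : Type*} [PseudoMetricSpace Y] {g : ESp X d → Y}
    {C : ℝ} (hC : 0 < C) (h : ∀ p q, dist (g p) (g q) ≤ C * rho d p.pt q.pt) : Continuous g := by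
  rw [continuous_iff_continuousAt]
  intro p
  rw [ContinuousAt, Metric.tendsto_nhds]
  intro ε hε
  filter_upwards [eventually_rho_lt p (div_pos hε hC)] with q hq
  rw [dist_comm]
  calc dist (g p) (g q) ≤ C * rho d p.pt q.pt := h p q
    _ < C * (ε / C) := by gcongr
    _ = ε := by field_simp

theorem continuous_to_ESp {d : ℕ+ → X} {Z : Type*} [TopologicalSpace Z] {g : Z → ESp X d}
    (h : ∀ z, ∀ ε > 0, ∀ᶠ w in nhds z, rho d (g z).pt (g w).pt < ε) : Continuous g := by
  refine continuous_generateFrom_iff.2 ?_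
  rintro s ⟨p, r, rfl⟩
  rw [isOpen_iff_eventually]
  intro z hz
  have hz' : rho d p.pt (g z).pt < r := hz
  filter_upwards [h z (r - rho d p.pt (g z).pt) (by linarith)] with w hw
  have := rho_triangle p (g z) (g w)
  show rho d p.pt (g w).pt < r
  linarith

/-- The retraction of the earring space onto its base space. -/
def baseMap (d : ℕ+ → X) (p : ESp X d) : X := p.pt.1

theorem dist_fst_le_rho {d : ℕ+ → X} (p q : ESp X d) :
    dist p.pt.1 q.pt.1 ≤ rho d p.pt q.pt := by
  by_cases h : p.pt.1 = q.pt.1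
  · rw [rho_of_fst_eq p q h, h, dist_self]
    exact mul_nonneg (wt_nonneg _ _) dist_nonneg
  · rw [rho_of_fst_ne p q h]
    have := mul_nonneg (wt_nonneg d p.pt.1) (dist_nonneg (x := p.pt.2) (y := 1))
    have := mul_nonneg (wt_nonneg d q.pt.1) (dist_nonneg (x := q.pt.2) (y := 1))
    linarith

theorem rho_nonneg {d : ℕ+ → X} (p q : ESp X d) : 0 ≤ rho d p.pt q.pt :=
  dist_nonneg.trans (dist_fst_le_rho p q)

theorem continuous_baseMap (d : ℕ+ → X) : Continuous (baseMap d) :=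
  continuous_of_dist_le_rho one_pos fun p q => by
    rw [one_mul]
    exact dist_fst_le_rho p q

/-- The coordinate of a point of the earring space on the `n`-th circle. -/
def circleCoord (d : ℕ+ → X) (n : ℕ+) (p : ESp X d) : Circle :=
  if p.pt.1 = d n then p.pt.2 else 1

theorem continuous_circleCoord {d : ℕ+ → X} (hd : Function.Injective d) (n : ℕ+) :
    Continuous (circleCoord d n) := by
  have hn : (0 : ℝ) < n := by exact_mod_cast n.pos
  refine continuous_of_dist_le_rho hn fun p q => ?_
  unfold circleCoord
  have n0 := dist_nonneg (x := p.pt.1) (y := q.pt.1)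
  have n1 := mul_nonneg (wt_nonneg d p.pt.1) (dist_nonneg (x := p.pt.2) (y := 1))
  have n2 := mul_nonneg (wt_nonneg d q.pt.1) (dist_nonneg (x := q.pt.2) (y := 1))
  have key : ∀ t : ℝ, (n : ℝ) * (1 / (n : ℝ) * t) = t := fun t => by field_simp
  split_ifs with h1 h2 h2
  · rw [rho_of_fst_eq p q (h1.trans h2.symm), h1, wt_apply hd, key]
  · rw [rho_of_fst_ne p q (fun h => h2 (h ▸ h1)), h1, wt_apply hd]
    rw [h1] at n0
    have := mul_le_mul_of_nonneg_left (show 1 / (n : ℝ) * dist p.pt.2 1 ≤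
      dist (d n) q.pt.1 + 1 / (n : ℝ) * dist p.pt.2 1 + wt d q.pt.1 * dist q.pt.2 1 by linarith)
      hn.le
    rwa [key] at this
  · rw [rho_of_fst_ne p q (fun h => h1 (h.trans h2)), h2, wt_apply hd]
    rw [h2] at n0
    have := mul_le_mul_of_nonneg_left (show 1 / (n : ℝ) * dist q.pt.2 1 ≤
      dist p.pt.1 (d n) + wt d p.pt.1 * dist p.pt.2 1 + 1 / (n : ℝ) * dist q.pt.2 1 by linarith)
      hn.le
    rw [key] at this
    rwa [dist_comm]
  · rw [dist_self]
    exact mul_nonneg hn.le (rho_nonneg p q)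

theorem base_eq_of_circleCoord_ne_one {d : ℕ+ → X} {n : ℕ+} {p : ESp X d}
    (h : circleCoord d n p ≠ 1) : baseMap d p = d n := by
  by_contra h'
  exact h (if_neg h')

/-- The point of the earring space with given base point and circle coordinates. -/
def mkESp (d : ℕ+ → X) (y : X) (u : ℕ+ → Circle) : ESp X d :=
  ⟨(y, if h : ∃ n, y = d n then u h.choose else 1), by
    by_cases h : ∃ n, y = d n
    · exact Or.inr h
    · exact Or.inl (dif_neg h)⟩

theorem mkESp_of_eq {d : ℕ+ → X} (hd : Function.Injective d) {y : X} {n : ℕ+} (h : y = d n)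
    (u : ℕ+ → Circle) : (mkESp d y u).pt.2 = u n := by
  subst h
  have h : ∃ m, d n = d m := ⟨n, rfl⟩
  exact (dif_pos h).trans (congrArg u (choose_index hd h))

theorem mkESp_of_notMem {d : ℕ+ → X} {y : X} (h : ¬∃ n, y = d n)
    (u : ℕ+ → Circle) : (mkESp d y u).pt.2 = 1 :=
  dif_neg h

theorem circleCoord_mkESp {d : ℕ+ → X} (hd : Function.Injective d) {y : X} {u : ℕ+ → Circle}
    (h : ∀ n, u n ≠ 1 → y = d n) (n : ℕ+) : circleCoord d n (mkESp d y u) = u n := by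
  by_cases hn : y = d n
  · exact (if_pos hn).trans (mkESp_of_eq hd hn u)
  · refine (if_neg hn).trans ?_
    by_contra h'
    exact hn (h n (Ne.symm h'))

theorem mkESp_coords {d : ℕ+ → X} (hd : Function.Injective d) (p : ESp X d) :
    mkESp d (baseMap d p) (fun n => circleCoord d n p) = p := by
  apply ESp.ext_pt
  refine Prod.ext rfl ?_
  by_cases h : ∃ n, p.pt.1 = d n
  · obtain ⟨n, hn⟩ := h
    exact (mkESp_of_eq hd hn _).trans (if_pos hn)
  · exact (mkESp_of_notMem h _).trans (p.snd_eq_one h).symm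

theorem mkESp_one (d : ℕ+ → X) (y : X) : mkESp d y (fun _ => 1) = emb d y := by
  apply ESp.ext_pt
  refine Prod.ext rfl ?_
  show (if h : ∃ n, y = d n then (1 : Circle) else 1) = 1
  split_ifs <;> rfl

theorem dist_circle_le_two (u v : Circle) : dist u v ≤ 2 := by
  have h : dist (u : ℂ) (v : ℂ) ≤ ‖(u : ℂ)‖ + ‖(v : ℂ)‖ := dist_le_norm_add_norm _ _
  rw [Circle.norm_coe, Circle.norm_coe] at h
  have : dist u v = dist (u : ℂ) (v : ℂ) := rfl
  linarith

theorem continuous_mkESp {d : ℕ+ → X} (hd : Function.Injective d) {Z : Type*} [TopologicalSpace Z]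
    {F : Z → X} {u : Z → ℕ+ → Circle} (hF : Continuous F) (hu : ∀ n, Continuous fun z => u z n)
    (h : ∀ z n, u z n ≠ 1 → F z = d n) : Continuous fun z => mkESp d (F z) (u z) := by
  apply continuous_to_ESp
  intro z ε hε
  obtain ⟨N, hN⟩ := exists_nat_gt (2 / (ε / 4))
  have e1 : ∀ᶠ w in nhds z, dist (F z) (F w) < ε / 4 := by
    have := Metric.tendsto_nhds.1 (hF.continuousAt (x := z)) (ε / 4) (by positivity)
    simpa only [dist_comm] using this
  have e2 : ∀ᶠ w in nhds z, ∀ n ∈ {n : ℕ+ | (n : ℕ) ≤ N}, dist (u z n) (u w n) < ε / 4 := by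
    have hfin : {n : ℕ+ | (n : ℕ) ≤ N}.Finite :=
      Set.Finite.preimage PNat.coe_injective.injOn (Set.finite_Iic N)
    rw [Filter.eventually_all_finite hfin]
    intro n _
    have := Metric.tendsto_nhds.1 ((hu n).continuousAt (x := z)) (ε / 4) (by positivity)
    simpa only [dist_comm] using this
  filter_upwards [e1, e2] with w h1 h2
  have key : ∀ n : ℕ+, 1 / (n : ℝ) * dist (u z n) (u w n) < ε / 4 := by
    intro n
    have hn : (1 : ℝ) ≤ n := by exact_mod_cast n.pos
    by_cases hnN : (n : ℕ) ≤ N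
    · calc 1 / (n : ℝ) * dist (u z n) (u w n) ≤ 1 * dist (u z n) (u w n) := by
            gcongr
            rw [div_le_one (by linarith)]
            exact hn
        _ < ε / 4 := by simpa using h2 n hnN
    · have : (N : ℝ) < n := by exact_mod_cast (not_le.1 hnN)
      calc 1 / (n : ℝ) * dist (u z n) (u w n) ≤ 1 / (n : ℝ) * 2 := by
            gcongr
            exact dist_circle_le_two _ _
        _ < ε / 4 := by
            rw [div_lt_iff₀ (by positivity)] at hN
            rw [one_div, inv_mul_lt_iff₀ (by linarith)]
            nlinarith
  by_cases hzw : F z = F w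
  · rw [rho_of_fst_eq (mkESp d (F z) (u z)) (mkESp d (F w) (u w)) hzw]
    show wt d (F z) * _ < ε
    by_cases hD : ∃ n, F z = d n
    · obtain ⟨n, hn⟩ := hD
      rw [mkESp_of_eq hd hn, mkESp_of_eq hd (hzw ▸ hn), hn, wt_apply hd]
      linarith [key n]
    · rw [wt_of_notMem hD, zero_mul]
      exact hε
  · have hdist : ∀ n, (F z ≠ d n) ∨ (F w ≠ d n) := by
      intro n
      by_contra! H
      exact hzw (H.1.trans H.2.symm)
    have side : ∀ a b : Z, F a ≠ F b → (∀ n : ℕ+, 1 / (n : ℝ) * dist (u a n) (u b n) < ε / 4) →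
        wt d (F a) * dist (mkESp d (F a) (u a)).pt.2 1 < ε / 4 := by
      intro a b hab hk
      by_cases hD : ∃ n, F a = d n
      · obtain ⟨n, hn⟩ := hD
        have hb : u b n = 1 := by
          by_contra hb
          exact hab (hn.trans (h b n hb).symm)
        have := hk n
        rw [hb] at this
        rwa [mkESp_of_eq hd hn, hn, wt_apply hd]
      · rw [wt_of_notMem hD, zero_mul]
        positivity
    rw [rho_of_fst_ne (mkESp d (F z) (u z)) (mkESp d (F w) (u w)) hzw]
    show dist (F z) (F w) + wt d (F z) * _ + wt d (F w) * _ < ε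
    have s1 := side z w hzw key
    have s2 := side w z (Ne.symm hzw) (fun n => by rw [dist_comm]; exact key n)
    linarith

/-! ### The collapsing map and the coordinates of the Hawaiian earring -/

theorem sigmaMap_of_eq {d : ℕ+ → X} (hd : Function.Injective d) {p : ESp X d} {n : ℕ+}
    (h : p.pt.1 = d n) : (sigmaMap d hd p : ℝ × ℝ) =
      (((p.pt.2 : ℂ).re - 1) / (n : ℝ), (p.pt.2 : ℂ).im / (n : ℝ)) := by
  have hex : ∃ m, p.pt.1 = d m := ⟨n, h⟩
  have hn : hex.choose = n := (hd (h.symm.trans hex.choose_spec)).symm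
  rw [sigmaMap, dif_pos hex]
  simp only [hn]

theorem sigmaMap_of_notMem {d : ℕ+ → X} (hd : Function.Injective d) {p : ESp X d}
    (h : ¬∃ n, p.pt.1 = d n) : sigmaMap d hd p = h0 :=
  dif_neg h

theorem sigmaMap_emb {d : ℕ+ → X} (hd : Function.Injective d) (x : X) :
    sigmaMap d hd (emb d x) = h0 := by
  by_cases h : ∃ n, x = d n
  · obtain ⟨n, hn⟩ := h
    apply Subtype.ext
    rw [sigmaMap_of_eq hd (n := n) hn]
    simp [emb, h0]
  · exact sigmaMap_of_notMem hd h

theorem abs_re_sub_le_dist (u v : Circle) : |(u : ℂ).re - (v : ℂ).re| ≤ dist u v := by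
  have h : dist u v = ‖(u : ℂ) - (v : ℂ)‖ := dist_eq_norm (u : ℂ) v
  rw [h, ← Complex.sub_re]
  exact Complex.abs_re_le_norm _

theorem abs_im_sub_le_dist (u v : Circle) : |(u : ℂ).im - (v : ℂ).im| ≤ dist u v := by
  have h : dist u v = ‖(u : ℂ) - (v : ℂ)‖ := dist_eq_norm (u : ℂ) v
  rw [h, ← Complex.sub_im]
  exact Complex.abs_im_le_norm _

theorem dist_sigmaMap_h0_le {d : ℕ+ → X} (hd : Function.Injective d) (p : ESp X d) :
    dist (sigmaMap d hd p) h0 ≤ wt d p.pt.1 * dist p.pt.2 1 := by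
  by_cases h : ∃ n, p.pt.1 = d n
  · obtain ⟨n, hn⟩ := h
    have hpos : (0 : ℝ) < n := by exact_mod_cast n.pos
    have h1 := abs_re_sub_le_dist p.pt.2 1
    have h2 := abs_im_sub_le_dist p.pt.2 1
    simp only [Circle.coe_one, Complex.one_re, Complex.one_im, sub_zero] at h1 h2
    rw [hn, wt_apply hd, Subtype.dist_eq, sigmaMap_of_eq hd hn, h0, Prod.dist_eq, max_le_iff]
    simp only [Real.dist_eq, sub_zero, abs_div, abs_of_pos hpos]
    rw [one_div_mul_eq_div]
    exact ⟨by gcongr, by gcongr⟩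
  · rw [sigmaMap_of_notMem hd h, wt_of_notMem h, dist_self, zero_mul]

theorem continuous_sigmaMap {d : ℕ+ → X} (hd : Function.Injective d) :
    Continuous (sigmaMap d hd) := by
  refine continuous_of_dist_le_rho one_pos fun p q => ?_
  rw [one_mul]
  by_cases h : p.pt.1 = q.pt.1
  · rw [rho_of_fst_eq p q h]
    by_cases hD : ∃ n, p.pt.1 = d n
    · obtain ⟨n, hn⟩ := hD
      have hpos : (0 : ℝ) < n := by exact_mod_cast n.pos
      have h1 := abs_re_sub_le_dist p.pt.2 q.pt.2
      have h2 := abs_im_sub_le_dist p.pt.2 q.pt.2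
      rw [hn, wt_apply hd, Subtype.dist_eq, sigmaMap_of_eq hd hn, sigmaMap_of_eq hd (h ▸ hn),
        Prod.dist_eq, max_le_iff, one_div_mul_eq_div]
      simp only [Real.dist_eq, ← sub_div, abs_div, abs_of_pos hpos, sub_sub_sub_cancel_right]
      exact ⟨by gcongr, by gcongr⟩
    · rw [sigmaMap_of_notMem hd hD, sigmaMap_of_notMem hd (h ▸ hD), dist_self]
      exact mul_nonneg (wt_nonneg _ _) dist_nonneg
  · rw [rho_of_fst_ne p q h]
    have h1 := dist_sigmaMap_h0_le hd p
    have h2 := dist_sigmaMap_h0_le hd q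
    have h3 := dist_triangle_right (sigmaMap d hd p) (sigmaMap d hd q) h0
    have h4 := dist_nonneg (x := p.pt.1) (y := q.pt.1)
    linarith

/-- Membership of a point of the Hawaiian earring in its `n`-th circle. -/
def OnCircle (n : ℕ+) (p : HEset) : Prop :=
  (p.1.1 + 1 / (n : ℝ)) ^ 2 + p.1.2 ^ 2 = (1 / (n : ℝ)) ^ 2

theorem OnCircle.mul_eq {n : ℕ+} {p : HEset} (h : OnCircle n p) :
    (n : ℝ) * (p.1.1 ^ 2 + p.1.2 ^ 2) = -2 * p.1.1 := by
  have hpos : (0 : ℝ) < n := by exact_mod_cast n.pos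
  unfold OnCircle at h
  field_simp at h
  nlinarith

theorem onCircle_of_mul_eq {n : ℕ+} {p : HEset}
    (h : (n : ℝ) * (p.1.1 ^ 2 + p.1.2 ^ 2) = -2 * p.1.1) : OnCircle n p := by
  have hpos : (0 : ℝ) < n := by exact_mod_cast n.pos
  unfold OnCircle
  field_simp
  nlinarith

theorem sq_add_sq_pos_of_ne {p : HEset} (h : p ≠ h0) : 0 < p.1.1 ^ 2 + p.1.2 ^ 2 := by
  rcases eq_or_ne p.1.1 0 with h1 | h1
  · rcases eq_or_ne p.1.2 0 with h2 | h2
    · exact absurd (Subtype.ext (Prod.ext h1 h2)) h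
    · positivity
  · positivity

theorem OnCircle.eq {m n : ℕ+} {p : HEset} (hp : p ≠ h0) (hm : OnCircle m p)
    (hn : OnCircle n p) : m = n := by
  have := mul_right_cancel₀ (sq_add_sq_pos_of_ne hp).ne' (hm.mul_eq.trans hn.mul_eq.symm)
  exact_mod_cast this

theorem eventually_onCircle {m : ℕ+} {p : HEset} (hp : p ≠ h0) (hm : OnCircle m p) :
    ∀ᶠ q in nhds p, q ≠ h0 ∧ OnCircle m q := by
  have hc : ContinuousAt (fun q : HEset => -2 * q.1.1 / (q.1.1 ^ 2 + q.1.2 ^ 2)) p := by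
    refine ContinuousAt.div ?_ ?_ (sq_add_sq_pos_of_ne hp).ne' <;> fun_prop
  have ev : ∀ q : HEset, q ≠ h0 → ∀ k, OnCircle k q →
      -2 * q.1.1 / (q.1.1 ^ 2 + q.1.2 ^ 2) = k := fun q hq k hk => by
    rw [← hk.mul_eq, mul_div_cancel_right₀ _ (sq_add_sq_pos_of_ne hq).ne']
  filter_upwards [Metric.tendsto_nhds.1 hc 1 one_pos, isOpen_ne.mem_nhds hp] with q h1 hq
  refine ⟨hq, ?_⟩
  obtain ⟨k, hk⟩ := q.2
  rw [ev q hq k hk, ev p hp m hm, Real.dist_eq, abs_lt] at h1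
  have : k = m := by
    have a1 : (k : ℕ) < m + 1 := by
      have : ((k : ℕ) : ℝ) < m + 1 := by linarith
      exact_mod_cast this
    have a2 : (m : ℕ) < k + 1 := by
      have : ((m : ℕ) : ℝ) < k + 1 := by linarith
      exact_mod_cast this
    exact PNat.coe_injective (by omega)
  exact this ▸ hk

/-- The complex coordinate of the Hawaiian earring obtained by collapsing all circles but the
`n`-th one, which is rescaled to the unit circle. -/
def heComplex (n : ℕ+) (p : HEset) : ℂ :=
  if OnCircle n p then ⟨n * p.1.1 + 1, n * p.1.2⟩ else 1

theorem norm_heComplex (n : ℕ+) (p : HEset) : ‖heComplex n p‖ = 1 := by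
  unfold heComplex
  split_ifs with h
  · rw [Complex.norm_eq_sqrt_sq_add_sq, Real.sqrt_eq_one]
    have := h.mul_eq
    show (n * p.1.1 + 1) ^ 2 + ((n : ℝ) * p.1.2) ^ 2 = 1
    linear_combination (n : ℝ) * this
  · exact norm_one

theorem continuous_heComplex (n : ℕ+) : Continuous (heComplex n) := by
  rw [continuous_iff_continuousAt]
  intro p
  have hcont : Continuous fun q : HEset => (⟨n * q.1.1 + 1, n * q.1.2⟩ : ℂ) := by
    have : (fun q : HEset => (⟨n * q.1.1 + 1, n * q.1.2⟩ : ℂ)) =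
        fun q : HEset => ((n * q.1.1 + 1 : ℝ) : ℂ) + ((n * q.1.2 : ℝ) : ℂ) * Complex.I := by
      funext q
      exact Complex.mk_eq_add_mul_I _ _
    rw [this]
    fun_prop
  by_cases hp : p = h0
  · subst hp
    have hv : (⟨n * (h0 : HEset).1.1 + 1, n * (h0 : HEset).1.2⟩ : ℂ) = 1 := by
      apply Complex.ext <;> simp [h0]
    have hlim := hcont.continuousAt (x := h0)
    rw [ContinuousAt, hv] at hlim
    have hval : heComplex n h0 = 1 := by
      unfold heComplex
      split_ifs
      · exact hv
      · rfl
    rw [ContinuousAt, hval]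
    rw [Metric.tendsto_nhds] at hlim ⊢
    intro ε hε
    filter_upwards [hlim ε hε] with q hq
    unfold heComplex
    split_ifs
    · exact hq
    · rwa [dist_self]
  · obtain ⟨m, hm⟩ := p.2
    have hev := eventually_onCircle hp hm
    by_cases hmn : m = n
    · subst hmn
      refine hcont.continuousAt.congr ?_
      filter_upwards [hev] with q hq
      exact (if_pos hq.2).symm
    · refine (continuousAt_const (y := (1 : ℂ))).congr ?_
      filter_upwards [hev] with q hq
      exact (if_neg fun h => hmn (hq.2.eq hq.1 h)).symm

/-- The `n`-th circle coordinate of the Hawaiian earring. -/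
def heCoord (n : ℕ+) (p : HEset) : Circle :=
  ⟨heComplex n p, mem_sphere_zero_iff_norm.2 (norm_heComplex n p)⟩

theorem continuous_heCoord (n : ℕ+) : Continuous (heCoord n) :=
  (continuous_heComplex n).subtype_mk _

theorem heCoord_h0 (n : ℕ+) : heCoord n h0 = 1 := by
  apply Subtype.ext
  show heComplex n h0 = 1
  unfold heComplex
  split_ifs
  · apply Complex.ext <;> simp [h0]
  · rfl

theorem heCoord_eq_one_of_ne {m n : ℕ+} {p : HEset} (h : heCoord m p ≠ 1) (hmn : n ≠ m) :
    heCoord n p = 1 := by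
  by_cases hp : p = h0
  · rw [hp, heCoord_h0]
  · apply Subtype.ext
    refine if_neg fun hn => ?_
    refine h (Subtype.ext (if_neg fun hm => hmn (hn.eq hp hm)))

theorem heCoord_sigmaMap {d : ℕ+ → X} (hd : Function.Injective d) (n : ℕ+) (p : ESp X d) :
    heCoord n (sigmaMap d hd p) = circleCoord d n p := by
  have hpos : (0 : ℝ) < n := by exact_mod_cast n.pos
  by_cases hn : p.pt.1 = d n
  · have hs := sigmaMap_of_eq hd hn
    have hon : OnCircle n (sigmaMap d hd p) := by
      apply onCircle_of_mul_eq
      rw [hs]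
      have := Circle.normSq_coe p.pt.2
      rw [Complex.normSq_apply] at this
      field_simp
      linear_combination this
    rw [circleCoord, if_pos hn]
    apply Subtype.ext
    refine (if_pos hon).trans ?_
    rw [hs]
    apply Complex.ext
    · show (n : ℝ) * (((p.pt.2 : ℂ).re - 1) / n) + 1 = _
      field_simp
      ring
    · show (n : ℝ) * ((p.pt.2 : ℂ).im / n) = _
      field_simp
  · rw [circleCoord, if_neg hn]
    by_cases hm : ∃ m, p.pt.1 = d m
    · obtain ⟨m, hm⟩ := hm
      by_cases hs : sigmaMap d hd p = h0
      · rw [hs, heCoord_h0]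
      · have hon : OnCircle m (sigmaMap d hd p) := by
          have hposm : (0 : ℝ) < m := by exact_mod_cast m.pos
          apply onCircle_of_mul_eq
          rw [sigmaMap_of_eq hd hm]
          have := Circle.normSq_coe p.pt.2
          rw [Complex.normSq_apply] at this
          field_simp
          linear_combination this
        apply Subtype.ext
        refine if_neg fun h => hn ?_
        rw [hm, hon.eq hs h]
    · rw [sigmaMap_of_notMem hd hm, heCoord_h0]

/-- The boundary of the unit square. -/
def sqBd : Set (ℝ × ℝ) :=
  {p | (0 ≤ p.1 ∧ p.1 ≤ 1) ∧ (0 ≤ p.2 ∧ p.2 ≤ 1) ∧ (p.1 = 0 ∨ p.1 = 1 ∨ p.2 = 0 ∨ p.2 = 1)}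

/-- A sweep of the unit square by paths from `(0,0)` to `(1,1)`, starting at the lower right
boundary path and ending at the upper left one. -/
def sweep (q : unitInterval × unitInterval) : ℝ × ℝ :=
  ((1 - (q.1 : ℝ)) * min (2 * (q.2 : ℝ)) 1 + q.1 * max (2 * (q.2 : ℝ) - 1) 0,
    (1 - (q.1 : ℝ)) * max (2 * (q.2 : ℝ) - 1) 0 + q.1 * min (2 * (q.2 : ℝ)) 1)

theorem continuous_sweep : Continuous sweep := by
  unfold sweep; fun_prop

theorem sweep_mem (q : unitInterval × unitInterval) :
    sweep q ∈ Set.Icc (0 : ℝ) 1 ×ˢ Set.Icc (0 : ℝ) 1 := by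
  obtain ⟨⟨t, ht0, ht1⟩, ⟨s, hs0, hs1⟩⟩ := q
  have a0 : 0 ≤ min (2 * s) 1 := le_min (by linarith) zero_le_one
  have a1 : min (2 * s) 1 ≤ 1 := min_le_right _ _
  have b0 : 0 ≤ max (2 * s - 1) 0 := le_max_right _ _
  have b1 : max (2 * s - 1) 0 ≤ 1 := max_le (by linarith) zero_le_one
  simp only [sweep, Set.mem_prod, Set.mem_Icc]
  refine ⟨⟨?_, ?_⟩, ?_, ?_⟩ <;> nlinarith

theorem sweep_eq_of_fst {q q' : unitInterval × unitInterval} (h : sweep q = sweep q') :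
    q.2 = q'.2 ∧ (q.1 = q'.1 ∨ q.2 = 0 ∨ q.2 = 1) := by
  obtain ⟨⟨t, ht0, ht1⟩, ⟨s, hs0, hs1⟩⟩ := q
  obtain ⟨⟨t', ht0', ht1'⟩, ⟨s', hs0', hs1'⟩⟩ := q'
  simp only [sweep, Prod.mk.injEq] at h
  obtain ⟨h1, h2⟩ := h
  have key : ∀ s : ℝ, min (2 * s) 1 + max (2 * s - 1) 0 = 2 * s := by
    intro s
    rcases le_total (2 * s) 1 with h | h
    · rw [min_eq_left h, max_eq_right (by linarith)]; ring
    · rw [min_eq_right h, max_eq_left (by linarith)]; ring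
  have hs : s = s' := by
    have := key s; have := key s'; nlinarith
  subst hs
  refine ⟨rfl, ?_⟩
  have e : (t - t') * (min (2 * s) 1 - max (2 * s - 1) 0) = 0 := by linarith
  rcases mul_eq_zero.1 e with h | h
  · left; exact Subtype.ext (by linarith)
  · right
    rcases le_total (2 * s) 1 with h' | h'
    · rw [min_eq_left h', max_eq_right (by linarith)] at h
      left; exact Subtype.ext (by simpa using h)
    · rw [min_eq_right h', max_eq_left (by linarith)] at h
      right; exact Subtype.ext (by change s = 1; linarith)

theorem sweep_surj {p : ℝ × ℝ} (hp : p ∈ Set.Icc (0 : ℝ) 1 ×ˢ Set.Icc (0 : ℝ) 1) :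
    ∃ q, sweep q = p := by
  obtain ⟨x, y⟩ := p
  obtain ⟨⟨hx0, hx1⟩, hy0, hy1⟩ := hp
  simp only at hx0 hx1 hy0 hy1
  have hs : (x + y) / 2 ∈ unitInterval := ⟨by linarith, by linarith⟩
  rcases le_total (x + y) 1 with h | h
  · rcases (add_nonneg hx0 hy0).eq_or_lt with h0 | h0
    · refine ⟨⟨0, 0⟩, ?_⟩
      simp only [sweep]
      ext <;> simp <;> linarith
    · refine ⟨⟨⟨y / (x + y), by positivity, (div_le_one h0).2 (by linarith)⟩,
        ⟨_, hs⟩⟩, ?_⟩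
      have e1 : min (2 * ((x + y) / 2)) 1 = x + y := by rw [min_eq_left] <;> linarith
      have e2 : max (2 * ((x + y) / 2) - 1) 0 = 0 := by rw [max_eq_right]; linarith
      simp only [sweep, e1, e2]
      ext <;> simp <;> field_simp <;> ring
  · rcases (show x + y ≤ 2 by linarith).eq_or_lt with h0 | h0
    · refine ⟨⟨0, 1⟩, ?_⟩
      simp only [sweep]
      ext <;> simp <;> norm_num <;> linarith
    · have h0' : 0 < 2 - x - y := by linarith
      refine ⟨⟨⟨(1 - x) / (2 - x - y), div_nonneg (by linarith) h0'.le,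
        (div_le_one h0').2 (by linarith)⟩, ⟨_, hs⟩⟩, ?_⟩
      have e1 : min (2 * ((x + y) / 2)) 1 = 1 := by rw [min_eq_right]; linarith
      have e2 : max (2 * ((x + y) / 2) - 1) 0 = x + y - 1 := by rw [max_eq_left] <;> linarith
      simp only [sweep, e1, e2]
      ext <;> simp <;> field_simp <;> ring

/-- A map from the boundary of a square to a simply connected space extends. -/
theorem exists_square_fill {Y : Type*} [TopologicalSpace Y] [SimplyConnectedSpace Y]
    {g : ℝ × ℝ → Y} (hg : ContinuousOn g sqBd) :
    ∃ F : ℝ × ℝ → Y, Continuous F ∧ ∀ p ∈ sqBd, F p = g p := by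
  have hbd : ∀ (t : unitInterval), t = 0 ∨ t = 1 → ∀ s, sweep (t, s) ∈ sqBd := by
    intro t ht s
    have hm := sweep_mem (t, s)
    refine ⟨hm.1, hm.2, ?_⟩
    rcases le_total (2 * (s : ℝ)) 1 with h | h
    · have : max (2 * (s : ℝ) - 1) 0 = 0 := by rw [max_eq_right]; linarith
      rcases ht with rfl | rfl <;> simp [sweep, this]
    · have : min (2 * (s : ℝ)) 1 = 1 := by rw [min_eq_right]; linarith
      rcases ht with rfl | rfl <;> simp [sweep, this]
  have h00 : ∀ t, sweep (t, 0) = (0, 0) := by intro t; simp [sweep]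
  have h11 : ∀ t, sweep (t, 1) = (1, 1) := by intro t; simp [sweep]; norm_num
  let pth : (t : unitInterval) → (t = 0 ∨ t = 1) → Path (g (0, 0)) (g (1, 1)) := fun t ht =>
    { toFun := fun s => g (sweep (t, s))
      continuous_toFun := hg.comp_continuous
        (continuous_sweep.comp (by fun_prop)) (hbd t ht)
      source' := by rw [h00]
      target' := by rw [h11] }
  obtain ⟨H⟩ := SimplyConnectedSpace.paths_homotopic (pth 0 (Or.inl rfl)) (pth 1 (Or.inr rfl))
  let sw : unitInterval × unitInterval → unitInterval × unitInterval := fun q =>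
    (⟨(sweep q).1, (sweep_mem q).1⟩, ⟨(sweep q).2, (sweep_mem q).2⟩)
  have hsw : Continuous sw := by
    have := continuous_sweep
    fun_prop
  have hsurj : Function.Surjective sw := by
    intro p
    obtain ⟨q, hq⟩ := sweep_surj (p := (p.1, p.2)) ⟨p.1.2, p.2.2⟩
    exact ⟨q, Prod.ext (Subtype.ext (congrArg Prod.fst hq)) (Subtype.ext (congrArg Prod.snd hq))⟩
  have hq : Topology.IsQuotientMap sw := hsw.isClosedMap.isQuotientMap hsw hsurj
  have hfib : ∀ q q', sw q = sw q' → H q = H q' := by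
    intro q q' h
    have h' : sweep q = sweep q' := by
      have := congrArg (fun r : unitInterval × unitInterval => ((r.1 : ℝ), (r.2 : ℝ))) h
      exact this
    obtain ⟨h2, h1⟩ := sweep_eq_of_fst h'
    obtain ⟨t, s⟩ := q
    obtain ⟨t', s'⟩ := q'
    simp only at h1 h2
    subst h2
    rcases h1 with rfl | rfl | rfl
    · rfl
    · simp
    · simp
  let G : unitInterval × unitInterval → Y := fun p => H (Function.surjInv hsurj p)
  have hG : ∀ q, G (sw q) = H q := fun q => hfib _ _ (Function.surjInv_eq hsurj _)
  have hGc : Continuous G := by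
    rw [hq.continuous_iff]
    have : G ∘ sw = H := funext hG
    rw [this]; exact H.continuous
  refine ⟨fun p => G (Set.projIcc 0 1 zero_le_one p.1, Set.projIcc 0 1 zero_le_one p.2),
    by fun_prop, ?_⟩
  rintro ⟨x, y⟩ ⟨hx, hy, hp⟩
  simp only at hx hy hp ⊢
  rw [Set.projIcc_of_mem _ hx, Set.projIcc_of_mem _ hy]
  have main : ∀ t s : unitInterval, (t = 0 ∨ t = 1) → sweep (t, s) = (x, y) →
      G (⟨x, hx⟩, ⟨y, hy⟩) = g (x, y) := by
    intro t s ht h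
    have e : sw (t, s) = (⟨x, hx⟩, ⟨y, hy⟩) :=
      Prod.ext (Subtype.ext (congrArg Prod.fst h)) (Subtype.ext (congrArg Prod.snd h))
    rw [← e, hG]
    rcases ht with rfl | rfl
    · rw [H.apply_zero]; change g (sweep (0, s)) = _; rw [h]
    · rw [H.apply_one]; change g (sweep (1, s)) = _; rw [h]
  rcases hp with rfl | rfl | rfl | rfl
  · refine main 1 ⟨y / 2, by linarith, by linarith⟩ (Or.inr rfl) ?_
    simp only [sweep, show 2 * (y / 2) = y by ring]
    ext <;> simp [hy.2]
  · refine main 0 ⟨(1 + y) / 2, by linarith, by linarith⟩ (Or.inl rfl) ?_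
    simp only [sweep]
    ext
    · simp; linarith
    · simp; rw [max_eq_left] <;> linarith
  · refine main 0 ⟨x / 2, by linarith, by linarith⟩ (Or.inl rfl) ?_
    simp only [sweep, show 2 * (x / 2) = x by ring]
    ext <;> simp [hx.2]
  · refine main 1 ⟨(1 + x) / 2, by linarith, by linarith⟩ (Or.inr rfl) ?_
    simp only [sweep]
    ext
    · simp; rw [max_eq_left] <;> linarith
    · simp; linarith

theorem exists_near_optimal {T : Type*} {P : T → Prop} {Q : T → ℝ → Prop}
    (h : ∃ g r, P g ∧ Q g r) (hQ : ∀ g r, Q g r → 0 ≤ r)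
    (hmono : ∀ g r r', r ≤ r' → Q g r → Q g r') {η : ℝ} (hη : 0 < η) :
    ∃ g, P g ∧ ∀ g' r, P g' → Q g' r → Q g (r + η) := by
  obtain ⟨g₀, r₀, hg₀, hr₀⟩ := h
  have hne : {r | ∃ g, P g ∧ Q g r}.Nonempty := ⟨r₀, g₀, hg₀, hr₀⟩
  have hbdd : BddBelow {r | ∃ g, P g ∧ Q g r} := ⟨0, fun r ⟨g, _, hg⟩ => hQ g r hg⟩
  obtain ⟨r₁, ⟨g₁, hP, hQ₁⟩, hr₁⟩ := exists_lt_of_csInf_lt hne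
    (lt_add_of_pos_right (sInf {r | ∃ g, P g ∧ Q g r}) hη)
  refine ⟨g₁, hP, fun g' r hP' hQ' => hmono _ _ _ ?_ hQ₁⟩
  have := csInf_le hbdd (show r ∈ {r | ∃ g, P g ∧ Q g r} from ⟨g', hP', hQ'⟩)
  linarith

/-- An almost optimally small path between two points. -/
theorem exists_near_optimal_path [PathConnectedSpace X] (y z : X) {η : ℝ} (hη : 0 < η) :
    ∃ c : ℝ → X, Continuous c ∧ c 0 = y ∧ c 1 = z ∧
      ∀ (V : Set X) (r : ℝ), PathConnectedSpace V → y ∈ V → z ∈ V → (∀ v ∈ V, dist v y ≤ r) →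
        ∀ t ∈ Set.Icc (0 : ℝ) 1, dist (c t) y ≤ r + η := by
  have key := exists_near_optimal (T := ℝ → X)
    (P := fun c => Continuous c ∧ c 0 = y ∧ c 1 = z)
    (Q := fun c r => ∀ t ∈ Set.Icc (0 : ℝ) 1, dist (c t) y ≤ r) ?_ ?_ ?_ hη
  · obtain ⟨c, ⟨h1, h2, h3⟩, h4⟩ := key
    refine ⟨c, h1, h2, h3, fun V r hV hy hz hr => ?_⟩
    let p := PathConnectedSpace.somePath (⟨y, hy⟩ : V) ⟨z, hz⟩
    refine h4 (fun t => (p.extend t : X)) r ⟨?_, ?_, ?_⟩ fun t _ => hr _ (Subtype.coe_prop _)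
    · exact continuous_subtype_val.comp p.continuous_extend
    · simp
    · simp
  · let p := PathConnectedSpace.somePath y z
    have hc : Continuous fun t => dist (p.extend t) y := by fun_prop
    obtain ⟨r, hr⟩ := (isCompact_Icc (a := (0 : ℝ)) (b := 1)).bddAbove_image hc.continuousOn
    exact ⟨p.extend, r, ⟨p.continuous_extend, by simp, by simp⟩,
      fun t ht => hr (Set.mem_image_of_mem _ ht)⟩
  · exact fun c r h => dist_nonneg.trans (h 0 (by simp))
  · exact fun c r r' hr h t ht => (h t ht).trans hr

/-- An almost optimally small extension of a map from the boundary of the unit square. -/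
theorem exists_near_optimal_fill [SimplyConnectedSpace X] {g : ℝ × ℝ → X}
    (hg : ContinuousOn g sqBd) (y : X) {η : ℝ} (hη : 0 < η) :
    ∃ F : ℝ × ℝ → X, Continuous F ∧ (∀ p ∈ sqBd, F p = g p) ∧
      ∀ (V : Set X) (r : ℝ), SimplyConnectedSpace V → (∀ p ∈ sqBd, g p ∈ V) →
        (∀ v ∈ V, dist v y ≤ r) →
        ∀ p ∈ Set.Icc (0 : ℝ) 1 ×ˢ Set.Icc (0 : ℝ) 1, dist (F p) y ≤ r + η := by
  have key := exists_near_optimal (T := ℝ × ℝ → X)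
    (P := fun F => Continuous F ∧ ∀ p ∈ sqBd, F p = g p)
    (Q := fun F r => ∀ p ∈ Set.Icc (0 : ℝ) 1 ×ˢ Set.Icc (0 : ℝ) 1, dist (F p) y ≤ r)
    ?_ ?_ ?_ hη
  · obtain ⟨c, ⟨h1, h2⟩, h4⟩ := key
    refine ⟨c, h1, h2, fun V r hV hgV hr => ?_⟩
    have : Nonempty V := ⟨⟨g (0, 0), hgV _ (by simp [sqBd])⟩⟩
    let g' : ℝ × ℝ → V := fun p => if h : g p ∈ V then ⟨g p, h⟩ else Classical.arbitrary V
    have hg' : ∀ p ∈ sqBd, (g' p : X) = g p := fun p hp => by simp [g', hgV p hp]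
    have hg'c : ContinuousOn g' sqBd := by
      rw [Topology.IsEmbedding.subtypeVal.isInducing.continuousOn_iff]
      exact hg.congr hg'
    obtain ⟨F, hF, hFg⟩ := exists_square_fill hg'c
    refine h4 (fun t => (F t : X)) r ⟨continuous_subtype_val.comp hF, fun p hp => ?_⟩
      fun t _ => hr _ (Subtype.coe_prop _)
    rw [hFg p hp, hg' p hp]
  · obtain ⟨F, hF, hFg⟩ := exists_square_fill hg
    have hc : Continuous fun p => dist (F p) y := by fun_prop
    obtain ⟨r, hr⟩ := ((isCompact_Icc (a := (0 : ℝ)) (b := 1)).prod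
      (isCompact_Icc (a := (0 : ℝ)) (b := 1))).bddAbove_image hc.continuousOn
    exact ⟨F, r, ⟨hF, hFg⟩, fun t ht => hr (Set.mem_image_of_mem _ ht)⟩
  · exact fun c r h => dist_nonneg.trans (h (0, 0) (by simp))
  · exact fun c r r' hr h t ht => (h t ht).trans hr

/-- Concatenation over `ℤ` of the paths `c (W m) (W (m + 1))`. -/
def zig (c : X → X → ℝ → X) (W : ℤ → X) (t : ℝ) : X :=
  c (W ⌊t⌋) (W (⌊t⌋ + 1)) (t - ⌊t⌋)

theorem zig_int {c : X → X → ℝ → X} (hc0 : ∀ y z, c y z 0 = y) (W : ℤ → X) (m : ℤ) :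
    zig c W m = W m := by
  simp [zig, hc0]

theorem continuous_zig {c : X → X → ℝ → X} (hc : ∀ y z, Continuous (c y z))
    (hc0 : ∀ y z, c y z 0 = y) (hc1 : ∀ y z, c y z 1 = z) (W : ℤ → X) :
    Continuous (zig c W) := by
  have hlf : LocallyFinite fun m : ℤ => Set.Icc (m : ℝ) (m + 1) := by
    intro t
    refine ⟨Set.Ioo (t - 1) (t + 1), Ioo_mem_nhds (by linarith) (by linarith), ?_⟩
    refine (Set.finite_Icc (⌊t⌋ - 2) (⌊t⌋ + 2)).subset ?_
    rintro m ⟨s, ⟨h1, h2⟩, h3, h4⟩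
    have h5 := Int.floor_le t
    have h6 := Int.lt_floor_add_one t
    constructor
    · have : (⌊t⌋ : ℝ) - 2 < m := by linarith
      exact_mod_cast this.le
    · have : (m : ℝ) < ⌊t⌋ + 2 := by linarith
      exact_mod_cast this.le
  refine hlf.continuous ?_ (fun _ => isClosed_Icc) fun m => ?_
  · refine Set.eq_univ_of_forall fun t => Set.mem_iUnion.2 ⟨⌊t⌋, Int.floor_le t,
      (Int.lt_floor_add_one t).le⟩
  · have : ContinuousOn (fun t : ℝ => c (W m) (W (m + 1)) (t - m))
        (Set.Icc (m : ℝ) (m + 1)) := ((hc _ _).comp (by fun_prop)).continuousOn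
    refine this.congr fun t ht => ?_
    rcases ht.2.eq_or_lt with h | h
    · have h' : t = ((m + 1 : ℤ) : ℝ) := by push_cast; exact h
      rw [h', zig_int hc0]
      simp [hc1]
    · have : ⌊t⌋ = m := Int.floor_eq_iff.2 ⟨ht.1, h⟩
      simp [zig, this]

/-- The closed dyadic square of level `S.1` with lower left corner `(S.2.1, S.2.2) / 2 ^ S.1`. -/
def dySq (S : ℕ × ℤ × ℤ) : Set (ℝ × ℝ) :=
  {z | ((S.2.1 : ℝ) ≤ 2 ^ S.1 * z.1 ∧ 2 ^ S.1 * z.1 ≤ S.2.1 + 1) ∧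
    ((S.2.2 : ℝ) ≤ 2 ^ S.1 * z.2 ∧ 2 ^ S.1 * z.2 ≤ S.2.2 + 1)}

theorem dist_le_of_mem_dySq {S : ℕ × ℤ × ℤ} {z z' : ℝ × ℝ} (hz : z ∈ dySq S)
    (hz' : z' ∈ dySq S) : 2 ^ S.1 * dist z z' ≤ 1 := by
  obtain ⟨⟨h1, h2⟩, h3, h4⟩ := hz
  obtain ⟨⟨g1, g2⟩, g3, g4⟩ := hz'
  have hp : (0 : ℝ) < 2 ^ S.1 := by positivity
  rw [mul_comm, ← le_div_iff₀ hp, Prod.dist_eq, Real.dist_eq, Real.dist_eq, max_le_iff,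
    le_div_iff₀ hp, le_div_iff₀ hp, mul_comm, mul_comm (|z.2 - z'.2|), ← abs_of_pos hp, ← abs_mul,
    ← abs_mul, abs_le, abs_le]
  constructor <;> constructor <;> linarith

/-- The dyadic square of level `k` with a given point in it. -/
def sqAt (k : ℕ) (z : ℝ × ℝ) : ℕ × ℤ × ℤ := (k, ⌊2 ^ k * z.1⌋, ⌊2 ^ k * z.2⌋)

theorem mem_sqAt (k : ℕ) (z : ℝ × ℝ) : z ∈ dySq (sqAt k z) :=
  ⟨⟨Int.floor_le _, (Int.lt_floor_add_one _).le⟩, Int.floor_le _, (Int.lt_floor_add_one _).le⟩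

/-- A dyadic square is good if its distance to `A` exceeds its side. -/
def GoodSq (A : Set (ℝ × ℝ)) (S : ℕ × ℤ × ℤ) : Prop :=
  ∀ z ∈ dySq S, ∀ a ∈ A, 1 < 2 ^ S.1 * dist z a

/-- Whitney squares: the maximal good squares. -/
def WhitneySq (A : Set (ℝ × ℝ)) (S : ℕ × ℤ × ℤ) : Prop :=
  GoodSq A S ∧ ∀ T, T.1 < S.1 → GoodSq A T → ¬ dySq S ⊆ dySq T

/-- The least level of a good square containing `z`. -/
def sqLevel (A : Set (ℝ × ℝ)) (z : ℝ × ℝ) : ℕ := sInf {k | ∃ S, S.1 = k ∧ GoodSq A S ∧ z ∈ dySq S}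

theorem sqLevel_le {A : Set (ℝ × ℝ)} {S : ℕ × ℤ × ℤ} {z : ℝ × ℝ} (hS : GoodSq A S)
    (hz : z ∈ dySq S) : sqLevel A z ≤ S.1 := Nat.sInf_le ⟨S, rfl, hS, hz⟩

theorem exists_good_level {A : Set (ℝ × ℝ)} {S : ℕ × ℤ × ℤ} {z : ℝ × ℝ} (hS : GoodSq A S)
    (hz : z ∈ dySq S) : ∃ T : ℕ × ℤ × ℤ, T.1 = sqLevel A z ∧ GoodSq A T ∧ z ∈ dySq T := by
  have hne : {k | ∃ S : ℕ × ℤ × ℤ, S.1 = k ∧ GoodSq A S ∧ z ∈ dySq S}.Nonempty :=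
    ⟨S.1, S, rfl, hS, hz⟩
  exact Nat.sInf_mem hne

theorem exists_goodSq {A : Set (ℝ × ℝ)} (hA : IsClosed A) {z : ℝ × ℝ} (hz : z ∉ A) :
    ∃ S, GoodSq A S ∧ z ∈ dySq S := by
  obtain ⟨ε, hε, hb⟩ := Metric.isOpen_iff.1 hA.isOpen_compl z hz
  obtain ⟨k, hk⟩ := exists_pow_lt_of_lt_one (show 0 < ε / 2 by linarith)
    (show (1 / 2 : ℝ) < 1 by norm_num)
  refine ⟨sqAt k z, fun z' hz' a ha => ?_, mem_sqAt k z⟩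
  have h1 := dist_le_of_mem_dySq (mem_sqAt k z) hz'
  have h2 : ε ≤ dist a z := by
    by_contra h
    exact hb (Metric.mem_ball.2 (not_le.1 h)) ha
  have hp : (0 : ℝ) < 2 ^ k := by positivity
  have hk' : 2 < 2 ^ k * ε := by
    rw [one_div, inv_pow, inv_lt_iff_one_lt_mul₀ hp] at hk
    linarith
  have h3 := dist_triangle a z' z
  rw [dist_comm z z'] at h1
  rw [dist_comm z' a]
  simp only [sqAt] at h1 ⊢
  nlinarith

theorem exists_whitneySq {A : Set (ℝ × ℝ)} (hA : IsClosed A) {z : ℝ × ℝ} (hz : z ∉ A) :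
    ∃ S, WhitneySq A S ∧ z ∈ dySq S := by
  obtain ⟨S, hS, hzS⟩ := exists_goodSq hA hz
  obtain ⟨T, hT, hTg, hzT⟩ := exists_good_level hS hzS
  refine ⟨T, ⟨hTg, fun T' hT' hg hsub => ?_⟩, hzT⟩
  have := sqLevel_le hg (hsub hzT)
  omega

/-- The dyadic square of the previous level containing `S`. -/
def parentSq (S : ℕ × ℤ × ℤ) : ℕ × ℤ × ℤ := (S.1 - 1, S.2.1 / 2, S.2.2 / 2)

theorem subset_parentSq {S : ℕ × ℤ × ℤ} (hS : S.1 ≠ 0) : dySq S ⊆ dySq (parentSq S) := by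
  obtain ⟨k, i, j⟩ := S
  obtain ⟨k, rfl⟩ := Nat.exists_eq_succ_of_ne_zero hS
  rintro z ⟨⟨h1, h2⟩, h3, h4⟩
  simp only [Nat.succ_eq_add_one, pow_succ, parentSq, dySq, Set.mem_ofPred_eq,
    Nat.add_sub_cancel] at *
  have ei : 2 * (i / 2) ≤ i ∧ i + 1 ≤ 2 * (i / 2) + 2 := by omega
  have ej : 2 * (j / 2) ≤ j ∧ j + 1 ≤ 2 * (j / 2) + 2 := by omega
  obtain ⟨a1, a2⟩ := ei
  obtain ⟨b1, b2⟩ := ej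
  have a1' : 2 * ((i / 2 : ℤ) : ℝ) ≤ i := by exact_mod_cast a1
  have a2' : (i : ℝ) + 1 ≤ 2 * ((i / 2 : ℤ) : ℝ) + 2 := by exact_mod_cast a2
  have b1' : 2 * ((j / 2 : ℤ) : ℝ) ≤ j := by exact_mod_cast b1
  have b2' : (j : ℝ) + 1 ≤ 2 * ((j / 2 : ℤ) : ℝ) + 2 := by exact_mod_cast b2
  refine ⟨⟨?_, ?_⟩, ?_, ?_⟩ <;> linarith

/-- A point of a Whitney square of level `k` is at distance at most `4 / 2 ^ k` from `A`. -/
theorem WhitneySq.exists_near {A : Set (ℝ × ℝ)} {S : ℕ × ℤ × ℤ} (hS : WhitneySq A S)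
    (h0 : S.1 ≠ 0) {z : ℝ × ℝ} (hz : z ∈ dySq S) : ∃ a ∈ A, 2 ^ S.1 * dist z a ≤ 4 := by
  have h1 : ¬ GoodSq A (parentSq S) := fun h =>
    hS.2 _ (by simp only [parentSq]; omega) h (subset_parentSq h0)
  simp only [GoodSq, not_forall, not_lt] at h1
  obtain ⟨z', hz', a, ha, h⟩ := h1
  refine ⟨a, ha, ?_⟩
  have h2 := dist_le_of_mem_dySq (subset_parentSq h0 hz) hz'
  have h3 := dist_triangle z z' a
  obtain ⟨k, i, j⟩ := S
  obtain ⟨k, rfl⟩ := Nat.exists_eq_succ_of_ne_zero h0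
  simp only [parentSq, Nat.succ_eq_add_one, Nat.add_sub_cancel, pow_succ] at *
  have hp : (0 : ℝ) < 2 ^ k := by positivity
  nlinarith

theorem WhitneySq.le_sqLevel {A : Set (ℝ × ℝ)} {S : ℕ × ℤ × ℤ} (hS : WhitneySq A S)
    {z : ℝ × ℝ} (hz : z ∈ dySq S) : S.1 ≤ sqLevel A z + 1 := by
  by_contra! hlt
  obtain ⟨a, ha, h⟩ := hS.exists_near (by omega) hz
  obtain ⟨T, hT, hTg, hzT⟩ := exists_good_level hS.1 hz
  have h1 := hTg z hzT a ha
  have h2 : (4 : ℝ) * 2 ^ T.1 ≤ 2 ^ S.1 := by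
    have : (4 : ℝ) * 2 ^ T.1 = 2 ^ (T.1 + 2) := by rw [pow_add]; ring
    rw [this]
    exact pow_le_pow_right₀ (by norm_num) (by omega)
  nlinarith [dist_nonneg (x := z) (y := a)]

/-- The map given on the level `j` grid by the paths `c j` between the values of `V` at adjacent
vertices. -/
def gridMap (c : ℕ → X → X → ℝ → X) (V : ℝ × ℝ → X) (j : ℕ) (z : ℝ × ℝ) : X :=
  if ∃ m : ℤ, 2 ^ j * z.2 = m then
    zig (c j) (fun i => V (i / 2 ^ j, z.2)) (2 ^ j * z.1)
  else zig (c j) (fun i => V (z.1, i / 2 ^ j)) (2 ^ j * z.2)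

section grid

variable {c : ℕ → X → X → ℝ → X} {V : ℝ × ℝ → X} {j : ℕ}

theorem gridMap_hor {z : ℝ × ℝ} {m : ℤ} (h : 2 ^ j * z.2 = m) :
    gridMap c V j z = zig (c j) (fun i => V (i / 2 ^ j, z.2)) (2 ^ j * z.1) :=
  if_pos ⟨m, h⟩

theorem gridMap_vertex (hc0 : ∀ j y z, c j y z 0 = y) {z : ℝ × ℝ} {m n : ℤ}
    (h1 : 2 ^ j * z.1 = m) (h2 : 2 ^ j * z.2 = n) : gridMap c V j z = V z := by
  rw [gridMap_hor h2, h1, zig_int (hc0 j)]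
  have : (m : ℝ) / 2 ^ j = z.1 := by rw [← h1]; field_simp
  rw [this]

theorem gridMap_ver (hc0 : ∀ j y z, c j y z 0 = y) {z : ℝ × ℝ} {m : ℤ} (h : 2 ^ j * z.1 = m) :
    gridMap c V j z = zig (c j) (fun i => V (z.1, i / 2 ^ j)) (2 ^ j * z.2) := by
  by_cases h2 : ∃ n : ℤ, 2 ^ j * z.2 = n
  · obtain ⟨n, hn⟩ := h2
    rw [gridMap_vertex hc0 h hn, hn, zig_int (hc0 j)]
    have : (n : ℝ) / 2 ^ j = z.2 := by rw [← hn]; field_simp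
    rw [this]
  · exact if_neg h2

theorem continuous_gridMap_hor (hc : ∀ j y z, Continuous (c j y z))
    (hc0 : ∀ j y z, c j y z 0 = y) (hc1 : ∀ j y z, c j y z 1 = z) {y : ℝ} {m : ℤ}
    (h : 2 ^ j * y = m) : Continuous fun x => gridMap c V j (x, y) := by
  have : (fun x => gridMap c V j (x, y)) =
      fun x => zig (c j) (fun i => V (i / 2 ^ j, y)) (2 ^ j * x) :=
    funext fun x => gridMap_hor (z := (x, y)) h
  rw [this]
  exact (continuous_zig (hc j) (hc0 j) (hc1 j) _).comp (by fun_prop)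

theorem continuous_gridMap_ver (hc : ∀ j y z, Continuous (c j y z))
    (hc0 : ∀ j y z, c j y z 0 = y) (hc1 : ∀ j y z, c j y z 1 = z) {x : ℝ} {m : ℤ}
    (h : 2 ^ j * x = m) : Continuous fun y => gridMap c V j (x, y) := by
  have : (fun y => gridMap c V j (x, y)) =
      fun y => zig (c j) (fun i => V (x, i / 2 ^ j)) (2 ^ j * y) :=
    funext fun y => gridMap_ver hc0 (z := (x, y)) h
  rw [this]
  exact (continuous_zig (hc j) (hc0 j) (hc1 j) _).comp (by fun_prop)

theorem gridMap_eq_path (z : ℝ × ℝ) : ∃ p q : ℝ × ℝ, 2 ^ j * dist p z ≤ 1 ∧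
    2 ^ j * dist q z ≤ 1 ∧ ∃ t ∈ Set.Icc (0 : ℝ) 1, gridMap c V j z = c j (V p) (V q) t := by
  have hp : (0 : ℝ) < 2 ^ j := by positivity
  have key : ∀ (x : ℝ) (m : ℤ), |(m : ℝ) - 2 ^ j * x| ≤ 1 → 2 ^ j * |(m : ℝ) / 2 ^ j - x| ≤ 1 := by
    intro x m h
    rwa [← abs_of_pos hp, ← abs_mul, abs_of_pos hp, mul_sub, mul_div_cancel₀ _ hp.ne']
  have key1 : ∀ x : ℝ, 2 ^ j * |(⌊2 ^ j * x⌋ : ℝ) / 2 ^ j - x| ≤ 1 := by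
    refine fun x => key x _ (abs_le.2 ?_)
    have := Int.floor_le (2 ^ j * x)
    have := Int.lt_floor_add_one (2 ^ j * x)
    constructor <;> linarith
  have key2 : ∀ x : ℝ, 2 ^ j * |((⌊2 ^ j * x⌋ + 1 : ℤ) : ℝ) / 2 ^ j - x| ≤ 1 := by
    refine fun x => key x _ (abs_le.2 ?_)
    have := Int.floor_le (2 ^ j * x)
    have := Int.lt_floor_add_one (2 ^ j * x)
    push_cast
    constructor <;> linarith
  have key3 : ∀ x : ℝ, x - ⌊x⌋ ∈ Set.Icc (0 : ℝ) 1 := fun x =>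
    ⟨by linarith [Int.floor_le x], by linarith [Int.lt_floor_add_one x]⟩
  obtain ⟨x, y⟩ := z
  unfold gridMap zig
  split_ifs with h
  · refine ⟨_, _, ?_, ?_, _, key3 _, rfl⟩
    · rw [Prod.dist_eq, dist_self, Real.dist_eq, max_eq_left (abs_nonneg _)]
      exact key1 x
    · rw [Prod.dist_eq, dist_self, Real.dist_eq, max_eq_left (abs_nonneg _)]
      exact key2 x
  · refine ⟨_, _, ?_, ?_, _, key3 _, rfl⟩
    · rw [Prod.dist_eq, dist_self, Real.dist_eq, max_eq_right (abs_nonneg _)]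
      exact key1 y
    · rw [Prod.dist_eq, dist_self, Real.dist_eq, max_eq_right (abs_nonneg _)]
      exact key2 y

/-- The map on the `1`-skeleton of the Whitney decomposition. -/
def skelMap (A : Set (ℝ × ℝ)) (c : ℕ → X → X → ℝ → X) (V : ℝ × ℝ → X) (z : ℝ × ℝ) : X :=
  gridMap c V (sqLevel A z + 1) z

variable {A : Set (ℝ × ℝ)}

theorem skelMap_vertex (hc0 : ∀ j y z, c j y z 0 = y) {S : ℕ × ℤ × ℤ} (hS : WhitneySq A S)
    {z : ℝ × ℝ} (hz : z ∈ dySq S) {m n : ℤ} (h1 : 2 ^ S.1 * z.1 = m) (h2 : 2 ^ S.1 * z.2 = n) :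
    skelMap A c V z = V z := by
  obtain ⟨l, hl⟩ := Nat.exists_eq_add_of_le (hS.le_sqLevel hz)
  refine gridMap_vertex hc0 (m := 2 ^ l * m) (n := 2 ^ l * n) ?_ ?_
  · rw [hl, pow_add]; push_cast; rw [← h1]; ring
  · rw [hl, pow_add]; push_cast; rw [← h2]; ring

theorem skelMap_side (hc0 : ∀ j y z, c j y z 0 = y) {S : ℕ × ℤ × ℤ} (hS : WhitneySq A S)
    {e : Set (ℝ × ℝ)} (he : e ⊆ dySq S)
    (hgood : ∀ z ∈ e, ∀ T : ℕ × ℤ × ℤ, T.1 + 1 = S.1 → z ∈ dySq T →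
      ((∃ m n : ℤ, 2 ^ S.1 * z.1 = m ∧ 2 ^ S.1 * z.2 = n) ∨ e ⊆ dySq T)) :
    ∃ k, S.1 ≤ k ∧ k ≤ S.1 + 1 ∧ ∀ z ∈ e, skelMap A c V z = gridMap c V k z := by
  by_cases h : ∃ z ∈ e, (¬ ∃ m n : ℤ, 2 ^ S.1 * z.1 = m ∧ 2 ^ S.1 * z.2 = n) ∧
      sqLevel A z ≠ S.1
  · obtain ⟨z, hz, hzi, hzl⟩ := h
    have h1 := hS.le_sqLevel (he hz)
    have h2 := sqLevel_le hS.1 (he hz)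
    obtain ⟨T, hT, hTg, hzT⟩ := exists_good_level hS.1 (he hz)
    have hsub := (hgood z hz T (by omega) hzT).resolve_left hzi
    refine ⟨S.1, le_rfl, by omega, fun w hw => ?_⟩
    have h3 := hS.le_sqLevel (he hw)
    have h4 := sqLevel_le hTg (hsub hw)
    have h5 : sqLevel A w + 1 = S.1 := by omega
    rw [skelMap, h5]
  · push Not at h
    refine ⟨S.1 + 1, by omega, le_rfl, fun z hz => ?_⟩
    by_cases hv : ∃ m n : ℤ, 2 ^ S.1 * z.1 = m ∧ 2 ^ S.1 * z.2 = n
    · obtain ⟨m, n, h1, h2⟩ := hv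
      rw [skelMap_vertex hc0 hS (he hz) h1 h2,
        gridMap_vertex hc0 (m := 2 * m) (n := 2 * n)]
      · rw [pow_succ]; push_cast; rw [← h1]; ring
      · rw [pow_succ]; push_cast; rw [← h2]; ring
    · push Not at hv
      rw [skelMap, h z hz hv]

theorem dyadic_nested {i j : ℤ} {x : ℝ} (h1 : (i : ℝ) < x) (h2 : x < i + 1)
    (h3 : (j : ℝ) * 2 ≤ x) (h4 : x ≤ (j + 1) * 2) : j * 2 ≤ i ∧ i + 1 ≤ (j + 1) * 2 := by
  have h5 : ((j * 2 : ℤ) : ℝ) < ((i + 1 : ℤ) : ℝ) := by push_cast; linarith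
  have h6 : ((i : ℤ) : ℝ) < (((j + 1) * 2 : ℤ) : ℝ) := by push_cast; linarith
  have h5' : j * 2 < i + 1 := by exact_mod_cast h5
  have h6' : i < (j + 1) * 2 := by exact_mod_cast h6
  omega

/-- Affine coordinates on a dyadic square. -/
def sqPt (S : ℕ × ℤ × ℤ) (p : ℝ × ℝ) : ℝ × ℝ := ((S.2.1 + p.1) / 2 ^ S.1, (S.2.2 + p.2) / 2 ^ S.1)

theorem two_pow_mul_sqPt_fst (S : ℕ × ℤ × ℤ) (p : ℝ × ℝ) :
    2 ^ S.1 * (sqPt S p).1 = S.2.1 + p.1 := by simp only [sqPt]; field_simp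

theorem two_pow_mul_sqPt_snd (S : ℕ × ℤ × ℤ) (p : ℝ × ℝ) :
    2 ^ S.1 * (sqPt S p).2 = S.2.2 + p.2 := by simp only [sqPt]; field_simp

theorem sqPt_mem {S : ℕ × ℤ × ℤ} {p : ℝ × ℝ} (h1 : 0 ≤ p.1 ∧ p.1 ≤ 1) (h2 : 0 ≤ p.2 ∧ p.2 ≤ 1) :
    sqPt S p ∈ dySq S := by
  refine ⟨?_, ?_⟩
  · rw [two_pow_mul_sqPt_fst]; constructor <;> linarith
  · rw [two_pow_mul_sqPt_snd]; constructor <;> linarith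

theorem continuous_skel_hor (hc : ∀ j y z, Continuous (c j y z))
    (hc0 : ∀ j y z, c j y z 0 = y) (hc1 : ∀ j y z, c j y z 1 = z) {S : ℕ × ℤ × ℤ}
    (hS : WhitneySq A S) {b : ℤ} (hb0 : 0 ≤ b) (hb1 : b ≤ 1) :
    ContinuousOn (fun p => skelMap A c V (sqPt S p)) {p | (0 ≤ p.1 ∧ p.1 ≤ 1) ∧ p.2 = b} := by
  have hb0' : (0 : ℝ) ≤ b := by exact_mod_cast hb0
  have hb1' : (b : ℝ) ≤ 1 := by exact_mod_cast hb1
  have hsub : sqPt S '' {p | (0 ≤ p.1 ∧ p.1 ≤ 1) ∧ p.2 = b} ⊆ dySq S := by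
    rintro _ ⟨p, ⟨h1, h2⟩, rfl⟩
    exact sqPt_mem h1 (by rw [h2]; exact ⟨hb0', hb1'⟩)
  obtain ⟨k, hk1, hk2, hk⟩ := skelMap_side (c := c) (V := V) hc0 hS hsub (by
    rintro _ ⟨p, ⟨h1, h2⟩, rfl⟩ T hT hzT
    by_cases hp : p.1 = 0 ∨ p.1 = 1
    · left
      rcases hp with hp | hp
      · exact ⟨S.2.1, S.2.2 + b, by rw [two_pow_mul_sqPt_fst, hp]; simp,
          by rw [two_pow_mul_sqPt_snd, h2]; push_cast; ring⟩
      · exact ⟨S.2.1 + 1, S.2.2 + b, by rw [two_pow_mul_sqPt_fst, hp]; simp,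
          by rw [two_pow_mul_sqPt_snd, h2]; push_cast; ring⟩
    · right
      push Not at hp
      have hpos : 0 < p.1 := lt_of_le_of_ne h1.1 (Ne.symm hp.1)
      have hlt : p.1 < 1 := lt_of_le_of_ne h1.2 hp.2
      have e1 : ∀ w : ℝ, 2 ^ S.1 * w = 2 * (2 ^ T.1 * w) := by
        intro w; rw [← hT, pow_succ]; ring
      have a1 := two_pow_mul_sqPt_fst S p
      have a2 := two_pow_mul_sqPt_snd S p
      rw [e1] at a1 a2
      obtain ⟨⟨t1, t2⟩, t3, t4⟩ := hzT
      obtain ⟨n1, n2⟩ := dyadic_nested (i := S.2.1) (j := T.2.1) (x := S.2.1 + p.1)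
        (by linarith) (by linarith) (by linarith) (by linarith)
      have n1' : (T.2.1 : ℝ) * 2 ≤ S.2.1 := by exact_mod_cast n1
      have n2' : (S.2.1 : ℝ) + 1 ≤ (T.2.1 + 1) * 2 := by exact_mod_cast n2
      rintro _ ⟨q, ⟨g1, g2⟩, rfl⟩
      have b1 := two_pow_mul_sqPt_fst S q
      have b2 := two_pow_mul_sqPt_snd S q
      rw [e1] at b1 b2
      rw [h2] at a2
      rw [g2] at b2
      refine ⟨⟨?_, ?_⟩, ?_, ?_⟩ <;> linarith)
  have hm : ∃ m : ℤ, 2 ^ k * ((S.2.2 + b) / 2 ^ S.1 : ℝ) = m := by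
    obtain ⟨l, rfl⟩ := Nat.exists_eq_add_of_le hk1
    refine ⟨2 ^ l * (S.2.2 + b), ?_⟩
    push_cast; rw [pow_add]; field_simp
  obtain ⟨m, hm⟩ := hm
  refine ContinuousOn.congr (f := fun p => gridMap c V k
    ((S.2.1 + p.1) / 2 ^ S.1, (S.2.2 + b) / 2 ^ S.1)) ?_ ?_
  · exact ((continuous_gridMap_hor hc hc0 hc1 hm).comp
      (g := fun x => gridMap c V k (x, (S.2.2 + b) / 2 ^ S.1))
      (f := fun p : ℝ × ℝ => (S.2.1 + p.1) / 2 ^ S.1) (by fun_prop)).continuousOn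
  · rintro p hp
    have := hk _ (Set.mem_image_of_mem _ hp)
    simp only [this]
    rw [sqPt, hp.2]

theorem continuous_skel_ver (hc : ∀ j y z, Continuous (c j y z))
    (hc0 : ∀ j y z, c j y z 0 = y) (hc1 : ∀ j y z, c j y z 1 = z) {S : ℕ × ℤ × ℤ}
    (hS : WhitneySq A S) {b : ℤ} (hb0 : 0 ≤ b) (hb1 : b ≤ 1) :
    ContinuousOn (fun p => skelMap A c V (sqPt S p)) {p | (0 ≤ p.2 ∧ p.2 ≤ 1) ∧ p.1 = b} := by
  have hb0' : (0 : ℝ) ≤ b := by exact_mod_cast hb0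
  have hb1' : (b : ℝ) ≤ 1 := by exact_mod_cast hb1
  have hsub : sqPt S '' {p | (0 ≤ p.2 ∧ p.2 ≤ 1) ∧ p.1 = b} ⊆ dySq S := by
    rintro _ ⟨p, ⟨h1, h2⟩, rfl⟩
    exact sqPt_mem (by rw [h2]; exact ⟨hb0', hb1'⟩) h1
  obtain ⟨k, hk1, hk2, hk⟩ := skelMap_side (c := c) (V := V) hc0 hS hsub (by
    rintro _ ⟨p, ⟨h1, h2⟩, rfl⟩ T hT hzT
    by_cases hp : p.2 = 0 ∨ p.2 = 1
    · left
      rcases hp with hp | hp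
      · exact ⟨S.2.1 + b, S.2.2, by rw [two_pow_mul_sqPt_fst, h2]; push_cast; ring,
          by rw [two_pow_mul_sqPt_snd, hp]; simp⟩
      · exact ⟨S.2.1 + b, S.2.2 + 1, by rw [two_pow_mul_sqPt_fst, h2]; push_cast; ring,
          by rw [two_pow_mul_sqPt_snd, hp]; simp⟩
    · right
      push Not at hp
      have hpos : 0 < p.2 := lt_of_le_of_ne h1.1 (Ne.symm hp.1)
      have hlt : p.2 < 1 := lt_of_le_of_ne h1.2 hp.2
      have e1 : ∀ w : ℝ, 2 ^ S.1 * w = 2 * (2 ^ T.1 * w) := by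
        intro w; rw [← hT, pow_succ]; ring
      have a1 := two_pow_mul_sqPt_fst S p
      have a2 := two_pow_mul_sqPt_snd S p
      rw [e1] at a1 a2
      obtain ⟨⟨t1, t2⟩, t3, t4⟩ := hzT
      obtain ⟨n1, n2⟩ := dyadic_nested (i := S.2.2) (j := T.2.2) (x := S.2.2 + p.2)
        (by linarith) (by linarith) (by linarith) (by linarith)
      have n1' : (T.2.2 : ℝ) * 2 ≤ S.2.2 := by exact_mod_cast n1
      have n2' : (S.2.2 : ℝ) + 1 ≤ (T.2.2 + 1) * 2 := by exact_mod_cast n2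
      rintro _ ⟨q, ⟨g1, g2⟩, rfl⟩
      have b1 := two_pow_mul_sqPt_fst S q
      have b2 := two_pow_mul_sqPt_snd S q
      rw [e1] at b1 b2
      rw [h2] at a1
      rw [g2] at b1
      refine ⟨⟨?_, ?_⟩, ?_, ?_⟩ <;> linarith)
  have hm : ∃ m : ℤ, 2 ^ k * ((S.2.1 + b) / 2 ^ S.1 : ℝ) = m := by
    obtain ⟨l, rfl⟩ := Nat.exists_eq_add_of_le hk1
    refine ⟨2 ^ l * (S.2.1 + b), ?_⟩
    push_cast; rw [pow_add]; field_simp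
  obtain ⟨m, hm⟩ := hm
  refine ContinuousOn.congr (f := fun p => gridMap c V k
    ((S.2.1 + b) / 2 ^ S.1, (S.2.2 + p.2) / 2 ^ S.1)) ?_ ?_
  · exact ((continuous_gridMap_ver hc hc0 hc1 hm).comp
      (g := fun y => gridMap c V k ((S.2.1 + b) / 2 ^ S.1, y))
      (f := fun p : ℝ × ℝ => (S.2.2 + p.2) / 2 ^ S.1) (by fun_prop)).continuousOn
  · rintro p hp
    have := hk _ (Set.mem_image_of_mem _ hp)
    simp only [this]
    rw [sqPt, hp.2]

end grid

theorem sqBd_eq : sqBd = (({p | (0 ≤ p.1 ∧ p.1 ≤ 1) ∧ p.2 = ((0 : ℤ) : ℝ)} ∪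
      {p | (0 ≤ p.1 ∧ p.1 ≤ 1) ∧ p.2 = ((1 : ℤ) : ℝ)}) ∪
    ({p | (0 ≤ p.2 ∧ p.2 ≤ 1) ∧ p.1 = ((0 : ℤ) : ℝ)} ∪
      {p | (0 ≤ p.2 ∧ p.2 ≤ 1) ∧ p.1 = ((1 : ℤ) : ℝ)}) : Set (ℝ × ℝ)) := by
  ext ⟨x, y⟩
  simp only [sqBd, Set.mem_union, Set.mem_ofPred_eq, Int.cast_zero, Int.cast_one]
  constructor
  · rintro ⟨h1, h2, h | h | h | h⟩ <;> simp [h, h1, h2]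
  · rintro ((⟨h, rfl⟩ | ⟨h, rfl⟩) | (⟨h, rfl⟩ | ⟨h, rfl⟩)) <;> simp [h]

theorem continuousOn_skel {A : Set (ℝ × ℝ)} {c : ℕ → X → X → ℝ → X} {V : ℝ × ℝ → X}
    (hc : ∀ j y z, Continuous (c j y z)) (hc0 : ∀ j y z, c j y z 0 = y)
    (hc1 : ∀ j y z, c j y z 1 = z) {S : ℕ × ℤ × ℤ} (hS : WhitneySq A S) :
    ContinuousOn (fun p => skelMap A c V (sqPt S p)) sqBd := by
  have cl1 : ∀ b : ℝ, IsClosed {p : ℝ × ℝ | (0 ≤ p.1 ∧ p.1 ≤ 1) ∧ p.2 = b} := by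
    intro b
    convert (isClosed_Icc (a := (0 : ℝ)) (b := 1)).prod (isClosed_singleton (x := b)) using 1
    ext; simp
  have cl2 : ∀ b : ℝ, IsClosed {p : ℝ × ℝ | (0 ≤ p.2 ∧ p.2 ≤ 1) ∧ p.1 = b} := by
    intro b
    convert (isClosed_singleton (x := b)).prod (isClosed_Icc (a := (0 : ℝ)) (b := 1)) using 1
    ext; simp [and_comm]
  rw [sqBd_eq]
  refine ContinuousOn.union_of_isClosed
    (ContinuousOn.union_of_isClosed ?_ ?_ (cl1 _) (cl1 _))
    (ContinuousOn.union_of_isClosed ?_ ?_ (cl2 _) (cl2 _))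
    ((cl1 _).union (cl1 _)) ((cl2 _).union (cl2 _))
  · exact continuous_skel_hor hc hc0 hc1 hS le_rfl zero_le_one
  · exact continuous_skel_hor hc hc0 hc1 hS zero_le_one le_rfl
  · exact continuous_skel_ver hc hc0 hc1 hS le_rfl zero_le_one
  · exact continuous_skel_ver hc hc0 hc1 hS zero_le_one le_rfl

/-- Inverse of `sqPt S`. -/
def sqLoc (S : ℕ × ℤ × ℤ) (z : ℝ × ℝ) : ℝ × ℝ := (2 ^ S.1 * z.1 - S.2.1, 2 ^ S.1 * z.2 - S.2.2)

theorem sqPt_sqLoc (S : ℕ × ℤ × ℤ) (z : ℝ × ℝ) : sqPt S (sqLoc S z) = z := by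
  ext <;> simp [sqPt, sqLoc]

theorem sqLoc_mem {S : ℕ × ℤ × ℤ} {z : ℝ × ℝ} (hz : z ∈ dySq S) :
    sqLoc S z ∈ Set.Icc (0 : ℝ) 1 ×ˢ Set.Icc (0 : ℝ) 1 := by
  obtain ⟨⟨h1, h2⟩, h3, h4⟩ := hz
  exact ⟨⟨by simpa [sqLoc] using h1, by simp only [sqLoc]; linarith⟩,
    ⟨by simpa [sqLoc] using h3, by simp only [sqLoc]; linarith⟩⟩

theorem isClosed_dySq (S : ℕ × ℤ × ℤ) : IsClosed (dySq S) := by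
  have : dySq S = (fun z : ℝ × ℝ => 2 ^ S.1 * z.1) ⁻¹' Set.Icc (S.2.1 : ℝ) (S.2.1 + 1) ∩
      (fun z : ℝ × ℝ => 2 ^ S.1 * z.2) ⁻¹' Set.Icc (S.2.2 : ℝ) (S.2.2 + 1) := by
    ext; simp [dySq]
  rw [this]
  exact (isClosed_Icc.preimage (by fun_prop)).inter (isClosed_Icc.preimage (by fun_prop))

theorem int_nested {i i' N : ℤ} {x : ℝ} (h1 : (i : ℝ) * N ≤ x) (h2 : x ≤ (i + 1) * N)
    (h3 : (i' : ℝ) ≤ x) (h4 : x ≤ i' + 1)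
    (h : ((i : ℝ) * N < x ∧ x < (i + 1) * N) ∨ ((i' : ℝ) < x ∧ x < i' + 1)) :
    i * N ≤ i' ∧ i' + 1 ≤ (i + 1) * N := by
  have h5 : ((i * N : ℤ) : ℝ) < ((i' + 1 : ℤ) : ℝ) := by
    push_cast; rcases h with h | h <;> linarith
  have h6 : ((i' : ℤ) : ℝ) < (((i + 1) * N : ℤ) : ℝ) := by
    push_cast; rcases h with h | h <;> linarith
  have h5' : i * N < i' + 1 := by exact_mod_cast h5
  have h6' : i' < (i + 1) * N := by exact_mod_cast h6
  omega

theorem dySq_nested {S T : ℕ × ℤ × ℤ} (hST : S.1 ≤ T.1) {z : ℝ × ℝ} (hS : z ∈ dySq S)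
    (hT : z ∈ dySq T) (h : sqLoc S z ∉ sqBd ∨ sqLoc T z ∉ sqBd) :
    dySq T ⊆ dySq S ∧ (S.1 = T.1 → S = T) := by
  obtain ⟨k, i, j⟩ := S
  obtain ⟨k', i', j'⟩ := T
  obtain ⟨l, hl⟩ := Nat.exists_eq_add_of_le hST
  simp only at hl
  subst hl
  have hlp : (0 : ℝ) < 2 ^ l := by positivity
  have strict : ∀ S : ℕ × ℤ × ℤ, z ∈ dySq S → sqLoc S z ∉ sqBd →
      ((S.2.1 : ℝ) < 2 ^ S.1 * z.1 ∧ 2 ^ S.1 * z.1 < S.2.1 + 1) ∧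
      ((S.2.2 : ℝ) < 2 ^ S.1 * z.2 ∧ 2 ^ S.1 * z.2 < S.2.2 + 1) := by
    intro S hS hn
    have hm := sqLoc_mem hS
    simp only [sqBd, Set.mem_ofPred_eq, not_and, not_or] at hn
    obtain ⟨n1, n2, n3, n4⟩ := hn hm.1 hm.2
    obtain ⟨⟨a1, a2⟩, a3, a4⟩ := hm
    have b1 := lt_of_le_of_ne a1 (Ne.symm n1)
    have b2 := lt_of_le_of_ne a2 n2
    have b3 := lt_of_le_of_ne a3 (Ne.symm n3)
    have b4 := lt_of_le_of_ne a4 n4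
    simp only [sqLoc] at b1 b2 b3 b4
    refine ⟨⟨?_, ?_⟩, ?_, ?_⟩ <;> linarith
  have e : ∀ x : ℝ, 2 ^ (k + l) * x = 2 ^ k * x * 2 ^ l := by intro x; rw [pow_add]; ring
  have h' := h.imp (strict _ hS) (strict _ hT)
  obtain ⟨⟨s1, s2⟩, s3, s4⟩ := hS
  obtain ⟨⟨t1, t2⟩, t3, t4⟩ := hT
  simp only [e] at *
  obtain ⟨p1, p2⟩ := int_nested (i := i) (i' := i') (N := 2 ^ l) (x := 2 ^ k * z.1 * 2 ^ l)
    (by push_cast; gcongr) (by push_cast; gcongr) t1 t2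
    (by push_cast
        exact h'.imp (fun h => ⟨by gcongr; exact h.1.1, by gcongr; exact h.1.2⟩) fun h => h.1)
  obtain ⟨q1, q2⟩ := int_nested (i := j) (i' := j') (N := 2 ^ l) (x := 2 ^ k * z.2 * 2 ^ l)
    (by push_cast; gcongr) (by push_cast; gcongr) t3 t4
    (by push_cast
        exact h'.imp (fun h => ⟨by gcongr; exact h.2.1, by gcongr; exact h.2.2⟩) fun h => h.2)
  refine ⟨?_, ?_⟩
  · rintro w ⟨⟨w1, w2⟩, w3, w4⟩
    have e : ∀ x : ℝ, 2 ^ (k + l) * x = 2 ^ k * x * 2 ^ l := by intro x; rw [pow_add]; ring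
    simp only at w1 w2 w3 w4
    rw [e] at w1 w2 w3 w4
    have p1' : (i : ℝ) * 2 ^ l ≤ i' := by exact_mod_cast p1
    have p2' : (i' : ℝ) + 1 ≤ (i + 1) * 2 ^ l := by exact_mod_cast p2
    have q1' : (j : ℝ) * 2 ^ l ≤ j' := by exact_mod_cast q1
    have q2' : (j' : ℝ) + 1 ≤ (j + 1) * 2 ^ l := by exact_mod_cast q2
    exact ⟨⟨le_of_mul_le_mul_right (p1'.trans w1) hlp, le_of_mul_le_mul_right (w2.trans p2') hlp⟩,
      le_of_mul_le_mul_right (q1'.trans w3) hlp, le_of_mul_le_mul_right (w4.trans q2') hlp⟩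
  · intro hkl
    have : l = 0 := by omega
    subst this
    simp only [pow_zero, mul_one, add_zero] at *
    have : i = i' := by omega
    have : j = j' := by omega
    simp [*]

theorem WhitneySq.eq_of_mem {A : Set (ℝ × ℝ)} {S T : ℕ × ℤ × ℤ} (hS : WhitneySq A S)
    (hT : WhitneySq A T) {z : ℝ × ℝ} (hzS : z ∈ dySq S) (hzT : z ∈ dySq T)
    (h : sqLoc S z ∉ sqBd ∨ sqLoc T z ∉ sqBd) : S = T := by
  rcases lt_trichotomy S.1 T.1 with hlt | heq | hlt
  · exact absurd (dySq_nested hlt.le hzS hzT h).1 (hT.2 S hlt hS.1)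
  · exact (dySq_nested heq.le hzS hzT h).2 heq
  · exact absurd (dySq_nested hlt.le hzT hzS h.symm).1 (hS.2 T hlt hT.1)

/-- Whitney squares are locally finite off `A`. -/
theorem finite_whitneySq_near {A : Set (ℝ × ℝ)} (hA : IsClosed A) {z : ℝ × ℝ} (hz : z ∉ A) :
    ∃ r > 0, {S | WhitneySq A S ∧ (dySq S ∩ Metric.ball z r).Nonempty}.Finite ∧
      Metric.ball z r ⊆ Aᶜ := by
  obtain ⟨ε, hε, hb⟩ := Metric.isOpen_iff.1 hA.isOpen_compl z hz
  obtain ⟨K, hK⟩ := pow_unbounded_of_one_lt (8 / ε) (show (1 : ℝ) < 2 by norm_num)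
  obtain ⟨M, hM⟩ := exists_nat_gt (2 ^ K * (|z.1| + |z.2| + ε) + 1)
  refine ⟨ε / 2, by linarith, ?_, (Metric.ball_subset_ball (by linarith)).trans hb⟩
  refine ((Set.finite_Iic K).prod ((Set.finite_Icc (-(M : ℤ)) M).prod
    (Set.finite_Icc (-(M : ℤ)) M))).subset ?_
  rintro S ⟨hS, w, hwS, hw⟩
  rw [Metric.mem_ball] at hw
  have hSK : S.1 ≤ K := by
    by_contra! hlt
    obtain ⟨a, ha, h⟩ := hS.exists_near (by omega) hwS
    have h1 : ε ≤ dist a z := by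
      by_contra h'
      exact hb (Metric.mem_ball.2 (not_le.1 h')) ha
    have h2 := dist_triangle a w z
    rw [dist_comm a w] at h2
    have h3 : (2 : ℝ) ^ K ≤ 2 ^ S.1 := pow_le_pow_right₀ (by norm_num) hlt.le
    rw [div_lt_iff₀ hε] at hK
    have h4 := mul_le_mul h3 (show ε / 2 ≤ dist w a by linarith) (by linarith) (by positivity)
    linarith
  have h3 : (2 : ℝ) ^ S.1 ≤ 2 ^ K := pow_le_pow_right₀ (by norm_num) hSK
  have hp : (0 : ℝ) < 2 ^ S.1 := by positivity
  rw [Prod.dist_eq, max_lt_iff, Real.dist_eq, Real.dist_eq] at hw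
  have bound : ∀ (i : ℤ) (x y : ℝ), |x - y| < ε / 2 → |y| ≤ |z.1| + |z.2| → (i : ℝ) ≤ 2 ^ S.1 * x →
      2 ^ S.1 * x ≤ i + 1 → i ∈ Set.Icc (-(M : ℤ)) M := by
    intro i x y hxy hy h1 h2
    have h4 : |x| ≤ |z.1| + |z.2| + ε := by
      have := abs_sub_abs_le_abs_sub x y; linarith
    have h5 : 2 ^ S.1 * |x| ≤ 2 ^ K * (|z.1| + |z.2| + ε) :=
      mul_le_mul h3 h4 (abs_nonneg _) (by positivity)
    have h6 := mul_le_mul_of_nonneg_left (le_abs_self x) hp.le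
    have h7 := mul_le_mul_of_nonneg_left (neg_abs_le x) hp.le
    constructor
    · have : (((-(M : ℤ)) : ℤ) : ℝ) ≤ (i : ℝ) := by push_cast; linarith
      exact_mod_cast this
    · have : (i : ℝ) ≤ ((M : ℤ) : ℝ) := by push_cast; linarith
      exact_mod_cast this
  obtain ⟨⟨h1, h2⟩, h4, h5⟩ := hwS
  exact ⟨hSK, bound _ _ _ hw.1 (by linarith [abs_nonneg z.2]) h1 h2,
    bound _ _ _ hw.2 (by linarith [abs_nonneg z.1]) h4 h5⟩

theorem continuousOn_biUnion_of_finite {Z Y ι : Type*} [TopologicalSpace Z] [TopologicalSpace Y]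
    {s : Set ι} (hs : s.Finite) {C : ι → Set Z} {F : Z → Y} (hC : ∀ i, IsClosed (C i))
    (hF : ∀ i ∈ s, ContinuousOn F (C i)) : ContinuousOn F (⋃ i ∈ s, C i) := by
  induction s, hs using Set.Finite.induction_on with
  | empty => simp
  | @insert a s _ hfin ih =>
    rw [Set.biUnion_insert]
    exact ContinuousOn.union_of_isClosed (hF a (Set.mem_insert _ _))
      (ih fun i hi => hF i (Set.mem_insert_of_mem _ hi)) (hC a)
      (hfin.isClosed_biUnion fun i _ => hC i)

/-- A map from a compact subset of the plane to a simply connected, locally simply connected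
metric space extends to the whole plane. -/
theorem exists_planar_extension [SimplyConnectedSpace X] (hlsc : LocSimplyConnected X)
    {A : Set (ℝ × ℝ)} (hA : IsCompact A) (hne : A.Nonempty) {f : ℝ × ℝ → X}
    (hf : ContinuousOn f A) : ∃ F : ℝ × ℝ → X, Continuous F ∧ ∀ a ∈ A, F a = f a := by
  have hnear : ∀ p : ℝ × ℝ, ∃ a ∈ A, ∀ b ∈ A, dist p a ≤ dist p b := fun p => by
    obtain ⟨a, ha, h⟩ := hA.exists_isMinOn (f := fun a => dist p a) hne (by fun_prop)
    exact ⟨a, ha, fun b hb => h hb⟩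
  choose near hnearA hnear using hnear
  obtain ⟨V, hV⟩ : ∃ V : ℝ × ℝ → X, ∀ p, V p = f (near p) := ⟨_, fun _ => rfl⟩
  have hpath := fun (j : ℕ) (y z : X) =>
    exists_near_optimal_path y z (show (0 : ℝ) < 1 / 2 ^ j by positivity)
  choose c hc hc0 hc1 hcs using hpath
  have hfill := fun (S : ℕ × ℤ × ℤ) (hS : WhitneySq A S) =>
    exists_near_optimal_fill (continuousOn_skel (V := V) hc hc0 hc1 hS) (V (sqPt S (0, 0)))
      (show (0 : ℝ) < 1 / 2 ^ S.1 by positivity)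
  choose Φ hΦ hΦb hΦs using hfill
  have hcl := hA.isClosed
  let F : ℝ × ℝ → X := fun z => if h : ∃ S, WhitneySq A S ∧ z ∈ dySq S then
    Φ h.choose h.choose_spec.1 (sqLoc h.choose z) else f z
  have hFA : ∀ a ∈ A, F a = f a := by
    intro a ha
    refine dif_neg ?_
    rintro ⟨S, hS, haS⟩
    have := hS.1 a haS a ha
    rw [dist_self, mul_zero] at this
    linarith
  have hFS : ∀ S (hS : WhitneySq A S), ∀ z ∈ dySq S, F z = Φ S hS (sqLoc S z) := by
    intro S hS z hz
    have hex : ∃ S, WhitneySq A S ∧ z ∈ dySq S := ⟨S, hS, hz⟩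
    have hF : F z = Φ hex.choose hex.choose_spec.1 (sqLoc hex.choose z) := dif_pos hex
    obtain ⟨T, hT, hTz, hF⟩ : ∃ T, ∃ hT : WhitneySq A T, z ∈ dySq T ∧ F z = Φ T hT (sqLoc T z) :=
      ⟨_, hex.choose_spec.1, hex.choose_spec.2, hF⟩
    by_cases h : sqLoc S z ∉ sqBd ∨ sqLoc T z ∉ sqBd
    · obtain rfl := hS.eq_of_mem hT hz hTz h
      exact hF
    · push Not at h
      rw [hF, hΦb T hT _ h.2, hΦb S hS _ h.1, sqPt_sqLoc, sqPt_sqLoc]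
  refine ⟨F, continuous_iff_continuousAt.2 fun z => ?_, hFA⟩
  by_cases hz : z ∈ A
  swap
  · obtain ⟨r, hr, hfin, hball⟩ := finite_whitneySq_near hcl hz
    have hco : ContinuousOn F
        (⋃ S ∈ {S | WhitneySq A S ∧ (dySq S ∩ Metric.ball z r).Nonempty}, dySq S) := by
      refine continuousOn_biUnion_of_finite hfin isClosed_dySq ?_
      rintro S ⟨hS, -⟩
      refine ContinuousOn.congr (f := fun z => Φ S hS (sqLoc S z)) ?_ (hFS S hS)
      exact ((hΦ S hS).comp (by unfold sqLoc; fun_prop)).continuousOn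
    refine hco.continuousAt (Filter.mem_of_superset (Metric.ball_mem_nhds z hr) fun w hw => ?_)
    obtain ⟨S, hS, hwS⟩ := exists_whitneySq hcl (hball hw)
    exact Set.mem_biUnion (show S ∈ {S | _ ∧ _} from ⟨hS, w, hwS, hw⟩) hwS
  · rw [Metric.continuousAt_iff]
    intro ε hε
    rw [hFA z hz]
    obtain ⟨V₁, hV₁n, hV₁s, hV₁⟩ :=
      hlsc (f z) _ (Metric.ball_mem_nhds (f z) (show 0 < ε / 4 by linarith))
    obtain ⟨δ₁, hδ₁, hb₁⟩ := Metric.mem_nhds_iff.1 hV₁n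
    obtain ⟨V₀, hV₀n, hV₀s, hV₀⟩ := hlsc (f z) _ (Metric.ball_mem_nhds (f z)
      (show 0 < δ₁ / 4 by linarith))
    obtain ⟨δ₀, hδ₀, hb₀⟩ := Metric.mem_nhdsWithin_iff.1
      ((hf z hz).preimage_mem_nhdsWithin hV₀n)
    obtain ⟨δ₂, hδ₂, hb₂⟩ := Metric.continuousWithinAt_iff.1 (hf z hz) ε hε
    refine ⟨min (min (δ₀ / 6) δ₂) (min (δ₁ / 4) (ε / 4)), by positivity, fun {w} hw => ?_⟩
    simp only [lt_min_iff] at hw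
    obtain ⟨⟨hw0, hw2⟩, hw1, hwε⟩ := hw
    by_cases hwA : w ∈ A
    · rw [hFA w hwA]
      exact hb₂ hwA hw2
    obtain ⟨S, hS, hwS⟩ := exists_whitneySq hcl hwA
    have hp : (0 : ℝ) < 2 ^ S.1 := by positivity
    have hside : 1 / 2 ^ S.1 < dist w z := by
      have := hS.1 w hwS z hz
      rwa [div_lt_iff₀ hp, mul_comm]
    have hside0 : 0 < 1 / (2 : ℝ) ^ S.1 := by positivity
    have hdist : ∀ p ∈ dySq S, dist p w ≤ 1 / 2 ^ S.1 := fun p hp' => by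
      rw [le_div_iff₀ hp, mul_comm]; exact dist_le_of_mem_dySq hp' hwS
    have hVnear : ∀ p, dist p z < 3 * dist w z → V p ∈ V₀ := by
      intro p hpz
      rw [hV]
      have h1 := hnear p z hz
      have h2 := dist_triangle (near p) p z
      rw [dist_comm (near p) p] at h2
      exact hb₀ ⟨Metric.mem_ball.2 (by linarith), hnearA p⟩
    have hV₀c : ∀ v ∈ V₀, dist v (f z) < δ₁ / 4 := fun v hv => hV₀s hv
    have hV₁c : ∀ v ∈ V₁, dist v (f z) < ε / 4 := fun v hv => hV₁s hv
    have hskel : ∀ p ∈ sqBd, skelMap A c V (sqPt S p) ∈ V₁ := by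
      intro p hp'
      have hq := sqPt_mem (S := S) hp'.1 hp'.2.1
      obtain ⟨j, hj⟩ : ∃ j, j = sqLevel A (sqPt S p) + 1 := ⟨_, rfl⟩
      have hle := hS.le_sqLevel hq
      rw [skelMap, ← hj]
      rw [← hj] at hle
      obtain ⟨p₁, p₂, h1, h2, t, ht, h⟩ := gridMap_eq_path (c := c) (V := V) (j := j) (sqPt S p)
      have hjp : (0 : ℝ) < 2 ^ j := by positivity
      have hjS : (1 : ℝ) / 2 ^ j ≤ 1 / 2 ^ S.1 :=
        one_div_le_one_div_of_le hp (pow_le_pow_right₀ (by norm_num) hle)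
      rw [mul_comm, ← le_div_iff₀ hjp] at h1 h2
      have hqz := dist_triangle (sqPt S p) w z
      have hqw := hdist _ hq
      have m1 : V p₁ ∈ V₀ := hVnear _ (by
        have := dist_triangle p₁ (sqPt S p) z; linarith)
      have m2 : V p₂ ∈ V₀ := hVnear _ (by
        have := dist_triangle p₂ (sqPt S p) z; linarith)
      rw [h]
      refine hb₁ (Metric.mem_ball.2 ?_)
      have h3 := hcs j _ _ V₀ (δ₁ / 2) inferInstance m1 m2 (fun v hv => by
        have := dist_triangle_right v (V p₁) (f z)
        have := hV₀c v hv
        have := hV₀c _ m1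
        linarith) t ht
      have h4 := dist_triangle (c j (V p₁) (V p₂) t) (V p₁) (f z)
      have h5 := hV₀c _ m1
      linarith
    have hcorner : V (sqPt S (0, 0)) ∈ V₁ := by
      have hq : sqPt S (0, 0) ∈ dySq S := sqPt_mem (by simp) (by simp)
      have hqz := dist_triangle (sqPt S (0, 0)) w z
      have hqw := hdist _ hq
      have := hV₀c _ (hVnear (sqPt S (0, 0)) (by linarith))
      exact hb₁ (Metric.mem_ball.2 (by linarith))
    rw [hFS S hS w hwS]
    have h3 := hΦs S hS V₁ (ε / 2) hV₁ hskel (fun v hv => by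
      have := dist_triangle_right v (V (sqPt S (0, 0))) (f z)
      have := hV₁c v hv
      have := hV₁c _ hcorner
      linarith) _ (sqLoc_mem hwS)
    have h4 := dist_triangle (Φ S hS (sqLoc S w)) (V (sqPt S (0, 0))) (f z)
    have h5 := hV₁c _ hcorner
    linarith

/-- Given a noncrossing family of pairs of intervals on each of which a path `f` is constant with
the same value on both members of a pair, `f` extends from the diagonal to the plane, being constant
on the two strips attached to each pair. -/
theorem exists_lamination_extension [SimplyConnectedSpace X] (hlsc : LocSimplyConnected X)
    {ι : Type*} {f : ℝ → X} (hf : Continuous f) {u v u' v' : ι → ℝ} {c : ι → X}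
    (h0 : ∀ i, 0 ≤ u i) (h1 : ∀ i, u i ≤ v i) (h3 : ∀ i, u' i ≤ v' i)
    (h4 : ∀ i, v' i ≤ 1)
    (hc : ∀ i, ∀ s ∈ Set.Icc (u i) (v i), f s = c i)
    (hc' : ∀ i, ∀ s ∈ Set.Icc (u' i) (v' i), f s = c i)
    (hnc : ∀ i j, i ≠ j → v' i ≤ u j ∨ v' j ≤ u i ∨ (v i ≤ u j ∧ v' j ≤ u' i) ∨
      (v j ≤ u i ∧ v' i ≤ u' j)) :
    ∃ F : ℝ × ℝ → X, Continuous F ∧ (∀ s ∈ Set.Icc (0 : ℝ) 1, F (s, s) = f s) ∧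
      (∀ i a b, u i ≤ a → a ≤ v i → a ≤ b → b ≤ v' i → F (a, b) = c i) ∧
      ∀ i a b, u' i ≤ b → b ≤ v' i → u i ≤ a → a ≤ b → F (a, b) = c i := by
  let S₁ : Set (ℝ × ℝ) := {p | ∃ i, u i ≤ p.1 ∧ p.1 ≤ v i ∧ p.1 ≤ p.2 ∧ p.2 ≤ v' i}
  let S₂ : Set (ℝ × ℝ) := {p | ∃ i, u' i ≤ p.2 ∧ p.2 ≤ v' i ∧ u i ≤ p.1 ∧ p.1 ≤ p.2}
  let Δ : Set (ℝ × ℝ) := (fun s => (s, s)) '' Set.Icc (0 : ℝ) 1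
  have hΔc : IsCompact Δ := isCompact_Icc.image (by fun_prop)
  have hbox : IsCompact (Set.Icc (0 : ℝ) 1 ×ˢ Set.Icc (0 : ℝ) 1) := isCompact_Icc.prod isCompact_Icc
  have hS₁b : S₁ ⊆ Set.Icc (0 : ℝ) 1 ×ˢ Set.Icc (0 : ℝ) 1 := by
    rintro p ⟨i, p1, p2, p3, p4⟩
    have := h0 i; have := h4 i
    exact ⟨⟨by linarith, by linarith⟩, by linarith, by linarith⟩
  have hS₂b : S₂ ⊆ Set.Icc (0 : ℝ) 1 ×ˢ Set.Icc (0 : ℝ) 1 := by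
    rintro p ⟨i, p1, p2, p3, p4⟩
    have := h0 i; have := h4 i
    exact ⟨⟨by linarith, by linarith⟩, by linarith, by linarith⟩
  have hS₁c : IsCompact (closure S₁) :=
    hbox.of_isClosed_subset isClosed_closure (closure_minimal hS₁b hbox.isClosed)
  have hS₂c : IsCompact (closure S₂) :=
    hbox.of_isClosed_subset isClosed_closure (closure_minimal hS₂b hbox.isClosed)
  have key : ∀ p ∈ closure S₁, p ∈ closure S₂ → f p.1 = f p.2 := by
    rintro ⟨a, b⟩ hp₁ hp₂
    have hle : a ≤ b := by
      have : closure S₁ ⊆ {p | p.1 ≤ p.2} :=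
        closure_minimal (fun p ⟨i, _, _, h, _⟩ => h) (isClosed_le (by fun_prop) (by fun_prop))
      exact this hp₁
    rcases hle.eq_or_lt with h | hlt
    · simp [h]
    by_contra hne
    have hη := dist_pos.2 hne
    simp only at hη
    obtain ⟨δ₁, hδ₁, hd₁⟩ := Metric.continuous_iff.1 hf a (dist (f a) (f b) / 4) (by linarith)
    obtain ⟨δ₂, hδ₂, hd₂⟩ := Metric.continuous_iff.1 hf b (dist (f a) (f b) / 4) (by linarith)
    obtain ⟨δ, hδ, hδ'⟩ := exists_between
      (show 0 < min (min δ₁ δ₂) ((b - a) / 4) from lt_min (lt_min hδ₁ hδ₂) (by linarith))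
    simp only [lt_min_iff] at hδ'
    obtain ⟨⟨g1, g2⟩, g3⟩ := hδ'
    obtain ⟨⟨a₁, b₁⟩, ⟨i, i1, i2, i3, i4⟩, hi⟩ := Metric.mem_closure_iff.1 hp₁ δ hδ
    obtain ⟨⟨a₂, b₂⟩, ⟨j, j1, j2, j3, j4⟩, hj⟩ := Metric.mem_closure_iff.1 hp₂ δ hδ
    simp only [Prod.dist_eq, max_lt_iff, Real.dist_eq, abs_lt] at hi hj i1 i2 i3 i4 j1 j2 j3 j4
    obtain ⟨⟨x1, x2⟩, x3, x4⟩ := hi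
    obtain ⟨⟨y1, y2⟩, y3, y4⟩ := hj
    have na : ∀ x, a - δ < x → x < a + δ → dist (f x) (f a) < dist (f a) (f b) / 4 :=
      fun x h h' => hd₁ x (by rw [Real.dist_eq, abs_lt]; constructor <;> linarith)
    have nb : ∀ x, b - δ < x → x < b + δ → dist (f x) (f b) < dist (f a) (f b) / 4 :=
      fun x h h' => hd₂ x (by rw [Real.dist_eq, abs_lt]; constructor <;> linarith)
    have contra : ∀ x y, a - δ < x → x < a + δ → b - δ < y → y < b + δ → f x = f y → False := by
      intro x y q1 q2 q3 q4 h
      have e1 := na x q1 q2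
      have e2 := nb y q3 q4
      rw [← h] at e2
      have := dist_triangle_left (f a) (f b) (f x)
      linarith
    have ca₁ := hc i a₁ ⟨i1, i2⟩
    have cb₂ := hc' j b₂ ⟨j1, j2⟩
    by_cases hij : i = j
    · subst hij
      exact contra a₁ b₂ (by linarith) (by linarith) (by linarith) (by linarith)
        (ca₁.trans cb₂.symm)
    rcases hnc i j hij with h | h | ⟨h, h'⟩ | ⟨h, h'⟩
    · linarith
    · linarith
    · exact contra (u j) b₂ (by linarith) (by linarith) (by linarith) (by linarith)
        ((hc j _ ⟨le_rfl, h1 j⟩).trans cb₂.symm)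
    · exact contra a₁ (v' i) (by linarith) (by linarith) (by linarith) (by linarith)
        (ca₁.trans (hc' i _ ⟨h3 i, le_rfl⟩).symm)
  let g : ℝ × ℝ → X := fun p => if p ∈ closure S₁ ∪ Δ then f p.1 else f p.2
  have hg₁ : ∀ p ∈ closure S₁ ∪ Δ, g p = f p.1 := fun p hp => if_pos hp
  have hg₂ : ∀ p ∈ closure S₂ ∪ Δ, g p = f p.2 := by
    intro p hp
    by_cases hp' : p ∈ closure S₁ ∪ Δ
    · rw [hg₁ p hp']
      by_cases hΔ : p ∈ Δ
      · obtain ⟨s, _, rfl⟩ := hΔ; rfl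
      · exact key p (hp'.resolve_right hΔ) (hp.resolve_right hΔ)
    · exact if_neg hp'
  have hgc : ContinuousOn g ((closure S₁ ∪ Δ) ∪ (closure S₂ ∪ Δ)) := by
    refine ContinuousOn.union_of_isClosed ?_ ?_ (hS₁c.union hΔc).isClosed (hS₂c.union hΔc).isClosed
    · exact ContinuousOn.congr (f := fun p : ℝ × ℝ => f p.1) (by fun_prop) hg₁
    · exact ContinuousOn.congr (f := fun p : ℝ × ℝ => f p.2) (by fun_prop) hg₂
  have hd : ∀ s ∈ Set.Icc (0 : ℝ) 1, (s, s) ∈ Δ := fun s hs => ⟨s, hs, rfl⟩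
  obtain ⟨F, hF, hFg⟩ := exists_planar_extension hlsc ((hS₁c.union hΔc).union (hS₂c.union hΔc))
    ⟨(0, 0), Or.inl (Or.inr (hd 0 (by simp)))⟩ hgc
  refine ⟨F, hF, fun s hs => ?_, fun i a b q1 q2 q3 q4 => ?_, fun i a b q1 q2 q3 q4 => ?_⟩
  · rw [hFg _ (Or.inl (Or.inr (hd s hs))), hg₁ _ (Or.inr (hd s hs))]
  · have : (a, b) ∈ closure S₁ ∪ Δ := Or.inl (subset_closure ⟨i, q1, q2, q3, q4⟩)
    rw [hFg _ (Or.inl this), hg₁ _ this]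
    exact hc i a ⟨q1, q2⟩
  · have : (a, b) ∈ closure S₂ ∪ Δ := Or.inl (subset_closure ⟨i, q1, q2, q3, q4⟩)
    rw [hFg _ (Or.inr this), hg₂ _ this]
    exact hc' i b ⟨q1, q2⟩

/-- The letters of a word representing the trivial element of a free group have a noncrossing
matching into mutually inverse pairs. -/
theorem exists_noncrossing_matching {α β : Type*} (τ : α → ℝ) (lab : α → β × Bool) (n : ℕ) :
    ∀ L : List α, L.length = n → L.Pairwise (fun a b => τ a < τ b) →
      FreeGroup.mk (L.map lab) = 1 → ∃ μ : α → α,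
        (∀ a ∈ L, μ a ∈ L ∧ μ (μ a) = a ∧ (lab (μ a)).1 = (lab a).1 ∧
          (lab (μ a)).2 = !(lab a).2) ∧
        ∀ a ∈ L, ∀ b ∈ L, τ a < τ b → τ b < τ (μ a) → τ a < τ (μ b) ∧ τ (μ b) < τ (μ a) := by
  induction n using Nat.strong_induction_on with
  | _ n ih =>
  intro L hlen hsort hL
  have hred : FreeGroup.Red (L.map lab) [] := by
    obtain ⟨w, h1, h2⟩ := FreeGroup.Red.exact.1 (hL.trans FreeGroup.one_eq_mk)
    rwa [FreeGroup.Red.nil_iff.1 h2] at h1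
  rcases Relation.ReflTransGen.cases_head hred with h | ⟨w, hstep, -⟩
  · have : L = [] := List.map_eq_nil_iff.1 h
    subst this
    exact ⟨id, by simp, by simp⟩
  have hw : FreeGroup.mk w = 1 := by
    rw [← hL]; exact (Quot.sound hstep).symm
  generalize hW : L.map lab = W at hstep
  cases hstep with
  | @not l₁ l₂ x b =>
  obtain ⟨L₁, R, rfl, hm1, hm2⟩ := List.map_eq_append_iff.1 hW
  obtain ⟨a, R', rfl, ha, hm3⟩ := List.map_eq_cons_iff.1 hm2
  obtain ⟨a', L₂, rfl, ha', hm4⟩ := List.map_eq_cons_iff.1 hm3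
  rw [← hm1, ← hm4, ← List.map_append] at hw
  simp only [List.pairwise_append, List.pairwise_cons, List.mem_cons, forall_eq_or_imp] at hsort
  obtain ⟨s1, ⟨⟨s2, s3⟩, s4, s5⟩, s6⟩ := hsort
  obtain ⟨μ, hμ, hnc⟩ := ih (L₁ ++ L₂).length (by simp at hlen ⊢; omega) (L₁ ++ L₂) rfl
    (List.pairwise_append.2 ⟨s1, s5, fun y hy z hz => (s6 y hy).2.2 z hz⟩) hw
  have hlt : ∀ y ∈ L₁ ++ L₂, (τ y < τ a ∧ τ y < τ a') ∨ (τ a < τ y ∧ τ a' < τ y) := by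
    intro y hy
    rcases List.mem_append.1 hy with h | h
    · exact Or.inl ⟨(s6 y h).1, (s6 y h).2.1⟩
    · exact Or.inr ⟨s3 y h, s4 y h⟩
  have hna : ∀ y ∈ L₁ ++ L₂, y ≠ a := by
    rintro y hy rfl; rcases hlt _ hy with h | h <;> exact lt_irrefl _ h.1
  have hna' : ∀ y ∈ L₁ ++ L₂, y ≠ a' := by
    rintro y hy rfl; rcases hlt _ hy with h | h <;> exact lt_irrefl _ h.2
  have haa' : a' ≠ a := by rintro rfl; exact lt_irrefl _ s2
  let ν : α → α := fun y => if y = a then a' else if y = a' then a else μ y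
  have νa : ν a = a' := by simp [ν]
  have νa' : ν a' = a := by simp [ν, haa']
  have νo : ∀ y ∈ L₁ ++ L₂, ν y = μ y := fun y hy => by simp [ν, hna y hy, hna' y hy]
  have hmem : ∀ y, y ∈ L₁ ++ a :: a' :: L₂ ↔ y = a ∨ y = a' ∨ y ∈ L₁ ++ L₂ := by
    intro y; simp only [List.mem_append, List.mem_cons]; tauto
  refine ⟨ν, ?_, ?_⟩
  · intro y hy
    rcases (hmem y).1 hy with rfl | rfl | hy
    · rw [νa, νa', ha, ha']; exact ⟨by simp, rfl, rfl, rfl⟩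
    · rw [νa', νa, ha, ha']; exact ⟨by simp, rfl, rfl, by simp⟩
    · rw [νo y hy, νo _ (hμ y hy).1]
      exact ⟨(hmem _).2 (Or.inr (Or.inr (hμ y hy).1)), (hμ y hy).2⟩
  · intro y hy z hz
    rcases (hmem y).1 hy with rfl | rfl | hy
    · rw [νa]
      intro h1 h2
      rcases (hmem z).1 hz with rfl | rfl | hz
      · exact absurd h1 (lt_irrefl _)
      · exact absurd h2 (lt_irrefl _)
      · rcases hlt z hz with h | h <;> linarith
    · rw [νa']
      intro h1 h2
      linarith
    · rw [νo y hy]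
      have hlty := hlt y hy
      have hltμ := hlt _ (hμ y hy).1
      intro h1 h2
      rcases (hmem z).1 hz with rfl | rfl | hz
      · rw [νa]
        constructor
        · linarith
        · rcases hltμ with h | h <;> linarith
      · rw [νa']
        constructor
        · rcases hlty with h | h <;> linarith
        · linarith
      · rw [νo z hz]
        exact hnc y hy z hz h1 h2

/-- The signed number of crossings of `-1` by the short arc between two near points of the
circle. -/
def crossing (u v : Circle) : ℤ :=
  if (u : ℂ).re < 0 ∧ (v : ℂ).re < 0 ∧ 0 ≤ (u : ℂ).im ∧ (v : ℂ).im < 0 then 1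
  else if (u : ℂ).re < 0 ∧ (v : ℂ).re < 0 ∧ (u : ℂ).im < 0 ∧ 0 ≤ (v : ℂ).im then -1 else 0

theorem re_neg_of_crossing_ne_zero {u v : Circle} (h : crossing u v ≠ 0) :
    (u : ℂ).re < 0 ∧ (v : ℂ).re < 0 := by
  unfold crossing at h
  split_ifs at h with h1 h2
  · exact ⟨h1.1, h1.2.1⟩
  · exact ⟨h2.1, h2.2.1⟩
  · exact absurd rfl h

theorem re_lt_of_crossing_ne_zero {u v : Circle} (h : crossing u v ≠ 0) (hd : dist u v < 1 / 2) :
    (u : ℂ).re < -(1 / 2) ∧ (v : ℂ).re < -(1 / 2) := by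
  have him := (abs_im_sub_le_dist u v).trans_lt hd
  rw [abs_lt] at him
  have hu := Circle.normSq_coe u
  have hv := Circle.normSq_coe v
  rw [Complex.normSq_apply] at hu hv
  have hre := re_neg_of_crossing_ne_zero h
  have key : ∀ a b : ℝ, a < 0 → a * a + b * b = 1 → -(1 / 2) < b → b < 1 / 2 → a < -(1 / 2) := by
    intro a b ha hab h1 h2
    by_contra! hlt
    nlinarith
  unfold crossing at h
  split_ifs at h with h1 h2
  · exact ⟨key _ _ hre.1 hu (by linarith [h1.2.2.1, h1.2.2.2]) (by linarith [h1.2.2.1, h1.2.2.2]),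
      key _ _ hre.2 hv (by linarith [h1.2.2.1, h1.2.2.2]) (by linarith [h1.2.2.1, h1.2.2.2])⟩
  · exact ⟨key _ _ hre.1 hu (by linarith [h2.2.2.1, h2.2.2.2]) (by linarith [h2.2.2.1, h2.2.2.2]),
      key _ _ hre.2 hv (by linarith [h2.2.2.1, h2.2.2.2]) (by linarith [h2.2.2.1, h2.2.2.2])⟩
  · exact absurd rfl h

theorem crossing_add_of_neg {u v w : Circle} (hu : (u : ℂ).re < 0) (hv : (v : ℂ).re < 0)
    (hw : (w : ℂ).re < 0) : crossing u v + crossing v w = crossing u w := by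
  rcases le_or_gt 0 (u : ℂ).im with h1 | h1 <;> rcases le_or_gt 0 (v : ℂ).im with h2 | h2 <;>
    rcases le_or_gt 0 (w : ℂ).im with h3 | h3 <;>
    simp [crossing, hu, hv, hw, h1, h2, h3, not_lt.2, not_le.2]

/-- The letter read off from a pair of near points of the Hawaiian earring. -/
def letterAt (s : Finset ℕ+) (p q : HEset) : FreeGroup ℕ+ :=
  if h : ∃ n ∈ s, crossing (heCoord n p) (heCoord n q) ≠ 0 then
    FreeGroup.of h.choose ^ crossing (heCoord h.choose p) (heCoord h.choose q)
  else 1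

theorem letterAt_of_forall_ne {s : Finset ℕ+} {p q : HEset} {n : ℕ+} (hn : n ∈ s)
    (h : ∀ m, m ≠ n → crossing (heCoord m p) (heCoord m q) = 0) :
    letterAt s p q = FreeGroup.of n ^ crossing (heCoord n p) (heCoord n q) := by
  unfold letterAt
  split_ifs with hex
  · have : hex.choose = n := by
      by_contra hne
      exact hex.choose_spec.2 (h _ hne)
    rw [this]
  · push Not at hex
    rw [hex n hn, zpow_zero]

theorem letterAt_of_forall {s : Finset ℕ+} {p q : HEset}
    (h : ∀ m ∈ s, crossing (heCoord m p) (heCoord m q) = 0) : letterAt s p q = 1 := by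
  unfold letterAt
  rw [dif_neg]
  push Not
  exact h

theorem crossing_one_left (v : Circle) : crossing 1 v = 0 := by simp [crossing, not_lt.2]

theorem crossing_self (v : Circle) : crossing v v = 0 := by
  by_contra h
  unfold crossing at h
  split_ifs at h with h1 h2
  · linarith [h1.2.2.1, h1.2.2.2]
  · linarith [h2.2.2.1, h2.2.2.2]
  · exact h rfl

theorem letterAt_self (s : Finset ℕ+) (p : HEset) : letterAt s p p = 1 :=
  letterAt_of_forall fun _ _ => crossing_self _

theorem ne_one_of_re_neg {u : Circle} (h : (u : ℂ).re < 0) : u ≠ 1 := by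
  rintro rfl; simp at h; linarith

theorem crossing_eq_zero_of_re_neg {n : ℕ+} {p q : HEset} (hp : (heCoord n p : ℂ).re < 0) (m : ℕ+)
    (hm : m ≠ n) : crossing (heCoord m p) (heCoord m q) = 0 := by
  rw [heCoord_eq_one_of_ne (ne_one_of_re_neg hp) hm, crossing_one_left]

theorem letterAt_of_crossing {s : Finset ℕ+} {p q : HEset} {n : ℕ+} (hn : n ∈ s)
    (h : crossing (heCoord n p) (heCoord n q) ≠ 0) :
    letterAt s p q = FreeGroup.of n ^ crossing (heCoord n p) (heCoord n q) :=
  letterAt_of_forall_ne hn fun m hm =>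
    crossing_eq_zero_of_re_neg (re_neg_of_crossing_ne_zero h).1 m hm

theorem letterAt_mul {s : Finset ℕ+} {p q r : HEset}
    (hpq : ∀ n ∈ s, dist (heCoord n p) (heCoord n q) < 1 / 2)
    (hqr : ∀ n ∈ s, dist (heCoord n q) (heCoord n r) < 1 / 2)
    (hpr : ∀ n ∈ s, dist (heCoord n p) (heCoord n r) < 1 / 2) :
    letterAt s p q * letterAt s q r = letterAt s p r := by
  by_cases h : ∃ n ∈ s, (heCoord n p : ℂ).re < 0 ∧ (heCoord n q : ℂ).re < 0 ∧
      (heCoord n r : ℂ).re < 0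
  · obtain ⟨n, hn, hp, hq, hr⟩ := h
    rw [letterAt_of_forall_ne hn (crossing_eq_zero_of_re_neg hp),
      letterAt_of_forall_ne hn (crossing_eq_zero_of_re_neg hq),
      letterAt_of_forall_ne hn (crossing_eq_zero_of_re_neg hp), ← zpow_add,
      crossing_add_of_neg hp hq hr]
  · push Not at h
    have third : ∀ {a b : Circle}, dist a b < 1 / 2 → (a : ℂ).re < -(1 / 2) → (b : ℂ).re < 0 := by
      intro a b hab ha
      have := (abs_re_sub_le_dist a b).trans_lt hab
      rw [abs_lt] at this
      linarith
    rw [letterAt_of_forall, letterAt_of_forall, letterAt_of_forall, one_mul]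
    · intro m hm
      by_contra hc
      have h1 := re_lt_of_crossing_ne_zero hc (hpr m hm)
      linarith [h m hm (by linarith [h1.1]) (third (hpq m hm) h1.1)]
    · intro m hm
      by_contra hc
      have h1 := re_lt_of_crossing_ne_zero hc (hqr m hm)
      linarith [h m hm (third (by rw [dist_comm]; exact hpq m hm) h1.1) (by linarith [h1.1])]
    · intro m hm
      by_contra hc
      have h1 := re_lt_of_crossing_ne_zero hc (hpq m hm)
      linarith [h m hm (by linarith [h1.1]) (by linarith [h1.2]), third (hqr m hm) h1.2]

theorem prod_row_eq {G Y : Type*} [Group G] (c : Y → Y → G) (r r' : ℕ → Y) (M : ℕ)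
    (h₁ : ∀ j < M, c (r j) (r (j + 1)) * c (r (j + 1)) (r' (j + 1)) = c (r j) (r' (j + 1)))
    (h₂ : ∀ j < M, c (r j) (r' j) * c (r' j) (r' (j + 1)) = c (r j) (r' (j + 1))) :
    ((List.range M).map fun j => c (r j) (r (j + 1))).prod * c (r M) (r' M) =
      c (r 0) (r' 0) * ((List.range M).map fun j => c (r' j) (r' (j + 1))).prod := by
  induction M with
  | zero => simp
  | succ M ih =>
    rw [List.prod_range_succ, List.prod_range_succ, mul_assoc, h₁ M (by omega), ← h₂ M (by omega),
      ← mul_assoc, ih (fun j hj => h₁ j (by omega)) (fun j hj => h₂ j (by omega)), mul_assoc]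

/-- A null-homotopic loop in the Hawaiian earring reads off trivial words. -/
theorem exists_prod_letterAt_eq_one {H : unitInterval × unitInterval → HEset} (hH : Continuous H)
    (h₁ : ∀ s, H (1, s) = h0) (hl : ∀ t, H (t, 0) = h0) (hr : ∀ t, H (t, 1) = h0)
    (s : Finset ℕ+) : ∃ K : ℕ, ∀ M : ℕ, K ≤ M → 0 < M → ((List.range M).map fun j : ℕ =>
      letterAt s (H (0, Set.projIcc 0 1 zero_le_one ((j : ℝ) / M)))
        (H (0, Set.projIcc 0 1 zero_le_one (((j + 1 : ℕ) : ℝ) / M)))).prod = 1 := by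
  have huc : ∀ n : ℕ+, ∃ δ > 0, ∀ p q : unitInterval × unitInterval, dist p q < δ →
      dist (heCoord n (H p)) (heCoord n (H q)) < 1 / 2 := by
    intro n
    have := CompactSpace.uniformContinuous_of_continuous ((continuous_heCoord n).comp hH)
    obtain ⟨δ, hδ, h⟩ := Metric.uniformContinuous_iff.1 this (1 / 2) (by norm_num)
    exact ⟨δ, hδ, fun p q => @h p q⟩
  choose δ hδ hd using huc
  obtain ⟨δ₀, hδ₀, hmin⟩ : ∃ δ₀ > 0, ∀ n ∈ s, δ₀ ≤ δ n := by
    refine s.induction_on ⟨1, one_pos, by simp⟩ ?_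
    rintro a t - ⟨e, he, h⟩
    refine ⟨min e (δ a), lt_min he (hδ a), ?_⟩
    intro n hn
    rcases Finset.mem_insert.1 hn with rfl | hn
    · exact min_le_right _ _
    · exact (min_le_left _ _).trans (h n hn)
  obtain ⟨K, hK⟩ := exists_nat_gt (1 / δ₀)
  refine ⟨K, fun M hKM hM => ?_⟩
  have hMp : (0 : ℝ) < M := by exact_mod_cast hM
  have hMδ : 1 / (M : ℝ) < δ₀ := by
    rw [div_lt_iff₀ hMp]
    rw [div_lt_iff₀ hδ₀] at hK
    have : (K : ℝ) ≤ M := by exact_mod_cast hKM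
    nlinarith
  let pr : ℕ → unitInterval := fun j => Set.projIcc 0 1 zero_le_one ((j : ℝ) / M)
  have hpr : ∀ j, dist (pr j) (pr (j + 1)) ≤ 1 / M := by
    intro j
    have := (LipschitzWith.projIcc (zero_le_one (α := ℝ))).dist_le_mul ((j : ℝ) / M)
      (((j + 1 : ℕ) : ℝ) / M)
    simp only [NNReal.coe_one, one_mul] at this
    refine this.trans (le_of_eq ?_)
    rw [Real.dist_eq, ← sub_div, abs_div, abs_of_pos hMp]
    simp
  have hM0 : pr 0 = 0 := by simp [pr]
  have hMM : pr M = 1 := by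
    have : (M : ℝ) / M = 1 := div_self hMp.ne'
    simp [pr, this]
  have close : ∀ i i' j j', dist (pr i) (pr i') ≤ 1 / M → dist (pr j) (pr j') ≤ 1 / M →
      ∀ n ∈ s, dist (heCoord n (H (pr i, pr j))) (heCoord n (H (pr i', pr j'))) < 1 / 2 := by
    intro i i' j j' h1 h2 n hn
    refine hd n _ _ ?_
    rw [Prod.dist_eq]
    exact (max_le h1 h2).trans_lt (hMδ.trans_le (hmin n hn))
  have h0M : ∀ i, dist (pr i) (pr i) ≤ 1 / M := fun i => by rw [dist_self]; positivity
  have step : ∀ i,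
      ((List.range M).map fun j => letterAt s (H (pr i, pr j)) (H (pr i, pr (j + 1)))).prod =
      ((List.range M).map fun j =>
        letterAt s (H (pr (i + 1), pr j)) (H (pr (i + 1), pr (j + 1)))).prod := by
    intro i
    have := prod_row_eq (letterAt s) (fun j => H (pr i, pr j)) (fun j => H (pr (i + 1), pr j)) M
      (fun j _ => letterAt_mul (close _ _ _ _ (h0M _) (hpr _)) (close _ _ _ _ (hpr _) (h0M _))
        (close _ _ _ _ (hpr _) (hpr _)))
      (fun j _ => letterAt_mul (close _ _ _ _ (hpr _) (h0M _)) (close _ _ _ _ (h0M _) (hpr _))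
        (close _ _ _ _ (hpr _) (hpr _)))
    simp only [hM0, hMM, hl, hr, letterAt_self, one_mul, mul_one] at this
    exact this
  have all : ∀ i,
      ((List.range M).map fun j => letterAt s (H (pr 0, pr j)) (H (pr 0, pr (j + 1)))).prod =
      ((List.range M).map fun j => letterAt s (H (pr i, pr j)) (H (pr i, pr (j + 1)))).prod := by
    intro i
    induction i with
    | zero => rfl
    | succ i ih => rw [ih, step]
  have := all M
  simp only [hM0, hMM, h₁, letterAt_self] at this
  rw [show ((List.range M).map fun _ => (1 : FreeGroup ℕ+)).prod = 1 by simp] at this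
  exact this

/-- The point of the circle with argument `2πt`. -/
def turn (t : ℝ) : Circle := Circle.exp (2 * Real.pi * t)

theorem continuous_turn : Continuous turn := by
  unfold turn
  fun_prop

theorem turn_eq_one_iff {t : ℝ} : turn t = 1 ↔ ∃ k : ℤ, t = k := by
  rw [turn, Circle.exp_eq_one]
  have hpi := Real.pi_pos
  constructor
  · rintro ⟨k, hk⟩
    exact ⟨k, by apply mul_left_cancel₀ (by positivity : (2 * Real.pi) ≠ 0); linarith⟩
  · rintro ⟨k, rfl⟩
    exact ⟨k, by ring⟩

theorem turn_add_int (k : ℤ) (t : ℝ) : turn (k + t) = turn t := by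
  have h : turn (k + t) = turn k * turn t := by
    simp only [turn, mul_add, Circle.exp_add]
  rw [h, turn_eq_one_iff.2 ⟨k, rfl⟩, one_mul]

theorem turn_re (t : ℝ) : (turn t : ℂ).re = Real.cos (2 * Real.pi * t) := by
  rw [turn, Circle.coe_exp, Complex.exp_ofReal_mul_I_re]

theorem turn_im (t : ℝ) : (turn t : ℂ).im = Real.sin (2 * Real.pi * t) := by
  rw [turn, Circle.coe_exp, Complex.exp_ofReal_mul_I_im]

theorem turn_neg_re (t : ℝ) : (turn (-t) : ℂ).re = (turn t : ℂ).re := by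
  rw [turn_re, turn_re, mul_neg, Real.cos_neg]

theorem turn_neg_im (t : ℝ) : (turn (-t) : ℂ).im = -(turn t : ℂ).im := by
  rw [turn_im, turn_im, mul_neg, Real.sin_neg]

theorem turn_im_pos {t : ℝ} (h0 : 0 < t) (h1 : t < 1 / 2) : 0 < (turn t : ℂ).im := by
  rw [turn_im]
  have hpi := Real.pi_pos
  exact Real.sin_pos_of_pos_of_lt_pi (by positivity) (by nlinarith)

theorem turn_im_neg {t : ℝ} (h0 : 1 / 2 < t) (h1 : t < 1) : (turn t : ℂ).im < 0 := by
  have h : turn t = turn (-(1 - t)) := by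
    rw [← turn_add_int 1 (-(1 - t))]
    congr 1
    push_cast
    ring
  rw [h, turn_neg_im]
  linarith [turn_im_pos (t := 1 - t) (by linarith) (by linarith)]

theorem turn_re_neg {t : ℝ} (h0 : 1 / 4 < t) (h1 : t < 3 / 4) : (turn t : ℂ).re < 0 := by
  rw [turn_re]
  have hpi := Real.pi_pos
  exact Real.cos_neg_of_pi_div_two_lt_of_lt (by nlinarith) (by nlinarith)

theorem turn_first_half {t : ℝ} (h0 : 0 ≤ t) (h1 : t < 1 / 2) :
    0 ≤ (turn t : ℂ).im ∧ ((turn t : ℂ).re < 0 → 0 < (turn t : ℂ).im) := by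
  rcases h0.eq_or_lt with rfl | h0
  · simp [turn]
  · exact ⟨(turn_im_pos h0 h1).le, fun _ => turn_im_pos h0 h1⟩

theorem turn_second_half {t : ℝ} (h0 : 1 / 2 < t) (h1 : t ≤ 1) :
    (turn t : ℂ).im ≤ 0 ∧ ((turn t : ℂ).re < 0 → (turn t : ℂ).im < 0) := by
  rcases h1.eq_or_lt with rfl | h1
  · rw [turn_eq_one_iff.2 ⟨1, by simp⟩]
    simp
  · exact ⟨(turn_im_neg h0 h1).le, fun _ => turn_im_neg h0 h1⟩

theorem crossing_turn_eq_zero {ε : ℤ} (hε : ε = 1 ∨ ε = -1) {a b : ℝ}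
    (h : (0 ≤ a ∧ a < 1 / 2 ∧ 0 ≤ b ∧ b < 1 / 2) ∨ (1 / 2 < a ∧ a ≤ 1 ∧ 1 / 2 < b ∧ b ≤ 1)) :
    crossing (turn (ε * a)) (turn (ε * b)) = 0 := by
  have key : ∀ u v : Circle,
      (((u : ℂ).re < 0 → 0 ≤ (u : ℂ).im) ∧ ((v : ℂ).re < 0 → 0 ≤ (v : ℂ).im)) ∨
      (((u : ℂ).re < 0 → (u : ℂ).im < 0) ∧ ((v : ℂ).re < 0 → (v : ℂ).im < 0)) →
      crossing u v = 0 := by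
    intro u v huv
    unfold crossing
    split_ifs with h1 h2
    · exfalso
      rcases huv with ⟨h3, h4⟩ | ⟨h3, h4⟩
      · linarith [h4 h1.2.1, h1.2.2.2]
      · linarith [h3 h1.1, h1.2.2.1]
    · exfalso
      rcases huv with ⟨h3, h4⟩ | ⟨h3, h4⟩
      · linarith [h3 h2.1, h2.2.2.1]
      · linarith [h4 h2.2.1, h2.2.2.2]
    · rfl
  apply key
  rcases hε with rfl | rfl <;> rcases h with ⟨h1, h2, h3, h4⟩ | ⟨h1, h2, h3, h4⟩ <;>
    simp only [Int.cast_one, one_mul, Int.cast_neg, neg_mul, turn_neg_re, turn_neg_im]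
  · exact .inl ⟨fun _ => (turn_first_half h1 h2).1, fun _ => (turn_first_half h3 h4).1⟩
  · exact .inr ⟨(turn_second_half h1 h2).2, (turn_second_half h3 h4).2⟩
  · exact .inr ⟨fun h => neg_lt_zero.2 ((turn_first_half h1 h2).2 h),
      fun h => neg_lt_zero.2 ((turn_first_half h3 h4).2 h)⟩
  · exact .inl ⟨fun _ => neg_nonneg.2 (turn_second_half h1 h2).1,
      fun _ => neg_nonneg.2 (turn_second_half h3 h4).1⟩

theorem crossing_turn_of_lt_half {ε : ℤ} (hε : ε = 1 ∨ ε = -1) {a b : ℝ}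
    (h1 : 1 / 4 < a) (h2 : a < 1 / 2) (h3 : 1 / 2 < b) (h4 : b < 3 / 4) :
    crossing (turn (ε * a)) (turn (ε * b)) = ε := by
  have ra := turn_re_neg h1 (by linarith)
  have rb := turn_re_neg (by linarith) h4
  have ia := turn_im_pos (by linarith) h2
  have ib := turn_im_neg h3 (by linarith)
  rcases hε with rfl | rfl <;>
    simp only [Int.cast_one, one_mul, Int.cast_neg, neg_mul, crossing, turn_neg_re, turn_neg_im]
  · rw [if_pos ⟨ra, rb, ia.le, ib⟩]
  · rw [if_neg (fun h => by linarith [h.2.2.1]), if_pos ⟨ra, rb, by linarith, by linarith⟩]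

/-- Crossings of `-1` by a linear turn subdivided into an odd number of steps: only the middle
step crosses. -/
theorem crossing_turn_step {ε : ℤ} (hε : ε = 1 ∨ ε = -1) {R r q : ℕ} (hR : R = 2 * q + 1)
    (hq : 0 < q) (hr : r < R) (k : ℤ) :
    crossing (turn (k + ε * (r / R))) (turn (k + ε * ((r + 1) / R))) = if r = q then ε else 0 := by
  rw [turn_add_int, turn_add_int]
  have hR0 : (0 : ℝ) < R := by exact_mod_cast (by omega : 0 < R)
  have hRq : (R : ℝ) = 2 * q + 1 := by exact_mod_cast hR
  have hq1 : (1 : ℝ) ≤ q := by exact_mod_cast hq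
  split_ifs with h
  · subst h
    apply crossing_turn_of_lt_half hε
    · rw [lt_div_iff₀ hR0]; linarith
    · rw [div_lt_iff₀ hR0]; linarith
    · rw [lt_div_iff₀ hR0]; linarith
    · rw [div_lt_iff₀ hR0]; linarith
  · apply crossing_turn_eq_zero hε
    rcases lt_or_gt_of_ne h with h | h
    · have h' : (r : ℝ) + 1 ≤ q := by exact_mod_cast h
      left
      refine ⟨by positivity, ?_, by positivity, ?_⟩ <;> rw [div_lt_iff₀ hR0] <;> linarith
    · have h' : (q : ℝ) + 1 ≤ r := by exact_mod_cast h
      have h'' : (r : ℝ) + 1 ≤ R := by exact_mod_cast hr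
      right
      refine ⟨?_, ?_, ?_, ?_⟩
      · rw [lt_div_iff₀ hR0]; linarith
      · rw [div_le_iff₀ hR0]; linarith
      · rw [lt_div_iff₀ hR0]; linarith
      · rw [div_le_iff₀ hR0]; linarith

/-- The retraction of the line onto the unit interval. -/
def clamp (t : ℝ) : ℝ := max 0 (min 1 t)

theorem continuous_clamp : Continuous clamp := by
  unfold clamp
  fun_prop

theorem clamp_of_nonpos {t : ℝ} (h : t ≤ 0) : clamp t = 0 :=
  max_eq_left ((min_le_right _ _).trans h)

theorem clamp_of_one_le {t : ℝ} (h : 1 ≤ t) : clamp t = 1 := by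
  simp [clamp, h]

theorem clamp_of_mem {t : ℝ} (h0 : 0 ≤ t) (h1 : t ≤ 1) : clamp t = t := by
  simp [clamp, h0, h1]

theorem clamp_nonneg (t : ℝ) : 0 ≤ clamp t := le_max_left _ _

theorem clamp_le_one (t : ℝ) : clamp t ≤ 1 := max_le zero_le_one (min_le_left _ _)

/-- The piecewise linear function which runs from `w i` to `w (i + 1)` on `[i / m, (i + 1) / m]`. -/
def stair (m : ℕ) (w : ℕ → ℤ) (s : ℝ) : ℝ :=
  w 0 + ∑ i ∈ Finset.range m, ((w (i + 1) - w i : ℤ) : ℝ) * clamp (m * s - i)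

theorem continuous_stair (m : ℕ) (w : ℕ → ℤ) : Continuous (stair m w) := by
  have := continuous_clamp
  unfold stair
  fun_prop

theorem stair_of_mem {m i : ℕ} (w : ℕ → ℤ) {s : ℝ} (hi : i < m) (h0 : (i : ℝ) ≤ m * s)
    (h1 : m * s ≤ i + 1) :
    stair m w s = w i + ((w (i + 1) - w i : ℤ) : ℝ) * (m * s - i) := by
  have hlow : ∀ k ≤ i, ∑ j ∈ Finset.range k, ((w (j + 1) - w j : ℤ) : ℝ) * clamp (m * s - j) =
      w k - w 0 := by
    intro k
    induction k with
    | zero => simp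
    | succ k ih =>
      intro hk
      have hk' : (k : ℝ) + 1 ≤ i := by exact_mod_cast hk
      rw [Finset.sum_range_succ, ih (by omega), clamp_of_one_le (by linarith)]
      push_cast
      ring
  have hhigh : ∀ k, i + 1 ≤ k →
      ∑ j ∈ Finset.range k, ((w (j + 1) - w j : ℤ) : ℝ) * clamp (m * s - j) =
        w i - w 0 + ((w (i + 1) - w i : ℤ) : ℝ) * (m * s - i) := by
    intro k hk
    induction k, hk using Nat.le_induction with
    | base => rw [Finset.sum_range_succ, hlow i le_rfl, clamp_of_mem (by linarith) (by linarith)]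
    | succ k hk ih =>
      have hk' : (i : ℝ) + 1 ≤ k := by exact_mod_cast hk
      rw [Finset.sum_range_succ, ih, clamp_of_nonpos (by linarith)]
      ring
  rw [stair, hhigh m hi]
  ring

theorem exists_step {m : ℕ} (hm : 0 < m) {s : ℝ} (hs : s ∈ Set.Icc (0 : ℝ) 1) :
    ∃ i < m, (i : ℝ) ≤ m * s ∧ m * s ≤ i + 1 := by
  have hm' : (0 : ℝ) < m := by exact_mod_cast hm
  rcases hs.2.eq_or_lt with rfl | h1
  · refine ⟨m - 1, by omega, ?_⟩
    rw [Nat.cast_sub hm]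
    push_cast
    constructor <;> linarith
  · have h0 : 0 ≤ m * s := mul_nonneg hm'.le hs.1
    refine ⟨⌊m * s⌋₊, ?_, Nat.floor_le h0, (Nat.lt_floor_add_one _).le⟩
    rw [Nat.floor_lt h0]
    nlinarith

theorem exists_stair_approximation {l : ℝ → ℝ} (hl : Continuous l) :
    ∃ (e : ℕ) (w : ℕ → ℤ), (∀ i < 3 ^ e, w (i + 1) = w i ∨ w (i + 1) = w i + 1 ∨
        w (i + 1) = w i - 1) ∧
      (∀ i < 3 ^ e, w (i + 1) ≠ w i → ∀ s : ℝ, (i : ℝ) ≤ (3 ^ e : ℕ) * s → (3 ^ e : ℕ) * s ≤ i + 1 →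
        ∀ k : ℤ, l s ≠ k) ∧
      ∀ s ∈ Set.Icc (0 : ℝ) 1, ∀ k : ℤ, l s = k → stair (3 ^ e) w s = k := by
  have huc := (isCompact_Icc (a := (0 : ℝ)) (b := 1)).uniformContinuousOn_of_continuous
    hl.continuousOn
  rw [Metric.uniformContinuousOn_iff] at huc
  obtain ⟨δ, hδ, huc⟩ := huc (1 / 4) (by norm_num)
  obtain ⟨e, he⟩ := exists_pow_lt_of_lt_one hδ (by norm_num : (1 / 3 : ℝ) < 1)
  set m : ℕ := 3 ^ e with hm
  have hm0 : 0 < m := by positivity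
  have hm0' : (0 : ℝ) < m := by exact_mod_cast hm0
  have hmδ : 1 < m * δ := by
    have : (1 / 3 : ℝ) ^ e = 1 / m := by rw [hm]; push_cast; rw [div_pow, one_pow]
    rw [this, div_lt_iff₀ hm0'] at he
    linarith
  have hosc : ∀ i < m, ∀ s t : ℝ, (i : ℝ) ≤ m * s → m * s ≤ i + 1 → (i : ℝ) ≤ m * t →
      m * t ≤ i + 1 → |l s - l t| < 1 / 4 := by
    intro i hi s t h1 h2 h3 h4
    have hi' : (i : ℝ) + 1 ≤ m := by exact_mod_cast hi
    have hi0 : (0 : ℝ) ≤ i := Nat.cast_nonneg i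
    have hmem : ∀ r : ℝ, (i : ℝ) ≤ m * r → m * r ≤ i + 1 → r ∈ Set.Icc (0 : ℝ) 1 :=
      fun r h h' => ⟨by nlinarith, by nlinarith⟩
    refine huc s (hmem s h1 h2) t (hmem t h3 h4) ?_
    rw [Real.dist_eq, abs_lt]
    constructor <;> nlinarith
  let w : ℕ → ℤ := fun i => round (l (i / m))
  have hround : ∀ (r : ℝ) (k : ℤ), |r - k| < 1 / 4 → round r = k := by
    intro r k h
    have h2 := abs_sub_round r
    rw [abs_lt] at h
    rw [abs_le] at h2
    have h3 : ((round r : ℤ) : ℝ) < ((k + 1 : ℤ) : ℝ) := by push_cast; linarith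
    have h4 : ((k - 1 : ℤ) : ℝ) < ((round r : ℤ) : ℝ) := by push_cast; linarith
    have h3' := Int.cast_lt.1 h3
    have h4' := Int.cast_lt.1 h4
    omega
  have hml : ∀ i : ℕ, (m : ℝ) * (i / m) = i := fun i => by field_simp
  have hint : ∀ i < m, ∀ s : ℝ, (i : ℝ) ≤ m * s → m * s ≤ i + 1 → ∀ k : ℤ, l s = k →
      w i = k ∧ w (i + 1) = k := by
    intro i hi s h1 h2 k hk
    constructor <;> apply hround <;> rw [← hk] <;> apply hosc i hi _ _ _ _ h1 h2 <;>
      rw [hml] <;> push_cast <;> linarith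
  refine ⟨e, w, fun i hi => ?_, fun i hi hne s h1 h2 k hk => ?_, fun s hs k hk => ?_⟩
  · have h := hosc i hi (i / m) (((i + 1 : ℕ) : ℝ) / m) (by rw [hml]) (by rw [hml]; linarith)
      (by rw [hml]; push_cast; linarith) (by rw [hml]; push_cast; rfl)
    have h1 := abs_sub_round (l (i / m))
    have h2 := abs_sub_round (l (((i + 1 : ℕ) : ℝ) / m))
    rw [abs_lt] at h
    rw [abs_le] at h1 h2
    have h3 : ((w (i + 1) : ℤ) : ℝ) < ((w i + 2 : ℤ) : ℝ) := by
      simp only [w]; push_cast at *; linarith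
    have h4 : ((w i - 2 : ℤ) : ℝ) < ((w (i + 1) : ℤ) : ℝ) := by
      simp only [w]; push_cast at *; linarith
    have h3' := Int.cast_lt.1 h3
    have h4' := Int.cast_lt.1 h4
    omega
  · obtain ⟨h3, h4⟩ := hint i hi s h1 h2 k hk
    exact hne (h4.trans h3.symm)
  · obtain ⟨i, hi, h1, h2⟩ := exists_step hm0 hs
    obtain ⟨h3, h4⟩ := hint i hi s h1 h2 k hk
    rw [stair_of_mem w hi h1 h2, h3, h4]
    simp

/-- A letter is a pair consisting of a circle and a step of the corresponding staircase which is
not constant. -/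
def IsLetter (e : ℕ+ → ℕ) (w : ℕ+ → ℕ → ℤ) (a : ℕ+ × ℕ) : Prop :=
  a.2 < 3 ^ e a.1 ∧ w a.1 (a.2 + 1) ≠ w a.1 a.2

/-- The initial time of a letter. -/
def letterStart (e : ℕ+ → ℕ) (a : ℕ+ × ℕ) : ℝ := a.2 / (3 ^ e a.1 : ℕ)

/-- The final time of a letter. -/
def letterStop (e : ℕ+ → ℕ) (a : ℕ+ × ℕ) : ℝ := (a.2 + 1) / (3 ^ e a.1 : ℕ)

/-- The middle time of a letter. -/
def letterTime (e : ℕ+ → ℕ) (a : ℕ+ × ℕ) : ℝ := (a.2 + 1 / 2) / (3 ^ e a.1 : ℕ)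

/-- The circle and the direction of a letter. -/
def letterLabel (w : ℕ+ → ℕ → ℤ) (a : ℕ+ × ℕ) : ℕ+ × Bool :=
  (a.1, decide (w a.1 (a.2 + 1) = w a.1 a.2 + 1))

/-- The staircases `w n` have unit steps and only move where the base path `f` rests at `d n`. -/
structure IsStairSystem (d : ℕ+ → X) (f : ℝ → X) (e : ℕ+ → ℕ) (w : ℕ+ → ℕ → ℤ) : Prop where
  step : ∀ n, ∀ i < 3 ^ e n, w n (i + 1) = w n i ∨ w n (i + 1) = w n i + 1 ∨
    w n (i + 1) = w n i - 1
  base : ∀ n, ∀ i < 3 ^ e n, w n (i + 1) ≠ w n i → ∀ s : ℝ, (i : ℝ) ≤ (3 ^ e n : ℕ) * s →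
    (3 ^ e n : ℕ) * s ≤ i + 1 → f s = d n

section Letters

variable {d : ℕ+ → X} {f : ℝ → X} {e : ℕ+ → ℕ} {w : ℕ+ → ℕ → ℤ} {a b : ℕ+ × ℕ}

theorem letterStart_lt_letterTime (e : ℕ+ → ℕ) (a : ℕ+ × ℕ) : letterStart e a < letterTime e a := by
  unfold letterStart letterTime
  gcongr
  linarith

theorem letterTime_lt_letterStop (e : ℕ+ → ℕ) (a : ℕ+ × ℕ) : letterTime e a < letterStop e a := by
  unfold letterStop letterTime
  gcongr
  norm_num

theorem letterStart_lt_letterStop (e : ℕ+ → ℕ) (a : ℕ+ × ℕ) : letterStart e a < letterStop e a :=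
  (letterStart_lt_letterTime e a).trans (letterTime_lt_letterStop e a)

theorem letterStart_nonneg (e : ℕ+ → ℕ) (a : ℕ+ × ℕ) : 0 ≤ letterStart e a := by
  unfold letterStart
  positivity

theorem IsLetter.stop_le_one (ha : IsLetter e w a) : letterStop e a ≤ 1 := by
  unfold letterStop
  rw [div_le_one (by positivity)]
  exact_mod_cast ha.1

theorem mem_letter_iff {s : ℝ} : s ∈ Set.Icc (letterStart e a) (letterStop e a) ↔
    (a.2 : ℝ) ≤ (3 ^ e a.1 : ℕ) * s ∧ (3 ^ e a.1 : ℕ) * s ≤ a.2 + 1 := by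
  have hm : (0 : ℝ) < (3 ^ e a.1 : ℕ) := by positivity
  rw [Set.mem_Icc, letterStart, letterStop, div_le_iff₀ hm, le_div_iff₀ hm, mul_comm s]

theorem IsStairSystem.base_eq (h : IsStairSystem d f e w) (ha : IsLetter e w a) {s : ℝ}
    (hs : s ∈ Set.Icc (letterStart e a) (letterStop e a)) : f s = d a.1 :=
  h.base _ _ ha.1 ha.2 s (mem_letter_iff.1 hs).1 (mem_letter_iff.1 hs).2

theorem IsStairSystem.stop_le_start_or (h : IsStairSystem d f e w) (hd : Function.Injective d)
    (ha : IsLetter e w a) (hb : IsLetter e w b) (hab : a ≠ b) :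
    letterStop e a ≤ letterStart e b ∨ letterStop e b ≤ letterStart e a := by
  obtain ⟨n, i⟩ := a
  obtain ⟨k, j⟩ := b
  by_cases hnk : n = k
  · subst hnk
    have hij : i ≠ j := fun hij => hab (by rw [hij])
    rcases lt_or_gt_of_ne hij with hij | hij
    · left
      unfold letterStart letterStop
      gcongr
      exact_mod_cast hij
    · right
      unfold letterStart letterStop
      gcongr
      exact_mod_cast hij
  · by_contra! hlt
    have h1 := h.base_eq ha (s := max (letterStart e (n, i)) (letterStart e (k, j)))
      ⟨le_max_left _ _, max_le (letterStart_lt_letterStop e _).le hlt.1.le⟩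
    have h2 := h.base_eq hb (s := max (letterStart e (n, i)) (letterStart e (k, j)))
      ⟨le_max_right _ _, max_le hlt.2.le (letterStart_lt_letterStop e _).le⟩
    exact hnk (hd (h1.symm.trans h2))

theorem IsStairSystem.stop_le_start (h : IsStairSystem d f e w) (hd : Function.Injective d)
    (ha : IsLetter e w a) (hb : IsLetter e w b) (hab : letterTime e a < letterTime e b) :
    letterStop e a ≤ letterStart e b := by
  rcases h.stop_le_start_or hd ha hb (fun h => by simp [h] at hab) with h' | h'
  · exact h'
  · have := letterStart_lt_letterTime e a
    have := letterTime_lt_letterStop e b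
    linarith

theorem IsStairSystem.letterTime_ne (h : IsStairSystem d f e w) (hd : Function.Injective d)
    (ha : IsLetter e w a) (hb : IsLetter e w b) (hab : a ≠ b) :
    letterTime e a ≠ letterTime e b := by
  have h1 := letterStart_lt_letterTime e a
  have h2 := letterTime_lt_letterStop e b
  have h3 := letterStart_lt_letterTime e b
  have h4 := letterTime_lt_letterStop e a
  intro h'
  rcases h.stop_le_start_or hd ha hb hab with h' | h' <;> linarith

end Letters

theorem prod_map_eq_mk_filterMap {α β γ : Type*} (g : α → Option β) (lab : β → γ × Bool)
    (φ : α → FreeGroup γ) (l : List α) (h0 : ∀ j ∈ l, g j = none → φ j = 1)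
    (h1 : ∀ j ∈ l, ∀ b, g j = some b → φ j = FreeGroup.mk [lab b]) :
    FreeGroup.mk ((l.filterMap g).map lab) = (l.map φ).prod := by
  induction l with
  | nil => rfl
  | cons j l ih =>
    have ih := ih (fun i hi => h0 i (List.mem_cons_of_mem _ hi))
      (fun i hi => h1 i (List.mem_cons_of_mem _ hi))
    rw [List.map_cons, List.prod_cons, ← ih]
    rcases hg : g j with _ | b
    · rw [List.filterMap_cons_none hg, h0 j List.mem_cons_self hg, one_mul]
    · rw [List.filterMap_cons_some hg, h1 j List.mem_cons_self b hg, List.map_cons,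
        FreeGroup.mul_mk, List.singleton_append]

theorem crossing_stair {m R q j : ℕ} {w : ℕ → ℤ}
    (hw : ∀ i < m, w (i + 1) = w i ∨ w (i + 1) = w i + 1 ∨ w (i + 1) = w i - 1)
    (hR : R = 2 * q + 1) (hq : 0 < q) (hj : j < m * R) :
    crossing (turn (stair m w ((j : ℝ) / (m * R : ℕ))))
      (turn (stair m w (((j + 1 : ℕ) : ℝ) / (m * R : ℕ)))) =
      if j % R = q then w (j / R + 1) - w (j / R) else 0 := by
  have hR0 : 0 < R := by omega
  have hi : j / R < m := (Nat.div_lt_iff_lt_mul hR0).2 hj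
  have hm0 : 0 < m := (Nat.zero_le _).trans_lt hi
  have hr : j % R < R := Nat.mod_lt _ hR0
  have hjr : (j : ℝ) = R * (j / R : ℕ) + (j % R : ℕ) := by exact_mod_cast (Nat.div_add_mod j R).symm
  have hR0' : (0 : ℝ) < R := by exact_mod_cast hR0
  have hm0' : (0 : ℝ) < m := by exact_mod_cast hm0
  have hr' : ((j % R : ℕ) : ℝ) + 1 ≤ R := by exact_mod_cast hr
  have hr0 : (0 : ℝ) ≤ (j % R : ℕ) := Nat.cast_nonneg _
  generalize hI : j / R = i at *
  generalize hJ : j % R = r at *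
  have e1 : (m : ℝ) * ((j : ℝ) / (m * R : ℕ)) = i + r / R := by
    rw [hjr]
    push_cast
    field_simp
  have e2 : (m : ℝ) * (((j + 1 : ℕ) : ℝ) / (m * R : ℕ)) = i + (r + 1) / R := by
    push_cast
    rw [hjr]
    field_simp
    ring
  have hd0 : (0 : ℝ) ≤ r / R := by positivity
  have hd1 : (r : ℝ) / R ≤ 1 := by rw [div_le_one hR0']; linarith
  have hd0' : (0 : ℝ) ≤ (r + 1) / R := by positivity
  have hd1' : ((r : ℝ) + 1) / R ≤ 1 := by rw [div_le_one hR0']; linarith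
  rw [stair_of_mem w hi (by rw [e1]; linarith) (by rw [e1]; linarith),
    stair_of_mem w hi (by rw [e2]; linarith) (by rw [e2]; linarith), e1, e2,
    add_sub_cancel_left, add_sub_cancel_left]
  by_cases h : w (i + 1) = w i
  · simp [h, crossing_self]
  · refine crossing_turn_step ?_ hR hq hr (w i)
    have := hw i hi
    omega

theorem exists_letter_word {d : ℕ+ → X} {f : ℝ → X} {e : ℕ+ → ℕ} {w : ℕ+ → ℕ → ℤ}
    (h : IsStairSystem d f e w) (hd : Function.Injective d)
    {H : unitInterval × unitInterval → HEset} (hH : Continuous H)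
    (h₀ : ∀ n (s : unitInterval), heCoord n (H (0, s)) = turn (stair (3 ^ e n) (w n) s))
    (h₁ : ∀ s, H (1, s) = h0) (hl : ∀ t, H (t, 0) = h0) (hr : ∀ t, H (t, 1) = h0)
    (s : Finset ℕ+) :
    ∃ L : List (ℕ+ × ℕ), (∀ a, a ∈ L ↔ IsLetter e w a ∧ a.1 ∈ s) ∧
      L.Pairwise (fun a b => letterTime e a < letterTime e b) ∧
      FreeGroup.mk (L.map (letterLabel w)) = 1 := by
  obtain ⟨K, hK⟩ := exists_prod_letterAt_eq_one hH h₁ hl hr s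
  let A : ℕ := K + ∑ n ∈ s, (e n + 1)
  have hA : ∀ n ∈ s, e n + 1 ≤ A := fun n hn =>
    (Finset.single_le_sum (f := fun n => e n + 1) (fun _ _ => Nat.zero_le _) hn).trans
      (Nat.le_add_left _ _)
  have hKA : K ≤ 3 ^ A := (Nat.le_add_right _ _).trans (Nat.lt_pow_self (by norm_num)).le
  let R : ℕ+ → ℕ := fun n => 3 ^ (A - e n)
  let q : ℕ+ → ℕ := fun n => R n / 2
  have hRq : ∀ n, R n = 2 * q n + 1 := fun n => by
    have : Odd (R n) := Odd.pow (by decide)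
    exact (Nat.two_mul_div_two_add_one_of_odd this).symm
  have hq : ∀ n ∈ s, 0 < q n := fun n hn => by
    have h1 := hA n hn
    have : 3 ^ 1 ≤ R n := Nat.pow_le_pow_right (by norm_num) (by omega)
    have h2 := hRq n
    omega
  have hM : ∀ n ∈ s, 3 ^ A = 3 ^ e n * R n := fun n hn => by
    rw [← pow_add, Nat.add_sub_cancel' (by linarith [hA n hn])]
  have hcr : ∀ n ∈ s, ∀ j : ℕ, j < 3 ^ A →
      crossing (heCoord n (H (0, Set.projIcc 0 1 zero_le_one ((j : ℝ) / (3 ^ A : ℕ)))))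
        (heCoord n (H (0, Set.projIcc 0 1 zero_le_one (((j + 1 : ℕ) : ℝ) / (3 ^ A : ℕ))))) =
      if j % R n = q n then w n (j / R n + 1) - w n (j / R n) else 0 := by
    intro n hn j hj
    have hmem : ∀ k : ℕ, k ≤ 3 ^ A → ((k : ℝ) / (3 ^ A : ℕ)) ∈ Set.Icc (0 : ℝ) 1 := fun k hk =>
      ⟨by positivity, by rw [div_le_one (by positivity)]; exact_mod_cast hk⟩
    rw [h₀, h₀, Set.projIcc_of_mem _ (hmem j hj.le), Set.projIcc_of_mem _ (hmem (j + 1) hj)]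
    dsimp only
    rw [hM n hn]
    exact crossing_stair (h.step n) (hRq n) (hq n hn) (hM n hn ▸ hj)
  let pos : ℕ+ × ℕ → ℕ := fun a => R a.1 * a.2 + q a.1
  have hpos : ∀ a : ℕ+ × ℕ, a.1 ∈ s → (3 ^ A : ℕ) * letterTime e a = pos a + 1 / 2 := by
    intro a ha
    have h2 : (R a.1 : ℝ) = 2 * q a.1 + 1 := by exact_mod_cast hRq a.1
    have h3 : (0 : ℝ) < (3 ^ e a.1 : ℕ) := by positivity
    rw [hM _ ha, letterTime, Nat.cast_mul]
    simp only [pos]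
    rw [mul_comm ((3 ^ e a.1 : ℕ) : ℝ), mul_assoc, mul_div_cancel₀ _ h3.ne']
    push_cast
    rw [h2]
    ring
  have hdiv : ∀ a : ℕ+ × ℕ, pos a / R a.1 = a.2 ∧ pos a % R a.1 = q a.1 := by
    intro a
    have h1 : q a.1 < R a.1 := by have := hRq a.1; omega
    constructor
    · rw [Nat.mul_add_div (by omega), Nat.div_eq_of_lt h1, add_zero]
    · rw [Nat.mul_add_mod, Nat.mod_eq_of_lt h1]
  have hposlt : ∀ a, IsLetter e w a → a.1 ∈ s → pos a < 3 ^ A := by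
    intro a ha has
    have h1 : q a.1 < R a.1 := by have := hRq a.1; omega
    rw [hM _ has]
    calc pos a < R a.1 * a.2 + R a.1 := Nat.add_lt_add_left h1 _
      _ = (a.2 + 1) * R a.1 := by ring
      _ ≤ _ := Nat.mul_le_mul_right _ ha.1
  let P : ℕ → ℕ+ × ℕ → Prop := fun j a => IsLetter e w a ∧ a.1 ∈ s ∧ pos a = j
  have htime : ∀ j a k b, P j a → P k b → (j < k ↔ letterTime e a < letterTime e b) := by
    intro j a k b hj hk
    have h1 := hpos a hj.2.1
    have h2 := hpos b hk.2.1
    rw [hj.2.2] at h1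
    rw [hk.2.2] at h2
    have h3 : (0 : ℝ) < (3 ^ A : ℕ) := by positivity
    rw [← mul_lt_mul_iff_right₀ h3, h1, h2, add_lt_add_iff_right, Nat.cast_lt]
  let g : ℕ → Option (ℕ+ × ℕ) := fun j => if hj : ∃ a, P j a then some hj.choose else none
  have hgP : ∀ j a, g j = some a → P j a := by
    intro j a hj
    by_cases hex : ∃ a, P j a
    · simp only [g, dif_pos hex, Option.some.injEq] at hj
      exact hj ▸ hex.choose_spec
    · simp only [g, dif_neg hex, reduceCtorEq] at hj
  have hgs : ∀ j a, P j a → g j = some a := by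
    intro j a hj
    have hex : ∃ a, P j a := ⟨a, hj⟩
    have h1 := hex.choose_spec
    simp only [g, dif_pos hex, Option.some.injEq]
    by_contra hne
    refine h.letterTime_ne hd h1.1 hj.1 hne (le_antisymm ?_ ?_)
    · exact not_lt.1 fun hlt => lt_irrefl j ((htime j a j _ hj h1).2 hlt)
    · exact not_lt.1 fun hlt => lt_irrefl j ((htime j _ j a h1 hj).2 hlt)
  refine ⟨(List.range (3 ^ A)).filterMap g, fun a => ?_, ?_, ?_⟩
  · rw [List.mem_filterMap]
    constructor
    · rintro ⟨j, -, hj⟩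
      exact ⟨(hgP j a hj).1, (hgP j a hj).2.1⟩
    · rintro ⟨ha, has⟩
      exact ⟨pos a, List.mem_range.2 (hposlt a ha has), hgs _ _ ⟨ha, has, rfl⟩⟩
  · refine List.Pairwise.filterMap g ?_ List.pairwise_lt_range
    intro j k hjk a ha b hb
    exact (htime j a k b (hgP j a ha) (hgP k b hb)).1 hjk
  · rw [← hK (3 ^ A) hKA (by positivity)]
    refine prod_map_eq_mk_filterMap g (letterLabel w) _ _ ?_ ?_
    · intro j hj hgj
      have hj' := List.mem_range.1 hj
      refine letterAt_of_forall fun n hn => ?_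
      rw [hcr n hn j hj']
      split_ifs with hjq
      · by_contra hne
        have hlt : j / R n < 3 ^ e n :=
          (Nat.div_lt_iff_lt_mul (by have := hRq n; omega)).2 (hM n hn ▸ hj')
        have hP : P j (n, j / R n) :=
          ⟨⟨hlt, sub_ne_zero.1 hne⟩, hn, by
            show R n * (j / R n) + q n = j
            rw [← hjq, Nat.div_add_mod]⟩
        rw [hgs j _ hP] at hgj
        exact absurd hgj (by simp)
      · rfl
    · intro j hj a hgj
      have hj' := List.mem_range.1 hj
      obtain ⟨ha, has, hja⟩ := hgP j a hgj
      have hc := hcr a.1 has j hj'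
      rw [← hja, (hdiv a).1, (hdiv a).2, if_pos rfl, hja] at hc
      have hne : w a.1 (a.2 + 1) - w a.1 a.2 ≠ 0 := sub_ne_zero.2 ha.2
      rw [letterAt_of_crossing has (by rw [hc]; exact hne), hc]
      rcases h.step a.1 a.2 ha.1 with h' | h' | h'
      · exact absurd h' ha.2
      · rw [letterLabel, h', add_sub_cancel_left, zpow_one, decide_eq_true rfl]
        rfl
      · rw [letterLabel, h', decide_eq_false (by omega), sub_sub_cancel_left, zpow_neg, zpow_one]
        rfl

theorem exists_letter_matching {d : ℕ+ → X} {f : ℝ → X} {e : ℕ+ → ℕ} {w : ℕ+ → ℕ → ℤ}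
    (h : IsStairSystem d f e w) (hd : Function.Injective d)
    {H : unitInterval × unitInterval → HEset} (hH : Continuous H)
    (h₀ : ∀ n (s : unitInterval), heCoord n (H (0, s)) = turn (stair (3 ^ e n) (w n) s))
    (h₁ : ∀ s, H (1, s) = h0) (hl : ∀ t, H (t, 0) = h0) (hr : ∀ t, H (t, 1) = h0) :
    ∃ μ : ℕ+ × ℕ → ℕ+ × ℕ,
      (∀ a, IsLetter e w a → IsLetter e w (μ a) ∧ μ (μ a) = a ∧ (μ a).1 = a.1 ∧
        (letterLabel w (μ a)).2 = !(letterLabel w a).2) ∧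
      ∀ a b, IsLetter e w a → IsLetter e w b → letterTime e a < letterTime e b →
        letterTime e b < letterTime e (μ a) →
          letterTime e a < letterTime e (μ b) ∧ letterTime e (μ b) < letterTime e (μ a) := by
  have hfin : ∀ s : Finset ℕ+, ∃ μ : ℕ+ × ℕ → ℕ+ × ℕ,
      (∀ a, IsLetter e w a → a.1 ∈ s → IsLetter e w (μ a) ∧ μ (μ a) = a ∧ (μ a).1 = a.1 ∧
        (letterLabel w (μ a)).2 = !(letterLabel w a).2) ∧
      ∀ a b, IsLetter e w a → a.1 ∈ s → IsLetter e w b → b.1 ∈ s →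
        letterTime e a < letterTime e b → letterTime e b < letterTime e (μ a) →
          letterTime e a < letterTime e (μ b) ∧ letterTime e (μ b) < letterTime e (μ a) := by
    intro s
    obtain ⟨L, hL, hLp, hL1⟩ := exists_letter_word h hd hH h₀ h₁ hl hr s
    obtain ⟨μ, hμ, hnc⟩ :=
      exists_noncrossing_matching (letterTime e) (letterLabel w) _ L rfl hLp hL1
    refine ⟨μ, fun a ha has => ?_, fun a b ha has hb hbs =>
      hnc a ((hL a).2 ⟨ha, has⟩) b ((hL b).2 ⟨hb, hbs⟩)⟩
    obtain ⟨h1, h2, h3, h4⟩ := hμ a ((hL a).2 ⟨ha, has⟩)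
    exact ⟨((hL _).1 h1).1, h2, h3, h4⟩
  choose μ hμ hnc using hfin
  let U : Ultrafilter (Finset ℕ+) := Ultrafilter.of Filter.atTop
  have hU : ∀ n : ℕ+, ∀ᶠ s in (U : Filter (Finset ℕ+)), n ∈ s := fun n =>
    (Filter.Eventually.filter_mono (Ultrafilter.of_le _)
      (Filter.eventually_ge_atTop ({n} : Finset ℕ+))).mono fun s hs =>
        Finset.singleton_subset_iff.1 hs
  have hlim : ∀ a, ∃ b, IsLetter e w a → ∀ᶠ s in (U : Filter (Finset ℕ+)), μ s a = b := by
    intro a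
    by_cases ha : IsLetter e w a
    · have hex : ∀ᶠ s in (U : Filter (Finset ℕ+)),
          ∃ i : Fin (3 ^ e a.1), μ s a = (a.1, (i : ℕ)) := by
        filter_upwards [hU a.1] with s hs
        obtain ⟨h1, -, h3, -⟩ := hμ s a ha hs
        have h1' := h1.1
        rw [h3] at h1'
        exact ⟨⟨(μ s a).2, h1'⟩, Prod.ext h3 rfl⟩
      obtain ⟨i, hi⟩ := Ultrafilter.eventually_exists_iff.1 hex
      exact ⟨_, fun _ => hi⟩
    · exact ⟨a, fun h' => absurd h' ha⟩
  choose ν hν using hlim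
  refine ⟨ν, fun a ha => ?_, fun a b ha hb hab hba => ?_⟩
  · have h1 : IsLetter e w (ν a) := by
      obtain ⟨s, h1, h2⟩ := ((hν a ha).and (hU a.1)).exists
      exact h1 ▸ (hμ s a ha h2).1
    obtain ⟨s, h2, h3, h4⟩ := ((hν a ha).and ((hν _ h1).and (hU a.1))).exists
    obtain ⟨h5, h6, h7, h8⟩ := hμ s a ha h4
    refine ⟨h1, ?_, h2 ▸ h7, h2 ▸ h8⟩
    rw [← h3, ← h2, h6]
  · obtain ⟨s, h1, h2, h3, h4⟩ := ((hν a ha).and ((hν b hb).and ((hU a.1).and (hU b.1)))).exists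
    have := hnc s a b ha h3 hb h4 hab
    rw [h1, h2] at this
    exact this hba

/-- A noncrossing matching of the letters which pairs each letter with one on the same circle and
of the opposite direction. -/
structure IsLetterMatching (e : ℕ+ → ℕ) (w : ℕ+ → ℕ → ℤ) (μ : ℕ+ × ℕ → ℕ+ × ℕ) : Prop where
  isLetter : ∀ a, IsLetter e w a → IsLetter e w (μ a)
  involutive : ∀ a, IsLetter e w a → μ (μ a) = a
  fst_eq : ∀ a, IsLetter e w a → (μ a).1 = a.1
  label : ∀ a, IsLetter e w a → (letterLabel w (μ a)).2 = !(letterLabel w a).2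
  noncrossing : ∀ a b, IsLetter e w a → IsLetter e w b → letterTime e a < letterTime e b →
    letterTime e b < letterTime e (μ a) →
      letterTime e a < letterTime e (μ b) ∧ letterTime e (μ b) < letterTime e (μ a)

/-- A letter which comes before its partner. -/
def IsOpening (e : ℕ+ → ℕ) (w : ℕ+ → ℕ → ℤ) (μ : ℕ+ × ℕ → ℕ+ × ℕ) (a : ℕ+ × ℕ) : Prop :=
  IsLetter e w a ∧ letterTime e a < letterTime e (μ a)

/-- The progress of a letter as a function of time. -/
def letterRamp (e : ℕ+ → ℕ) (a : ℕ+ × ℕ) (s : ℝ) : ℝ := clamp ((3 ^ e a.1 : ℕ) * s - a.2)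

/-- The increment of a letter. -/
def letterJump (w : ℕ+ → ℕ → ℤ) (a : ℕ+ × ℕ) : ℤ := w a.1 (a.2 + 1) - w a.1 a.2

/-- The extension of the staircases over the triangle, in which matched letters cancel. -/
def fold (e : ℕ+ → ℕ) (w : ℕ+ → ℕ → ℤ) (μ : ℕ+ × ℕ → ℕ+ × ℕ) (n : ℕ+) (p : ℝ × ℝ) : ℝ :=
  ∑ i ∈ (Finset.range (3 ^ e n)).filter fun i => IsOpening e w μ (n, i),
    (letterJump w (n, i) : ℝ) * min (letterRamp e (n, i) p.1) (1 - letterRamp e (μ (n, i)) p.2)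

section Fold

variable {d : ℕ+ → X} {f : ℝ → X} {e : ℕ+ → ℕ} {w : ℕ+ → ℕ → ℤ} {μ : ℕ+ × ℕ → ℕ+ × ℕ}

theorem continuous_letterRamp (e : ℕ+ → ℕ) (a : ℕ+ × ℕ) : Continuous (letterRamp e a) := by
  have := continuous_clamp
  unfold letterRamp
  fun_prop

theorem continuous_fold (e : ℕ+ → ℕ) (w : ℕ+ → ℕ → ℤ) (μ : ℕ+ × ℕ → ℕ+ × ℕ) (n : ℕ+) :
    Continuous (fold e w μ n) := by
  have := continuous_letterRamp e
  unfold fold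
  fun_prop

theorem letterRamp_nonneg (e : ℕ+ → ℕ) (a : ℕ+ × ℕ) (s : ℝ) : 0 ≤ letterRamp e a s :=
  clamp_nonneg _

theorem letterRamp_le_one (e : ℕ+ → ℕ) (a : ℕ+ × ℕ) (s : ℝ) : letterRamp e a s ≤ 1 :=
  clamp_le_one _

theorem letterRamp_eq_zero {a : ℕ+ × ℕ} {s : ℝ} (h : s ≤ letterStart e a) :
    letterRamp e a s = 0 := by
  apply clamp_of_nonpos
  rw [letterStart, le_div_iff₀ (by positivity)] at h
  linarith

theorem letterRamp_eq_one {a : ℕ+ × ℕ} {s : ℝ} (h : letterStop e a ≤ s) :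
    letterRamp e a s = 1 := by
  apply clamp_of_one_le
  rw [letterStop, div_le_iff₀ (by positivity)] at h
  linarith

theorem start_lt_of_letterRamp_pos {a : ℕ+ × ℕ} {s : ℝ} (h : 0 < letterRamp e a s) :
    letterStart e a < s := by
  by_contra! h'
  exact h.ne' (letterRamp_eq_zero h')

theorem lt_stop_of_letterRamp_lt_one {a : ℕ+ × ℕ} {s : ℝ} (h : letterRamp e a s < 1) :
    s < letterStop e a := by
  by_contra! h'
  exact h.ne (letterRamp_eq_one h')

theorem fold_zero_left (n : ℕ+) (b : ℝ) : fold e w μ n (0, b) = 0 := by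
  refine Finset.sum_eq_zero fun i _ => ?_
  rw [letterRamp_eq_zero (letterStart_nonneg e _),
    min_eq_left (by linarith [letterRamp_le_one e (μ (n, i)) b]), mul_zero]

theorem fold_one_right (hμ : IsLetterMatching e w μ) (n : ℕ+) (a : ℝ) :
    fold e w μ n (a, 1) = 0 := by
  refine Finset.sum_eq_zero fun i hi => ?_
  have hi' := (Finset.mem_filter.1 hi).2
  rw [letterRamp_eq_one (hμ.isLetter _ hi'.1).stop_le_one, sub_self,
    min_eq_right (letterRamp_nonneg _ _ _), mul_zero]

theorem exists_of_fold_ne_int {n : ℕ+} {p : ℝ × ℝ} (h : ¬∃ k : ℤ, fold e w μ n p = k) :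
    ∃ a : ℕ+ × ℕ, a.1 = n ∧ IsOpening e w μ a ∧
      0 < letterRamp e a p.1 ∧ letterRamp e (μ a) p.2 < 1 ∧
      (letterRamp e a p.1 < 1 ∨ 0 < letterRamp e (μ a) p.2) := by
  by_contra! hcon
  apply h
  have hterm : ∀ i ∈ (Finset.range (3 ^ e n)).filter fun i => IsOpening e w μ (n, i),
      ∃ k : ℤ, (letterJump w (n, i) : ℝ) *
        min (letterRamp e (n, i) p.1) (1 - letterRamp e (μ (n, i)) p.2) = k := by
    intro i hi
    have hi' := (Finset.mem_filter.1 hi).2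
    have h1 := letterRamp_nonneg e (n, i) p.1
    have h2 := letterRamp_le_one e (n, i) p.1
    have h3 := letterRamp_nonneg e (μ (n, i)) p.2
    have h4 := letterRamp_le_one e (μ (n, i)) p.2
    have h5 := hcon (n, i) rfl hi'
    rcases h1.eq_or_lt with h0 | h0
    · exact ⟨0, by rw [← h0, min_eq_left (by linarith)]; simp⟩
    rcases h4.eq_or_lt with h0' | h0'
    · exact ⟨0, by rw [h0', min_eq_right (by linarith)]; simp⟩
    obtain ⟨h6, h7⟩ := h5 h0 h0'
    refine ⟨letterJump w (n, i), ?_⟩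
    rw [le_antisymm h2 h6, le_antisymm h7 h3]
    simp
  choose! k hk using hterm
  refine ⟨∑ i ∈ (Finset.range (3 ^ e n)).filter fun i => IsOpening e w μ (n, i), k i, ?_⟩
  rw [fold, Finset.sum_congr rfl hk]
  push_cast
  rfl

theorem IsLetterMatching.jump_eq (h : IsStairSystem d f e w) (hμ : IsLetterMatching e w μ)
    {a : ℕ+ × ℕ} (ha : IsLetter e w a) : letterJump w (μ a) = -letterJump w a := by
  have h1 := hμ.isLetter a ha
  have h2 := hμ.label a ha
  have h3 := h.step a.1 a.2 ha.1
  have h4 := h.step (μ a).1 (μ a).2 h1.1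
  have h5 := h1.2
  have h6 := ha.2
  unfold letterJump
  simp only [letterLabel] at h2
  by_cases h7 : w a.1 (a.2 + 1) = w a.1 a.2 + 1
  · rw [decide_eq_true h7] at h2
    have h8 : ¬w (μ a).1 ((μ a).2 + 1) = w (μ a).1 (μ a).2 + 1 := of_decide_eq_false h2
    omega
  · rw [decide_eq_false h7] at h2
    have h8 : w (μ a).1 ((μ a).2 + 1) = w (μ a).1 (μ a).2 + 1 := of_decide_eq_true h2
    omega

theorem IsLetterMatching.ne (h : IsStairSystem d f e w) (hμ : IsLetterMatching e w μ)
    {a : ℕ+ × ℕ} (ha : IsLetter e w a) : a ≠ μ a := by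
  intro h1
  have h2 := hμ.jump_eq h ha
  rw [← h1] at h2
  have h3 : letterJump w a ≠ 0 := sub_ne_zero.2 ha.2
  omega

theorem stair_eq_fold (h : IsStairSystem d f e w) (hd : Function.Injective d)
    (hμ : IsLetterMatching e w μ) (n : ℕ+) (s : ℝ) :
    stair (3 ^ e n) (w n) s = w n 0 + fold e w μ n (s, s) := by
  let T : ℕ → ℝ := fun i => (letterJump w (n, i) : ℝ) * letterRamp e (n, i) s
  let S := (Finset.range (3 ^ e n)).filter fun i => IsLetter e w (n, i)
  have hS : ∑ i ∈ Finset.range (3 ^ e n), T i = ∑ i ∈ S, T i := by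
    refine (Finset.sum_filter_of_ne fun i hi hne => ⟨Finset.mem_range.1 hi, fun heq => hne ?_⟩).symm
    simp only [T, letterJump]
    rw [heq]
    simp
  have hmem : ∀ i, i ∈ S ↔ IsLetter e w (n, i) := fun i =>
    ⟨fun hi => (Finset.mem_filter.1 hi).2,
      fun hi => Finset.mem_filter.2 ⟨Finset.mem_range.2 hi.1, hi⟩⟩
  have hμn : ∀ i, IsLetter e w (n, i) → μ (n, i) = (n, (μ (n, i)).2) := fun i hi =>
    Prod.ext (hμ.fst_eq _ hi) rfl
  have hsplit := Finset.sum_filter_add_sum_filter_not S (fun i => IsOpening e w μ (n, i)) T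
  have hclose : ∑ i ∈ S.filter (fun i => ¬IsOpening e w μ (n, i)), T i =
      ∑ i ∈ S.filter (fun i => IsOpening e w μ (n, i)), T (μ (n, i)).2 := by
    symm
    refine Finset.sum_bij' (fun i _ => (μ (n, i)).2) (fun i _ => (μ (n, i)).2) ?_ ?_ ?_ ?_ ?_
    · intro i hi
      obtain ⟨hi1, hi2⟩ := Finset.mem_filter.1 hi
      rw [hmem] at hi1
      refine Finset.mem_filter.2 ⟨(hmem _).2 (hμn i hi1 ▸ hμ.isLetter _ hi1), fun hop => ?_⟩
      rw [IsOpening, ← hμn i hi1, hμ.involutive _ hi1] at hop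
      exact lt_asymm hop.2 hi2.2
    · intro i hi
      obtain ⟨hi1, hi2⟩ := Finset.mem_filter.1 hi
      rw [hmem] at hi1
      have h1 := hμ.isLetter _ hi1
      refine Finset.mem_filter.2 ⟨(hmem _).2 (hμn i hi1 ▸ h1), ?_⟩
      rw [IsOpening, ← hμn i hi1, hμ.involutive _ hi1]
      refine ⟨h1, lt_of_le_of_ne ?_ ?_⟩
      · by_contra! hlt
        exact hi2 ⟨hi1, hlt⟩
      · exact h.letterTime_ne hd h1 hi1 (hμ.ne h hi1).symm
    · intro i hi
      have hi1 := (hmem i).1 (Finset.mem_filter.1 hi).1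
      rw [← hμn i hi1, hμ.involutive _ hi1]
    · intro i hi
      have hi1 := (hmem i).1 (Finset.mem_filter.1 hi).1
      rw [← hμn i hi1, hμ.involutive _ hi1]
    · intro i hi
      rfl
  have hfilter : S.filter (fun i => IsOpening e w μ (n, i)) =
      (Finset.range (3 ^ e n)).filter fun i => IsOpening e w μ (n, i) := by
    ext i
    simp only [S, Finset.mem_filter]
    exact ⟨fun hi => ⟨hi.1.1, hi.2⟩, fun hi => ⟨⟨hi.1, hi.2.1⟩, hi.2⟩⟩
  have hstair : stair (3 ^ e n) (w n) s = w n 0 + ∑ i ∈ Finset.range (3 ^ e n), T i := rfl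
  rw [hstair, hS, ← hsplit, hclose, ← Finset.sum_add_distrib, hfilter, fold]
  congr 1
  refine Finset.sum_congr rfl fun i hi => ?_
  have hi' := (Finset.mem_filter.1 hi).2
  have hj := hμ.jump_eq h hi'.1
  have hst := h.stop_le_start hd hi'.1 (hμ.isLetter _ hi'.1) hi'.2
  simp only [T]
  rw [← hμn i hi'.1, hj]
  push_cast
  rcases le_total s (letterStart e (μ (n, i))) with hs | hs
  · rw [letterRamp_eq_zero hs, min_eq_left (by linarith [letterRamp_le_one e (n, i) s])]
    ring
  · rw [letterRamp_eq_one (hst.trans hs),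
      min_eq_right (by linarith [letterRamp_nonneg e (μ (n, i)) s])]
    ring

theorem IsLetterMatching.noncrossing_intervals (h : IsStairSystem d f e w)
    (hd : Function.Injective d) (hμ : IsLetterMatching e w μ) {a b : ℕ+ × ℕ}
    (ha : IsOpening e w μ a) (hb : IsOpening e w μ b)
    (hab : letterTime e a < letterTime e b) :
    letterStop e (μ a) ≤ letterStart e b ∨
      (letterStop e a ≤ letterStart e b ∧ letterStop e (μ b) ≤ letterStart e (μ a)) := by
  have ha' := hμ.isLetter _ ha.1
  have hb' := hμ.isLetter _ hb.1
  rcases lt_or_ge (letterTime e b) (letterTime e (μ a)) with h1 | h1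
  · exact .inr ⟨h.stop_le_start hd ha.1 hb.1 hab,
      h.stop_le_start hd hb' ha' (hμ.noncrossing a b ha.1 hb.1 hab h1).2⟩
  · left
    refine h.stop_le_start hd ha' hb.1 (lt_of_le_of_ne h1 (h.letterTime_ne hd ha' hb.1 ?_))
    rintro rfl
    have := hb.2
    rw [hμ.involutive _ ha.1] at this
    exact lt_asymm this hab

theorem exists_fold_extension [SimplyConnectedSpace X] (hlsc : LocSimplyConnected X)
    (hf : Continuous f) {x : X} (hf0 : f 0 = x) (hf1 : f 1 = x) (h : IsStairSystem d f e w)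
    (hd : Function.Injective d) (hμ : IsLetterMatching e w μ) :
    ∃ F : ℝ × ℝ → X, Continuous F ∧ (∀ s ∈ Set.Icc (0 : ℝ) 1, F (s, s) = f s) ∧
      (∀ b ∈ Set.Icc (0 : ℝ) 1, F (0, b) = x) ∧ (∀ a ∈ Set.Icc (0 : ℝ) 1, F (a, 1) = x) ∧
      ∀ n a b, a ≤ b → turn (fold e w μ n (a, b)) ≠ 1 → F (a, b) = d n := by
  let ι := Option {a // IsOpening e w μ a}
  let u : ι → ℝ := fun i => i.elim 0 fun a => letterStart e a
  let v : ι → ℝ := fun i => i.elim 0 fun a => letterStop e a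
  let u' : ι → ℝ := fun i => i.elim 1 fun a => letterStart e (μ a)
  let v' : ι → ℝ := fun i => i.elim 1 fun a => letterStop e (μ a)
  let c : ι → X := fun i => i.elim x fun a => d a.1.1
  have hi1 : ∀ i, 0 ≤ u i := by
    rintro (_ | a)
    exacts [le_rfl, letterStart_nonneg e _]
  have hi2 : ∀ i, u i ≤ v i := by
    rintro (_ | a)
    exacts [le_rfl, (letterStart_lt_letterStop e _).le]
  have hi3 : ∀ i, u' i ≤ v' i := by
    rintro (_ | a)
    exacts [le_rfl, (letterStart_lt_letterStop e _).le]
  have hi4 : ∀ i, v' i ≤ 1 := by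
    rintro (_ | a)
    exacts [le_rfl, (hμ.isLetter _ a.2.1).stop_le_one]
  have hi5 : ∀ i, ∀ s ∈ Set.Icc (u i) (v i), f s = c i := by
    rintro (_ | a) s hs
    · rw [le_antisymm hs.2 hs.1]
      exact hf0
    · exact h.base_eq a.2.1 hs
  have hi6 : ∀ i, ∀ s ∈ Set.Icc (u' i) (v' i), f s = c i := by
    rintro (_ | a) s hs
    · rw [le_antisymm hs.2 hs.1]
      exact hf1
    · exact (h.base_eq (hμ.isLetter _ a.2.1) hs).trans (congrArg d (hμ.fst_eq _ a.2.1))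
  have hi7 : ∀ i j, i ≠ j → v' i ≤ u j ∨ v' j ≤ u i ∨ (v i ≤ u j ∧ v' j ≤ u' i) ∨
      (v j ≤ u i ∧ v' i ≤ u' j) := by
    rintro (_ | a) (_ | b) hij
    · exact absurd rfl hij
    · exact .inr (.inr (.inl ⟨letterStart_nonneg e _, (hμ.isLetter _ b.2.1).stop_le_one⟩))
    · exact .inr (.inr (.inr ⟨letterStart_nonneg e _, (hμ.isLetter _ a.2.1).stop_le_one⟩))
    · have hab : (a : ℕ+ × ℕ) ≠ b := fun hab => hij (congrArg some (Subtype.ext hab))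
      rcases lt_or_gt_of_ne (h.letterTime_ne hd a.2.1 b.2.1 hab) with hlt | hlt
      · rcases hμ.noncrossing_intervals h hd a.2 b.2 hlt with h1 | h1
        exacts [.inl h1, .inr (.inr (.inl h1))]
      · rcases hμ.noncrossing_intervals h hd b.2 a.2 hlt with h1 | h1
        exacts [.inr (.inl h1), .inr (.inr (.inr h1))]
  obtain ⟨F, hF, hF0, hF1, hF2⟩ :=
    exists_lamination_extension hlsc hf hi1 hi2 hi3 hi4 hi5 hi6 hi7
  refine ⟨F, hF, hF0, fun b hb => hF1 none 0 b le_rfl le_rfl hb.1 hb.2,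
    fun a ha => hF2 none a 1 le_rfl le_rfl ha.1 ha.2, fun n a b hab hne => ?_⟩
  rw [Ne, turn_eq_one_iff] at hne
  obtain ⟨k, rfl, hk, h1, h2, h3⟩ := exists_of_fold_ne_int hne
  rcases h3 with h3 | h3
  · exact hF1 (some ⟨k, hk⟩) a b (start_lt_of_letterRamp_pos h1).le
      (lt_stop_of_letterRamp_lt_one h3).le hab (lt_stop_of_letterRamp_lt_one h2).le
  · exact hF2 (some ⟨k, hk⟩) a b (start_lt_of_letterRamp_pos h3).le
      (lt_stop_of_letterRamp_lt_one h2).le (start_lt_of_letterRamp_pos h1).le hab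

end Fold

theorem homotopic_of_square {Y : Type*} [TopologicalSpace Y] {y₀ y₁ : Y} {p q : Path y₀ y₁}
    (G : unitInterval × unitInterval → Y) (hG : Continuous G) (h₀ : ∀ s, G (0, s) = p s)
    (h₁ : ∀ s, G (1, s) = q s) (hl : ∀ t, G (t, 0) = y₀) (hr : ∀ t, G (t, 1) = y₁) :
    p.Homotopic q :=
  ⟨{ toFun := G
     continuous_toFun := hG
     map_zero_left := h₀
     map_one_left := h₁
     prop' := by
      rintro t s (rfl | rfl)
      · exact (hl t).trans p.source.symm
      · exact (hr t).trans p.target.symm }⟩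

theorem exists_turn_lift {c : unitInterval → Circle} (hc : Continuous c) (h0 : c 0 = 1) :
    ∃ l : ℝ → ℝ, Continuous l ∧ ∀ s : unitInterval, turn (l s) = c s := by
  obtain ⟨Γ, hΓ, -⟩ := Circle.isCoveringMap_exp.exists_path_lifts ⟨c, hc⟩ 0 (by simpa using h0)
  refine ⟨fun s => Γ (Set.projIcc 0 1 zero_le_one s) / (2 * Real.pi), ?_, fun s => ?_⟩
  · exact (Γ.continuous.comp continuous_projIcc).div_const _
  · dsimp only
    rw [turn, Set.projIcc_val, mul_div_cancel₀ _ (by have := Real.pi_pos; positivity)]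
    exact congrFun hΓ s

theorem circleCoord_emb (d : ℕ+ → X) (n : ℕ+) (y : X) : circleCoord d n (emb d y) = 1 := by
  unfold circleCoord emb
  split_ifs <;> rfl

section Main

variable {d : ℕ+ → X} {x : X}

/-- Every loop is homotopic to one whose circle coordinates run through staircases. -/
theorem exists_stair_loop (hd : Function.Injective d) (γ : Path (emb d x) (emb d x)) :
    ∃ (f : ℝ → X) (e : ℕ+ → ℕ) (w : ℕ+ → ℕ → ℤ) (γ' : Path (emb d x) (emb d x)),
      Continuous f ∧ f 0 = x ∧ f 1 = x ∧ IsStairSystem d f e w ∧ γ.Homotopic γ' ∧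
      (∀ n, ∀ s : unitInterval, circleCoord d n (γ' s) = turn (stair (3 ^ e n) (w n) s)) ∧
      ∀ s : unitInterval, baseMap d (γ' s) = f s := by
  let f : ℝ → X := fun s => baseMap d (γ.extend s)
  have hf : Continuous f := (continuous_baseMap d).comp γ.continuous_extend
  have hfγ : ∀ s : unitInterval, f s = baseMap d (γ s) := fun s => by
    simp only [f, Path.extend_apply γ s.2]
  have hlift : ∀ n, ∃ l : ℝ → ℝ, Continuous l ∧
      ∀ s : unitInterval, turn (l s) = circleCoord d n (γ s) := fun n =>
    exists_turn_lift ((continuous_circleCoord hd n).comp γ.continuous) (by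
      simp only [γ.source, circleCoord_emb])
  choose l hl hlγ using hlift
  choose e w hstep hbase hint using fun n => exists_stair_approximation (hl n)
  have hbase' : ∀ n (s : unitInterval), (∀ k : ℤ, l n s ≠ k) → f s = d n := by
    intro n s hs
    rw [hfγ]
    apply base_eq_of_circleCoord_ne_one
    rw [← hlγ, Ne, turn_eq_one_iff, not_exists]
    exact hs
  have hsys : IsStairSystem d f e w := by
    refine ⟨hstep, fun n i hi hne s h1 h2 => ?_⟩
    have hm : (0 : ℝ) < (3 ^ e n : ℕ) := by positivity
    have hi' : (i : ℝ) + 1 ≤ (3 ^ e n : ℕ) := by exact_mod_cast hi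
    have hi0 : (0 : ℝ) ≤ i := Nat.cast_nonneg i
    exact hbase' n ⟨s, by nlinarith, by nlinarith⟩ (hbase n i hi hne s h1 h2)
  let u : unitInterval × unitInterval → ℕ+ → Circle := fun z n =>
    turn ((1 - z.1) * l n z.2 + z.1 * stair (3 ^ e n) (w n) z.2)
  have hu : ∀ n, Continuous fun z => u z n := fun n => by
    have := hl n
    have := continuous_stair (3 ^ e n) (w n)
    exact continuous_turn.comp (by fun_prop)
  have hu1 : ∀ z n, circleCoord d n (γ z.2) = 1 → u z n = 1 := by
    intro z n h
    rw [← hlγ, turn_eq_one_iff] at h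
    obtain ⟨k, hk⟩ := h
    refine turn_eq_one_iff.2 ⟨k, ?_⟩
    rw [hint n z.2 z.2.2 k hk, hk]
    ring
  have huf : ∀ z n, u z n ≠ 1 → f z.2 = d n := by
    intro z n h
    rw [hfγ]
    exact base_eq_of_circleCoord_ne_one fun h' => h (hu1 z n h')
  let G : unitInterval × unitInterval → ESp X d := fun z => mkESp d (f z.2) (u z)
  have hG : Continuous G := continuous_mkESp hd (by fun_prop) hu huf
  have hGx : ∀ t s, γ s = emb d x → G (t, s) = emb d x := by
    intro t s hs
    have h1 : u (t, s) = fun _ => 1 := funext fun n => hu1 (t, s) n (by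
      show circleCoord d n (γ s) = 1
      rw [hs, circleCoord_emb])
    have h2 : f s = x := by rw [hfγ, hs]; rfl
    simp only [G]
    rw [h1, h2, mkESp_one]
  let γ' : Path (emb d x) (emb d x) :=
    { toFun := fun s => G (1, s)
      continuous_toFun := by fun_prop
      source' := hGx 1 0 γ.source
      target' := hGx 1 1 γ.target }
  have hf0 : f 0 = x := by
    have := hfγ 0
    rw [γ.source] at this
    exact this
  have hf1 : f 1 = x := by
    have := hfγ 1
    rw [γ.target] at this
    exact this
  refine ⟨f, e, w, γ', hf, hf0, hf1, hsys, ?_, fun n s => ?_, fun s => rfl⟩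
  · refine homotopic_of_square G hG (fun s => ?_) (fun s => rfl) (fun t => hGx t 0 γ.source)
      fun t => hGx t 1 γ.target
    have h1 : u (0, s) = fun n => circleCoord d n (γ s) := funext fun n => by
      rw [← hlγ]
      simp [u]
    simp only [G]
    rw [h1, hfγ, mkESp_coords hd]
  · refine (circleCoord_mkESp hd (huf (1, s)) n).trans ?_
    simp [u]

theorem homotopic_refl_of_map_sigmaMap [SimplyConnectedSpace X] (hlsc : LocSimplyConnected X)
    (hd : Function.Injective d) (γ : Path (emb d x) (emb d x))
    (hγ : (γ.map (continuous_sigmaMap hd)).Homotopic (Path.refl _)) :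
    γ.Homotopic (Path.refl (emb d x)) := by
  obtain ⟨f, e, w, γ', hf, hf0, hf1, hsys, hγγ', hcoord, hbase⟩ := exists_stair_loop hd γ
  obtain ⟨H⟩ := (hγγ'.map ⟨_, continuous_sigmaMap hd⟩).symm.trans hγ
  have hx : sigmaMap d hd (emb d x) = h0 := sigmaMap_emb hd x
  obtain ⟨μ, hμ, hnc⟩ := exists_letter_matching hsys hd (H := H) H.continuous
    (fun n s => by
      rw [H.apply_zero, ← hcoord n s]
      exact heCoord_sigmaMap hd n _)
    (fun s => by rw [H.apply_one]; exact hx) (fun t => (H.source t).trans hx)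
    (fun t => (H.target t).trans hx)
  have hμ' : IsLetterMatching e w μ := ⟨fun a ha => (hμ a ha).1, fun a ha => (hμ a ha).2.1,
    fun a ha => (hμ a ha).2.2.1, fun a ha => (hμ a ha).2.2.2, hnc⟩
  obtain ⟨F, hF, hFd, hF0, hF1, hFn⟩ := exists_fold_extension hlsc hf hf0 hf1 hsys hd hμ'
  refine hγγ'.trans ?_
  let p : unitInterval × unitInterval → ℝ × ℝ := fun z =>
    ((1 - z.1) * z.2, (1 - z.1) * z.2 + z.1)
  have hp : Continuous p := by fun_prop
  have hfold0 : ∀ b ∈ Set.Icc (0 : ℝ) 1,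
      mkESp d (F (0, b)) (fun n => turn (fold e w μ n (0, b))) = emb d x := fun b hb => by
    have : (fun n => turn (fold e w μ n (0, b))) = fun _ => 1 := funext fun n =>
      turn_eq_one_iff.2 ⟨0, by rw [fold_zero_left]; simp⟩
    rw [this, hF0 b hb, mkESp_one]
  have hfold1 : ∀ a ∈ Set.Icc (0 : ℝ) 1,
      mkESp d (F (a, 1)) (fun n => turn (fold e w μ n (a, 1))) = emb d x := fun a ha => by
    have : (fun n => turn (fold e w μ n (a, 1))) = fun _ => 1 := funext fun n =>
      turn_eq_one_iff.2 ⟨0, by rw [fold_one_right hμ']; simp⟩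
    rw [this, hF1 a ha, mkESp_one]
  refine homotopic_of_square (fun z => mkESp d (F (p z)) fun n => turn (fold e w μ n (p z)))
    (continuous_mkESp hd (hF.comp hp)
      (fun n => continuous_turn.comp ((continuous_fold e w μ n).comp hp))
      fun z n hne => hFn n _ _ (by linarith [z.1.2.1]) hne)
    (fun s => ?_) (fun s => ?_) (fun t => ?_) fun t => ?_
  · have h1 : p (0, s) = ((s : ℝ), (s : ℝ)) := by simp [p]
    have h2 : (fun n => turn (fold e w μ n ((s : ℝ), (s : ℝ)))) =
        fun n => circleCoord d n (γ' s) := funext fun n => by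
      rw [hcoord, stair_eq_fold hsys hd hμ', turn_add_int]
    rw [h1, h2, hFd s s.2, ← hbase, mkESp_coords hd]
  · have h1 : p (1, s) = (0, 1) := by simp [p]
    rw [h1]
    exact hfold0 1 ⟨zero_le_one, le_rfl⟩
  · have h1 : p (t, 0) = (0, (t : ℝ)) := by simp [p]
    rw [h1]
    exact hfold0 t t.2
  · have h1 : p (t, 1) = (1 - (t : ℝ), 1) := by simp [p]
    rw [h1]
    exact hfold1 _ ⟨by linarith [t.2.2], by linarith [t.2.1]⟩

end Main

theorem fundamentalGroup_map_injective {Y Z : Type*} [TopologicalSpace Y] [TopologicalSpace Z]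
    (g : C(Y, Z)) (y : Y)
    (h : ∀ γ : Path y y, (γ.map g.continuous).Homotopic (Path.refl (g y)) →
      γ.Homotopic (Path.refl y)) : Function.Injective (FundamentalGroup.map g y) := by
  rw [injective_iff_map_eq_one]
  intro a ha
  obtain ⟨γ, rfl⟩ := Path.Homotopic.Quotient.mk_surjective a
  exact Path.Homotopic.Quotient.eq.2 (h γ (Path.Homotopic.Quotient.eq.1 ha))

/-- For a simply connected, locally simply connected metric space `X` and a countable
dense subset `D`, the metric quotient map `σ` is continuous and the induced homomorphism
`σ_* : π₁(E(X,D), x) → π₁(H, *)` is injective; consequently `π₁(E(X,D), x)` is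
isomorphic to a subgroup of the Hawaiian earring group. -/
theorem sigma_star_injective (d : ℕ+ → X) (hd : Function.Injective d)
    (hdense : DenseRange d) [SimplyConnectedSpace X] (hlsc : LocSimplyConnected X)
    (x : X) :
    ∃ hc : Continuous (sigmaMap d hd),
      (∀ γ : Path (emb d x) (emb d x),
        (γ.map hc).Homotopic (Path.refl (sigmaMap d hd (emb d x))) →
          γ.Homotopic (Path.refl (emb d x))) ∧
      ∃ φ : FundamentalGroup (ESp X d) (emb d x) →* FundamentalGroup HEset h0,
        Function.Injective φ := by
  have h := homotopic_refl_of_map_sigmaMap (x := x) hlsc hd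
  refine ⟨continuous_sigmaMap hd, h, ?_⟩
  have hφ : ∃ φ : FundamentalGroup (ESp X d) (emb d x) →*
      FundamentalGroup HEset (sigmaMap d hd (emb d x)), Function.Injective φ :=
    ⟨_, fundamentalGroup_map_injective ⟨_, continuous_sigmaMap hd⟩ (emb d x) h⟩
  rwa [sigmaMap_emb hd x] at hφ

end EarringPaper
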